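/- arXiv:2410.23899 — 5 statements merged into one kernel-verified Lean document; each statement's English description precedes it below -/
import Mathlib

section
/- (Monotone coupling, Lemma 2.6.) Fix k ∈ ℕ, integers T0 < T1, two functions g^t, g^b : ⟦T0,T1⟧ → [−∞,∞), and vectors x⃗^b, y⃗^b, x⃗^t, y⃗^t ∈ 𝔚_k. Assume g^t(r) ≥ g^b(r) for all r ∈ ⟦T0,T1⟧, x_i^t ≥ x_i^b and y_i^t ≥ y_i^b for i = 1,…,k, and that both Ω_Inter(T0,T1,x⃗^b,y⃗^b,∞,g^b) and Ω_Inter(T0,T1,x⃗^t,y⃗^t,∞,g^t) are nonempty. Then there exists a probability measure on the product Ω_Inter(T0,T1,x⃗^t,y⃗^t,∞,g^t) × Ω_Inter(T0,T1,x⃗^b,y⃗^b,∞,g^b) whose first marginal is the uniform measure on Ω_Inter(T0,T1,x⃗^t,y⃗^t,∞,g^t), whose second marginal is the uniform measure on Ω_Inter(T0,T1,x⃗^b,y⃗^b,∞,g^b), and which assigns probability 1 to the set of pairs (𝔔^t, 𝔔^b) satisfying Q_i^t(r) ≥ Q_i^b(r) for all i ∈ ⟦1,k⟧ and r ∈ ⟦T0,T1⟧.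 -/
open MeasureTheory Filter Topology ProbabilityTheory
open scoped ENNReal NNReal

/-- An increasing (integer) path on the integer interval `⟦T0, T1⟧`,
extended constantly to the rest of `ℤ`. -/
def IncrPath (T0 T1 : ℤ) (L : ℤ → ℤ) : Prop :=
  (∀ j : ℤ, T0 ≤ j → j < T1 → L j ≤ L (j + 1)) ∧
  (∀ s : ℤ, s ≤ T0 → L s = L T0) ∧ (∀ s : ℤ, T1 ≤ s → L s = L T1)

/-- The set `Ω(T0,T1,x,y)` of increasing paths from `(T0,x)` to `(T1,y)`. -/
def OmegaPath (T0 T1 : ℤ) (x y : ℤ) : Set (ℤ → ℤ) :=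
  {L | IncrPath T0 T1 L ∧ L T0 = x ∧ L T1 = y}

/-- The set `Ω_Inter(T0,T1,x⃗,y⃗,f,g)` of `k`-tuples of increasing paths with prescribed
entrance and exit data, interlacing with each other and with the boundary functions
`f` (above) and `g` (below). -/
def OmegaInter (T0 T1 : ℤ) {k : ℕ} (x y : Fin k → ℤ) (f g : ℤ → EReal) :
    Set (Fin k → ℤ → ℤ) :=
  {Q | (∀ i, IncrPath T0 T1 (Q i)) ∧ (∀ i, Q i T0 = x i) ∧ (∀ i, Q i T1 = y i) ∧
    ∀ r : ℤ, T0 < r → r ≤ T1 →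
      (∀ i : Fin k, (i : ℕ) = 0 → ((Q i r : ℝ) : EReal) ≤ f (r - 1)) ∧
      (∀ i j : Fin k, (j : ℕ) = (i : ℕ) + 1 → Q j r ≤ Q i (r - 1)) ∧
      (∀ i : Fin k, (i : ℕ) = k - 1 → g r ≤ ((Q i (r - 1) : ℝ) : EReal))}

/-- Finite Strassen-type matching for two finite sets in a distributive lattice. -/
theorem exists_monotone_matching {α : Type*} [DistribLattice α] [DecidableEq α]
    (A B : Finset α) (hsup : ∀ p ∈ B, ∀ q ∈ A, p ⊔ q ∈ A) (hinf : ∀ p ∈ B, ∀ q ∈ A, p ⊓ q ∈ B) :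
    ∃ e : (↥B × Fin A.card) ≃ (↥A × Fin B.card), ∀ z, (z.1 : α) ≤ ((e z).1 : α) := by
  classical
  have hall : ∀ S : Finset (↥B × Fin A.card),
      S.card ≤ (S.biUnion (fun z => (Finset.univ : Finset (↥A × Fin B.card)).filter
        (fun w => (z.1 : α) ≤ (w.1 : α)))).card := by
    intro S
    set S' : Finset α := S.image (fun z => (z.1 : α)) with hS'
    set N : Finset ↥A := Finset.univ.filter (fun w => ∃ p ∈ S', p ≤ (w : α)) with hN
    have hS'B : S' ⊆ B := by
      intro p hp
      obtain ⟨z, -, rfl⟩ := Finset.mem_image.1 hp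
      exact z.1.2
    have h1 : S.card ≤ S'.card * A.card := by
      have : (S.image (fun z => ((z.1 : α), z.2))).card ≤
          (S' ×ˢ (Finset.univ : Finset (Fin A.card))).card := by
        apply Finset.card_le_card
        intro w hw
        obtain ⟨z, hz, rfl⟩ := Finset.mem_image.1 hw
        exact Finset.mem_product.2 ⟨Finset.mem_image.2 ⟨z, hz, rfl⟩, Finset.mem_univ _⟩
      rw [Finset.card_image_of_injective, Finset.card_product] at this
      · simpa using this
      · rintro ⟨⟨a, ha⟩, b⟩ ⟨⟨c, hc⟩, d⟩ h
        simpa using h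
    have h2 := Finset.le_card_infs_mul_card_sups S' A
    have h3 : (Finset.image₂ (· ⊓ ·) S' A).card ≤ B.card := by
      apply Finset.card_le_card
      intro w hw
      obtain ⟨p, hp, q, hq, rfl⟩ := Finset.mem_image₂.1 hw
      exact hinf p (hS'B hp) q hq
    have h4 : (Finset.image₂ (· ⊔ ·) S' A).card ≤ N.card := by
      rw [← Finset.card_image_of_injective N Subtype.val_injective]
      apply Finset.card_le_card
      intro w hw
      obtain ⟨p, hp, q, hq, rfl⟩ := Finset.mem_image₂.1 hw
      refine Finset.mem_image.2 ⟨⟨p ⊔ q, hsup p (hS'B hp) q hq⟩, ?_, rfl⟩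
      exact Finset.mem_filter.2 ⟨Finset.mem_univ _, p, hp, le_sup_left⟩
    have h5 : S.biUnion (fun z => (Finset.univ : Finset (↥A × Fin B.card)).filter
        (fun w => (z.1 : α) ≤ (w.1 : α))) = N ×ˢ (Finset.univ : Finset (Fin B.card)) := by
      ext w
      simp only [Finset.mem_biUnion, Finset.mem_filter, Finset.mem_univ, true_and,
        Finset.mem_product, hN, hS', and_true, Finset.mem_image]
      constructor
      · rintro ⟨z, hz, h⟩
        exact ⟨_, ⟨z, hz, rfl⟩, h⟩
      · rintro ⟨_, ⟨z, hz, rfl⟩, h⟩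
        exact ⟨z, hz, h⟩
    rw [h5, Finset.card_product, Finset.card_univ, Fintype.card_fin, mul_comm]
    exact h1.trans (h2.trans (Nat.mul_le_mul h3 h4))
  obtain ⟨f, hf, hfm⟩ := (Finset.all_card_le_biUnion_card_iff_exists_injective _).1 hall
  have hb : Function.Bijective f := by
    rw [Fintype.bijective_iff_injective_and_card]
    refine ⟨hf, ?_⟩
    simp [mul_comm]
  exact ⟨Equiv.ofBijective f hb, fun z => (Finset.mem_filter.1 (hfm z)).2⟩

theorem omegaInter_finite (T0 T1 : ℤ) (hT : T0 < T1) {k : ℕ} (x y : Fin k → ℤ) (f g : ℤ → EReal) :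
    (OmegaInter T0 T1 x y f g).Finite := by
  have mono : ∀ L : ℤ → ℤ, IncrPath T0 T1 L → Monotone L := by
    rintro L ⟨h1, h2, h3⟩
    apply monotone_int_of_le_succ
    intro n
    by_cases ha : T0 ≤ n
    · by_cases hb : n < T1
      · exact h1 n ha hb
      · rw [h3 n (by omega), h3 (n + 1) (by omega)]
    · rw [h2 n (by omega), h2 (n + 1) (by omega)]
  apply Set.Finite.of_finite_image (f := fun Q (i : Fin k) (r : Set.Icc T0 T1) => Q i r)
  · apply (Set.finite_Icc (fun (i : Fin k) (_ : Set.Icc T0 T1) => x i) (fun i _ => y i)).subset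
    rintro _ ⟨Q, ⟨hi, hx, hy, -⟩, rfl⟩
    refine ⟨fun i r => ?_, fun i r => ?_⟩
    · exact (hx i).symm.le.trans (mono _ (hi i) r.2.1)
    · exact (mono _ (hi i) r.2.2).trans (hy i).le
  · rintro Q ⟨hi, hx, hy, -⟩ Q' ⟨hi', hx', hy', -⟩ h
    funext i r
    by_cases ha : T0 ≤ r
    · by_cases hb : r ≤ T1
      · exact congrFun (congrFun h i) ⟨r, ha, hb⟩
      · rw [(hi i).2.2 r (by omega), (hi' i).2.2 r (by omega), hy, hy']
    · rw [(hi i).2.1 r (by omega), (hi' i).2.1 r (by omega), hx, hx']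

theorem incrPath_sup {T0 T1 : ℤ} {L M : ℤ → ℤ} (hL : IncrPath T0 T1 L) (hM : IncrPath T0 T1 M) :
    IncrPath T0 T1 (L ⊔ M) := by
  refine ⟨fun j h h' => sup_le_sup (hL.1 j h h') (hM.1 j h h'), fun s h => ?_, fun s h => ?_⟩
  · simp only [Pi.sup_apply, hL.2.1 s h, hM.2.1 s h]
  · simp only [Pi.sup_apply, hL.2.2 s h, hM.2.2 s h]

theorem incrPath_inf {T0 T1 : ℤ} {L M : ℤ → ℤ} (hL : IncrPath T0 T1 L) (hM : IncrPath T0 T1 M) :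
    IncrPath T0 T1 (L ⊓ M) := by
  refine ⟨fun j h h' => inf_le_inf (hL.1 j h h') (hM.1 j h h'), fun s h => ?_, fun s h => ?_⟩
  · simp only [Pi.inf_apply, hL.2.1 s h, hM.2.1 s h]
  · simp only [Pi.inf_apply, hL.2.2 s h, hM.2.2 s h]

open Classical in
/-- Indicator of a point, with values in `ℝ≥0∞`. -/
noncomputable def sliceInd {β : Type*} (b c : β) : ℝ≥0∞ := if c = b then 1 else 0

theorem sum_sliceInd {β : Type*} [Fintype β] (n : ℕ) (b : β) :
    ∑ z : β × Fin n, sliceInd b z.1 = n := by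
  rw [Fintype.sum_prod_type]
  simp only [Finset.sum_const, Finset.card_univ, Fintype.card_fin, ← Finset.smul_sum]
  have h : ∑ c : β, sliceInd b c = 1 := by
    rw [Finset.sum_eq_single b]
    · simp [sliceInd]
    · intro c _ hc
      simp [sliceInd, hc]
    · simp
  simp [h]

/-- (Monotone coupling, Lemma 2.6.) Interlacing ensembles with ordered boundary data can be
coupled monotonically: there is a probability measure on pairs of configurations whose
marginals are uniform on `Ω_Inter(T0,T1,x⃗ᵗ,y⃗ᵗ,∞,gᵗ)` and `Ω_Inter(T0,T1,x⃗ᵇ,y⃗ᵇ,∞,gᵇ)`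
respectively, and which is supported on ordered pairs. -/
theorem monotone_coupling
    (k : ℕ) (T0 T1 : ℤ) (hT : T0 < T1)
    (gt gb : ℤ → EReal)
    (hgtTop : ∀ r : ℤ, T0 ≤ r → r ≤ T1 → gt r ≠ ⊤)
    (hgbTop : ∀ r : ℤ, T0 ≤ r → r ≤ T1 → gb r ≠ ⊤)
    (hgle : ∀ r : ℤ, T0 ≤ r → r ≤ T1 → gb r ≤ gt r)
    (xb yb xt yt : Fin k → ℤ)
    (hxb : ∀ i j : Fin k, i ≤ j → xb j ≤ xb i) (hyb : ∀ i j : Fin k, i ≤ j → yb j ≤ yb i)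
    (hxt : ∀ i j : Fin k, i ≤ j → xt j ≤ xt i) (hyt : ∀ i j : Fin k, i ≤ j → yt j ≤ yt i)
    (hxle : ∀ i, xb i ≤ xt i) (hyle : ∀ i, yb i ≤ yt i)
    (hneb : (OmegaInter T0 T1 xb yb (fun _ => (⊤ : EReal)) gb).Nonempty)
    (hnet : (OmegaInter T0 T1 xt yt (fun _ => (⊤ : EReal)) gt).Nonempty) :
    ∃ μ : Measure ((Fin k → ℤ → ℤ) × (Fin k → ℤ → ℤ)),
      IsProbabilityMeasure μ ∧
      (∀ Q ∈ OmegaInter T0 T1 xt yt (fun _ => (⊤ : EReal)) gt,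
        μ.map Prod.fst {Q} =
          ((Nat.card ↥(OmegaInter T0 T1 xt yt (fun _ => (⊤ : EReal)) gt) : ℝ≥0∞))⁻¹) ∧
      (∀ Q ∈ OmegaInter T0 T1 xb yb (fun _ => (⊤ : EReal)) gb,
        μ.map Prod.snd {Q} =
          ((Nat.card ↥(OmegaInter T0 T1 xb yb (fun _ => (⊤ : EReal)) gb) : ℝ≥0∞))⁻¹) ∧
      μ {pq | pq.1 ∈ OmegaInter T0 T1 xt yt (fun _ => (⊤ : EReal)) gt ∧
              pq.2 ∈ OmegaInter T0 T1 xb yb (fun _ => (⊤ : EReal)) gb ∧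
              ∀ (i : Fin k) (r : ℤ), T0 ≤ r → r ≤ T1 → pq.2 i r ≤ pq.1 i r} = 1 := by
  classical
  have hAfin := omegaInter_finite T0 T1 hT xt yt (fun _ => (⊤ : EReal)) gt
  have hBfin := omegaInter_finite T0 T1 hT xb yb (fun _ => (⊤ : EReal)) gb
  have hsup : ∀ p ∈ OmegaInter T0 T1 xb yb (fun _ => (⊤ : EReal)) gb,
      ∀ q ∈ OmegaInter T0 T1 xt yt (fun _ => (⊤ : EReal)) gt,
      p ⊔ q ∈ OmegaInter T0 T1 xt yt (fun _ => (⊤ : EReal)) gt := by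
    rintro p ⟨p1, p2, p3, p4⟩ q ⟨q1, q2, q3, q4⟩
    refine ⟨fun i => incrPath_sup (p1 i) (q1 i), fun i => ?_, fun i => ?_, fun r h h' =>
      ⟨fun _ _ => le_top, fun i j hij => ?_, fun i hi => ?_⟩⟩
    · simp [p2, q2, hxle i]
    · simp [p3, q3, hyle i]
    · exact sup_le_sup ((p4 r h h').2.1 i j hij) ((q4 r h h').2.1 i j hij)
    · refine ((q4 r h h').2.2 i hi).trans ?_
      have : q i (r - 1) ≤ (p ⊔ q) i (r - 1) := le_sup_right
      exact_mod_cast this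
  have hinf : ∀ p ∈ OmegaInter T0 T1 xb yb (fun _ => (⊤ : EReal)) gb,
      ∀ q ∈ OmegaInter T0 T1 xt yt (fun _ => (⊤ : EReal)) gt,
      p ⊓ q ∈ OmegaInter T0 T1 xb yb (fun _ => (⊤ : EReal)) gb := by
    rintro p ⟨p1, p2, p3, p4⟩ q ⟨q1, q2, q3, q4⟩
    refine ⟨fun i => incrPath_inf (p1 i) (q1 i), fun i => ?_, fun i => ?_, fun r h h' =>
      ⟨fun _ _ => le_top, fun i j hij => ?_, fun i hi => ?_⟩⟩
    · simp [p2, q2, hxle i]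
    · simp [p3, q3, hyle i]
    · exact inf_le_inf ((p4 r h h').2.1 i j hij) ((q4 r h h').2.1 i j hij)
    · have hp := (p4 r h h').2.2 i hi
      have hq := (hgle r h.le h').trans ((q4 r h h').2.2 i hi)
      have : (p ⊓ q) i (r - 1) = p i (r - 1) ∨ (p ⊓ q) i (r - 1) = q i (r - 1) :=
        min_choice _ _
      rcases this with h | h <;> rw [h] <;> assumption
  generalize OmegaInter T0 T1 xt yt (fun _ => (⊤ : EReal)) gt = ΩA at *
  generalize OmegaInter T0 T1 xb yb (fun _ => (⊤ : EReal)) gb = ΩB at *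
  lift ΩA to Finset (Fin k → ℤ → ℤ) using hAfin with A
  lift ΩB to Finset (Fin k → ℤ → ℤ) using hBfin with B
  simp only [Finset.mem_coe, Finset.coe_nonempty] at *
  obtain ⟨e, he⟩ := exists_monotone_matching A B hsup hinf
  have hA0 : (A.card : ℝ≥0∞) ≠ 0 := by
    exact_mod_cast hnet.card_pos.ne'
  have hB0 : (B.card : ℝ≥0∞) ≠ 0 := by
    exact_mod_cast hneb.card_pos.ne'
  have hAt : (A.card : ℝ≥0∞) ≠ ⊤ := ENNReal.natCast_ne_top _
  have hBt : (B.card : ℝ≥0∞) ≠ ⊤ := ENNReal.natCast_ne_top _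
  have hcA : Nat.card ↥(A : Set (Fin k → ℤ → ℤ)) = A.card := by simp
  have hcB : Nat.card ↥(B : Set (Fin k → ℤ → ℤ)) = B.card := by simp
  rw [hcA, hcB]
  let F : (↥B × Fin A.card) → (Fin k → ℤ → ℤ) × (Fin k → ℤ → ℤ) :=
    fun z => (((e z).1 : Fin k → ℤ → ℤ), (z.1 : Fin k → ℤ → ℤ))
  let μ : Measure ((Fin k → ℤ → ℤ) × (Fin k → ℤ → ℤ)) :=
    ((A.card : ℝ≥0∞)⁻¹ * (B.card : ℝ≥0∞)⁻¹) • ∑ z, Measure.dirac (F z)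
  have hμ : ∀ S, μ S = ((A.card : ℝ≥0∞)⁻¹ * (B.card : ℝ≥0∞)⁻¹) *
      ∑ z, Measure.dirac (F z) S := by
    intro S
    simp [μ, Measure.finsetSum_apply]
  have hone : ∀ S, (∀ z, F z ∈ S) → μ S = 1 := by
    intro S hS
    rw [hμ, Finset.sum_congr rfl (fun z _ => Measure.dirac_apply_of_mem (hS z))]
    simp only [Finset.sum_const, Finset.card_univ, Fintype.card_prod, Fintype.card_coe,
      Fintype.card_fin, nsmul_eq_mul, mul_one, Nat.cast_mul]
    rw [← ENNReal.mul_inv (Or.inl hA0) (Or.inl hAt), mul_comm (B.card : ℝ≥0∞)]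
    exact ENNReal.inv_mul_cancel (mul_ne_zero hA0 hB0) (ENNReal.mul_ne_top hAt hBt)
  refine ⟨μ, ⟨hone _ fun _ => Set.mem_univ _⟩, fun Q hQ => ?_, fun Q hQ => ?_,
    hone _ fun z => ⟨(e z).1.2, z.1.2, fun i r _ _ => he z i r⟩⟩
  · rw [Measure.map_apply measurable_fst (measurableSet_singleton Q), hμ]
    have : ∀ z, Measure.dirac (F z) (Prod.fst ⁻¹' {Q}) =
        sliceInd (⟨Q, hQ⟩ : ↥A) (e z).1 := by
      intro z
      rw [Measure.dirac_apply' _ (measurable_fst (measurableSet_singleton Q))]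
      simp [Set.indicator_apply, F, sliceInd, Subtype.ext_iff]
    rw [Finset.sum_congr rfl (fun z _ => this z),
      e.sum_comp (fun w => sliceInd (⟨Q, hQ⟩ : ↥A) w.1), sum_sliceInd]
    rw [mul_assoc, ENNReal.inv_mul_cancel hB0 hBt, mul_one]
  · rw [Measure.map_apply measurable_snd (measurableSet_singleton Q), hμ]
    have : ∀ z, Measure.dirac (F z) (Prod.snd ⁻¹' {Q}) =
        sliceInd (⟨Q, hQ⟩ : ↥B) z.1 := by
      intro z
      rw [Measure.dirac_apply' _ (measurable_snd (measurableSet_singleton Q))]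
      simp [Set.indicator_apply, F, sliceInd, Subtype.ext_iff]
    rw [Finset.sum_congr rfl (fun z _ => this z), sum_sliceInd]
    rw [mul_comm (A.card : ℝ≥0∞)⁻¹, mul_assoc, ENNReal.inv_mul_cancel hA0 hAt, mul_one]
end

section
/- (Lemma 2.9, part 1.) With the scaling setup described in the context, there exists N0 ∈ ℕ such that for all n ≥ N0 the set Ω_Inter(A_n, B_n, X⃗^n, Y⃗^n, F_n, G_n) is nonempty. -/
open MeasureTheory Filter Topology ProbabilityTheory
open scoped ENNReal NNReal

/-- Discretization: integer parts of suitable real paths form an interlacing tuple. -/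
theorem aux_discrete (A B : ℤ) (hAB : A ≤ B) {k : ℕ} (X Y : Fin k → ℤ) (f g : ℤ → EReal)
    (q : Fin k → ℤ → ℝ) (hA : ∀ i, q i A = X i) (hB : ∀ i, q i B = Y i)
    (hmono : ∀ i r, A ≤ r → r < B → q i r ≤ q i (r + 1))
    (hint : ∀ i j : Fin k, (j : ℕ) = (i : ℕ) + 1 → ∀ r, A ≤ r → r < B →
      q j (r + 1) + 1 ≤ q i r)
    (hf : ∀ i : Fin k, (i : ℕ) = 0 → ∀ r, A ≤ r → r < B → ((q i (r + 1) : ℝ) : EReal) ≤ f r)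
    (hg : ∀ i : Fin k, (i : ℕ) = k - 1 → ∀ r, A ≤ r → r < B →
      g (r + 1) ≤ ((q i r - 1 : ℝ) : EReal)) :
    (OmegaInter A B X Y f g).Nonempty := by
  have hc : ∀ r, A ≤ r → r ≤ B → max A (min B r) = r := by
    intro r h1 h2; rw [min_eq_right h2, max_eq_right h1]
  refine ⟨fun i r => ⌊q i (max A (min B r))⌋, ?_, ?_, ?_, ?_⟩
  · intro i
    refine ⟨?_, ?_, ?_⟩
    · intro j h1 h2
      simp only [hc j h1 h2.le, hc (j+1) (by omega) (by omega)]
      exact Int.floor_le_floor (hmono i j h1 h2)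
    · intro s hs
      have : max A (min B s) = max A (min B A) := by omega
      simp only [this]
    · intro s hs
      have : max A (min B s) = max A (min B B) := by omega
      simp only [this]
  · intro i
    simp only [hc A le_rfl hAB, hA, Int.floor_intCast]
  · intro i
    simp only [hc B hAB le_rfl, hB, Int.floor_intCast]
  · intro r h1 h2
    obtain ⟨r, rfl⟩ : ∃ s, r = s + 1 := ⟨r - 1, by ring⟩
    have e1 := hc (r+1) (by omega) h2
    have e2 := hc r (by omega) (by omega)
    simp only [e1, e2, add_sub_cancel_right]
    refine ⟨?_, ?_, ?_⟩
    · intro i hi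
      refine le_trans ?_ (hf i hi r (by omega) (by omega))
      exact EReal.coe_le_coe_iff.2 (Int.floor_le _)
    · intro i j hij
      refine Int.floor_le_floor ?_
      linarith [hint i j hij r (by omega) (by omega)]
    · intro i hi
      refine le_trans (hg i hi r (by omega) (by omega)) ?_
      exact EReal.coe_le_coe_iff.2 (Int.sub_one_lt_floor _).le

theorem aux_gap (a b : ℝ) (φ : ℝ → ℝ) (hφ : ContinuousOn φ (Set.Icc a b))
    (hpos : ∀ t ∈ Set.Icc a b, 0 < φ t) :
    ∀ᶠ δ in 𝓝[>] (0 : ℝ), ∀ t ∈ Set.Icc a b, δ ≤ φ t := by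
  rcases (Set.Icc a b).eq_empty_or_nonempty with h | h
  · simp [h]
  · obtain ⟨t0, ht0, hm⟩ := isCompact_Icc.exists_isMinOn h hφ
    filter_upwards [Ioo_mem_nhdsGT (hpos t0 ht0)] with δ hδ t ht
    exact hδ.2.le.trans (hm ht)

/-- Lipschitz approximation with exact end values. -/
theorem aux_lip (a b : ℝ) (hab : a < b) (h : ℝ → ℝ) (hc : ContinuousOn h (Set.Icc a b))
    (ε : ℝ) (hε : 0 < ε) :
    ∃ H : ℝ → ℝ, H a = h a ∧ H b = h b ∧ (∀ t ∈ Set.Icc a b, |H t - h t| ≤ ε) ∧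
      ∀ᶠ K in atTop, ∀ s ∈ Set.Icc a b, ∀ t ∈ Set.Icc a b, |H s - H t| ≤ K * |s - t| := by
  obtain ⟨P, hP⟩ := exists_polynomial_near_of_continuousOn a b h hc (ε / 2) (by positivity)
  have hba : 0 < b - a := by linarith
  let H : ℝ → ℝ := fun t => P.eval t + ((h a - P.eval a) * ((b - t) / (b - a)) +
    (h b - P.eval b) * ((t - a) / (b - a)))
  have hHc : ContDiff ℝ 1 H := by
    have : ContDiff ℝ 1 (fun t => P.eval t) := by
      simpa using P.contDiff_aeval (𝕜 := ℝ) 1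
    fun_prop
  refine ⟨H, ?_, ?_, ?_, ?_⟩
  · simp [H, hba.ne']
  · simp [H, hba.ne']
  · intro t ht
    have h1 := abs_lt.1 (hP t ht)
    have h2 := abs_lt.1 (hP a ⟨le_rfl, hab.le⟩)
    have h3 := abs_lt.1 (hP b ⟨hab.le, le_rfl⟩)
    have u1 : 0 ≤ (b - t) / (b - a) := div_nonneg (by linarith [ht.2]) hba.le
    have u2 : 0 ≤ (t - a) / (b - a) := div_nonneg (by linarith [ht.1]) hba.le
    have u3 : (b - t) / (b - a) + (t - a) / (b - a) = 1 := by field_simp; ring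
    simp only [H]
    rw [abs_le]
    constructor <;> nlinarith
  · obtain ⟨K, hK⟩ := hHc.contDiffOn.exists_lipschitzOnWith (s := Set.Icc a b) (by simp)
      (convex_Icc a b) isCompact_Icc
    filter_upwards [eventually_ge_atTop (K : ℝ)] with L hL s hs t ht
    have := hK.dist_le_mul s hs t ht
    rw [Real.dist_eq, Real.dist_eq] at this
    exact this.trans (mul_le_mul_of_nonneg_right hL (abs_nonneg _))

theorem aux_sandwich (a b x0 y0 x1 y1 : ℝ) (hab : a ≤ b) (hx : x1 ≤ x0) (hy : y1 ≤ y0)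
    (f g : ℝ → EReal)
    (hf : (∀ t ∈ Set.Icc a b, f t = ⊤) ∨
      ∃ F : ℝ → ℝ, ContinuousOn F (Set.Icc a b) ∧ ∀ t ∈ Set.Icc a b, f t = (F t : EReal))
    (hg : (∀ t ∈ Set.Icc a b, g t = ⊥) ∨
      ∃ G : ℝ → ℝ, ContinuousOn G (Set.Icc a b) ∧ ∀ t ∈ Set.Icc a b, g t = (G t : EReal))
    (hfg : ∀ t ∈ Set.Icc a b, g t < f t)
    (hfa : (x0 : EReal) < f a) (hfb : (y0 : EReal) < f b)
    (hga : g a < (x1 : EReal)) (hgb : g b < (y1 : EReal)) :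
    ∃ F G : ℝ → ℝ, ContinuousOn F (Set.Icc a b) ∧ ContinuousOn G (Set.Icc a b) ∧
      (∀ t ∈ Set.Icc a b, (F t : EReal) ≤ f t) ∧ (∀ t ∈ Set.Icc a b, g t ≤ (G t : EReal)) ∧
      (∀ t ∈ Set.Icc a b, G t < F t) ∧ x0 < F a ∧ y0 < F b ∧ G a < x1 ∧ G b < y1 := by
  have ha : a ∈ Set.Icc a b := ⟨le_rfl, hab⟩
  have hb : b ∈ Set.Icc a b := ⟨hab, le_rfl⟩
  have m1 := le_max_left x0 y0
  have m2 := le_max_right x0 y0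
  have m3 := min_le_left x1 y1
  have m4 := min_le_right x1 y1
  rcases hf with hf | ⟨F, hF, hf⟩ <;> rcases hg with hg | ⟨G, hG, hg⟩
  · refine ⟨fun _ => max x0 y0 + 1, fun _ => min x1 y1 - 1, by fun_prop, by fun_prop, ?_, ?_,
      ?_, ?_, ?_, ?_, ?_⟩
    · intro t ht; simp [hf t ht]
    · intro t ht; simp [hg t ht]
    all_goals intros; linarith
  · rw [hg a ha, EReal.coe_lt_coe_iff] at hga
    rw [hg b hb, EReal.coe_lt_coe_iff] at hgb
    refine ⟨fun t => max (G t) (max x0 y0) + 1, G, by fun_prop, hG, ?_, ?_,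
      ?_, ?_, ?_, hga, hgb⟩
    · intro t ht; simp [hf t ht]
    · intro t ht; exact (hg t ht).le
    · intro t ht; linarith [le_max_left (G t) (max x0 y0)]
    · linarith [le_max_right (G a) (max x0 y0)]
    · linarith [le_max_right (G b) (max x0 y0)]
  · rw [hf a ha, EReal.coe_lt_coe_iff] at hfa
    rw [hf b hb, EReal.coe_lt_coe_iff] at hfb
    refine ⟨F, fun t => min (F t) (min x1 y1) - 1, hF, by fun_prop, ?_, ?_,
      ?_, hfa, hfb, ?_, ?_⟩
    · intro t ht; exact (hf t ht).ge
    · intro t ht; simp [hg t ht]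
    · intro t ht; linarith [min_le_left (F t) (min x1 y1)]
    · linarith [min_le_right (F a) (min x1 y1)]
    · linarith [min_le_right (F b) (min x1 y1)]
  · rw [hg a ha, EReal.coe_lt_coe_iff] at hga
    rw [hg b hb, EReal.coe_lt_coe_iff] at hgb
    rw [hf a ha, EReal.coe_lt_coe_iff] at hfa
    rw [hf b hb, EReal.coe_lt_coe_iff] at hfb
    refine ⟨F, G, hF, hG, fun t ht => (hf t ht).ge, fun t ht => (hg t ht).le, ?_, hfa, hfb,
      hga, hgb⟩
    intro t ht
    have := hfg t ht
    rwa [hg t ht, hf t ht, EReal.coe_lt_coe_iff] at this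

/-- Ordered continuous curves between two real barriers. -/
theorem aux_curves (k : ℕ) (a b : ℝ) (hab : a < b) (x y : Fin k → ℝ)
    (hx : ∀ i j : Fin k, i < j → x j < x i) (hy : ∀ i j : Fin k, i < j → y j < y i)
    (F G : ℝ → ℝ) (hF : ContinuousOn F (Set.Icc a b)) (hG : ContinuousOn G (Set.Icc a b))
    (hFG : ∀ t ∈ Set.Icc a b, G t < F t)
    (hxF : ∀ i, x i < F a) (hyF : ∀ i, y i < F b) (hxG : ∀ i, G a < x i)
    (hyG : ∀ i, G b < y i) :
    ∃ h : Fin k → ℝ → ℝ, (∀ i, ContinuousOn (h i) (Set.Icc a b)) ∧ (∀ i, h i a = x i) ∧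
      (∀ i, h i b = y i) ∧ (∀ i j, i < j → ∀ t ∈ Set.Icc a b, h j t < h i t) ∧
      (∀ i, ∀ t ∈ Set.Icc a b, h i t < F t) ∧ (∀ i, ∀ t ∈ Set.Icc a b, G t < h i t) := by
  have hba : 0 < b - a := by linarith
  have hDa : 0 < F a - G a := by linarith [hFG a ⟨le_rfl, hab.le⟩]
  have hDb : 0 < F b - G b := by linarith [hFG b ⟨hab.le, le_rfl⟩]
  let l : Fin k → ℝ := fun i => (x i - G a) / (F a - G a)
  let m : Fin k → ℝ := fun i => (y i - G b) / (F b - G b)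
  have l0 : ∀ i, 0 < l i := fun i => div_pos (by linarith [hxG i]) hDa
  have m0 : ∀ i, 0 < m i := fun i => div_pos (by linarith [hyG i]) hDb
  have l1 : ∀ i, l i < 1 := fun i => (div_lt_one hDa).2 (by linarith [hxF i])
  have m1 : ∀ i, m i < 1 := fun i => (div_lt_one hDb).2 (by linarith [hyF i])
  have ll : ∀ i j, i < j → l j < l i := fun i j hij =>
    div_lt_div_of_pos_right (by linarith [hx i j hij]) hDa
  have mm : ∀ i j, i < j → m j < m i := fun i j hij =>
    div_lt_div_of_pos_right (by linarith [hy i j hij]) hDb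
  -- positivity of convex combinations
  have cc : ∀ u v : ℝ, 0 < u → 0 < v → ∀ t ∈ Set.Icc a b,
      0 < u * ((b - t) / (b - a)) + v * ((t - a) / (b - a)) := by
    intro u v hu hv t ht
    have u1 : 0 ≤ (b - t) / (b - a) := div_nonneg (by linarith [ht.2]) hba.le
    have u2 : 0 ≤ (t - a) / (b - a) := div_nonneg (by linarith [ht.1]) hba.le
    have u3 : (b - t) / (b - a) + (t - a) / (b - a) = 1 := by field_simp; ring
    rcases u1.lt_or_eq with h | h
    · have := mul_pos hu h
      have := mul_nonneg hv.le u2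
      linarith
    · rw [← h] at u3 ⊢
      rw [zero_add] at u3
      rw [u3]; linarith
  have c1 : ∀ t : ℝ, (b - t) / (b - a) + (t - a) / (b - a) = 1 := by
    intro t; field_simp; ring
  refine ⟨fun i t => G t + (l i * ((b - t) / (b - a)) + m i * ((t - a) / (b - a))) *
    (F t - G t), ?_, ?_, ?_, ?_, ?_, ?_⟩
  · intro i; fun_prop
  · intro i; simp only [l, sub_self, zero_div, mul_zero, div_self hba.ne']
    field_simp; ring
  · intro i; simp only [m, sub_self, zero_div, mul_zero, div_self hba.ne']
    field_simp; ring
  · intro i j hij t ht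
    have := mul_pos (cc (l i - l j) (m i - m j) (by linarith [ll i j hij])
      (by linarith [mm i j hij]) t ht) (sub_pos.2 (hFG t ht))
    nlinarith
  · intro i t ht
    have := mul_pos (cc (1 - l i) (1 - m i) (by linarith [l1 i])
      (by linarith [m1 i]) t ht) (sub_pos.2 (hFG t ht))
    have e := c1 t
    have : F t - G t - (l i * ((b - t) / (b - a)) + m i * ((t - a) / (b - a))) *
      (F t - G t) > 0 := by
      have e2 : (1 - l i) * ((b - t) / (b - a)) + (1 - m i) * ((t - a) / (b - a)) =
        1 - (l i * ((b - t) / (b - a)) + m i * ((t - a) / (b - a))) := by linear_combination e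
      rw [e2] at this
      linarith
    linarith
  · intro i t ht
    have := mul_pos (cc (l i) (m i) (l0 i) (m0 i) t ht) (sub_pos.2 (hFG t ht))
    linarith

/-- Ordered Lipschitz curves with uniform gaps between two real barriers. -/
theorem aux_lipcurves (k : ℕ) (a b : ℝ) (hab : a < b) (x y : Fin k → ℝ)
    (hx : ∀ i j : Fin k, i < j → x j < x i) (hy : ∀ i j : Fin k, i < j → y j < y i)
    (F G : ℝ → ℝ) (hF : ContinuousOn F (Set.Icc a b)) (hG : ContinuousOn G (Set.Icc a b))
    (hFG : ∀ t ∈ Set.Icc a b, G t < F t)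
    (hxF : ∀ i, x i < F a) (hyF : ∀ i, y i < F b) (hxG : ∀ i, G a < x i)
    (hyG : ∀ i, G b < y i) :
    ∃ (H : Fin k → ℝ → ℝ) (δ K : ℝ), 0 < δ ∧ 0 ≤ K ∧ (∀ i, H i a = x i) ∧
      (∀ i, H i b = y i) ∧ (∀ i j, i < j → ∀ t ∈ Set.Icc a b, H j t + δ ≤ H i t) ∧
      (∀ i, ∀ t ∈ Set.Icc a b, H i t + δ ≤ F t) ∧
      (∀ i, ∀ t ∈ Set.Icc a b, G t ≤ H i t - δ) ∧
      (∀ i, ∀ s ∈ Set.Icc a b, ∀ t ∈ Set.Icc a b, |H i s - H i t| ≤ K * |s - t|) := by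
  obtain ⟨h, hc, ha, hb, hord, hhF, hhG⟩ :=
    aux_curves k a b hab x y hx hy F G hF hG hFG hxF hyF hxG hyG
  have e1 : ∀ᶠ δ in 𝓝[>] (0 : ℝ), ∀ i j, i < j → ∀ t ∈ Set.Icc a b, δ ≤ h i t - h j t := by
    refine eventually_all.2 fun i => eventually_all.2 fun j => ?_
    by_cases hij : i < j
    · filter_upwards [aux_gap a b (fun t => h i t - h j t) ((hc i).sub (hc j))
        (fun t ht => sub_pos.2 (hord i j hij t ht))] with δ hδ _ using hδ
    · exact Eventually.of_forall fun δ h => absurd h hij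
  have e2 : ∀ᶠ δ in 𝓝[>] (0 : ℝ), ∀ i, ∀ t ∈ Set.Icc a b, δ ≤ F t - h i t :=
    eventually_all.2 fun i => aux_gap a b _ (hF.sub (hc i))
        (fun t ht => sub_pos.2 (hhF i t ht))
  have e3 : ∀ᶠ δ in 𝓝[>] (0 : ℝ), ∀ i, ∀ t ∈ Set.Icc a b, δ ≤ h i t - G t :=
    eventually_all.2 fun i => aux_gap a b _ ((hc i).sub hG)
        (fun t ht => sub_pos.2 (hhG i t ht))
  obtain ⟨δ, h1, h2, h3, hδ⟩ :=
    (e1.and (e2.and (e3.and (self_mem_nhdsWithin (a := (0:ℝ)) (s := Set.Ioi 0))))).exists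
  have hδ : 0 < δ := hδ
  choose H Ha Hb Hh HK using fun i => aux_lip a b hab (h i) (hc i) (δ / 4) (by positivity)
  obtain ⟨K, hK, hK0⟩ := ((eventually_all.2 HK).and (eventually_ge_atTop (0:ℝ))).exists
  refine ⟨H, δ / 4, K, by positivity, hK0, fun i => (Ha i).trans (ha i),
    fun i => (Hb i).trans (hb i), ?_, ?_, ?_, hK⟩
  · intro i j hij t ht
    have := abs_le.1 (Hh i t ht)
    have := abs_le.1 (Hh j t ht)
    have := h1 i j hij t ht
    linarith
  · intro i t ht
    have := abs_le.1 (Hh i t ht)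
    have := h2 i t ht
    linarith
  · intro i t ht
    have := abs_le.1 (Hh i t ht)
    have := h3 i t ht
    linarith

/-- Clamping to `[a,b]`. -/
noncomputable def auxClamp (a b t : ℝ) : ℝ := max a (min b t)

theorem auxClamp_mem {a b : ℝ} (hab : a ≤ b) (t : ℝ) : auxClamp a b t ∈ Set.Icc a b :=
  ⟨le_max_left _ _, max_le hab (min_le_left _ _)⟩

theorem auxClamp_of_le {a b t : ℝ} (h : t ≤ a) : auxClamp a b t = a :=
  max_eq_left ((min_le_right _ _).trans h)

theorem auxClamp_of_ge {a b t : ℝ} (hab : a ≤ b) (h : b ≤ t) : auxClamp a b t = b := by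
  rw [auxClamp, min_eq_left h, max_eq_right hab]

theorem auxClamp_of_mem {a b t : ℝ} (h : t ∈ Set.Icc a b) : auxClamp a b t = t := by
  rw [auxClamp, min_eq_right h.2, max_eq_right h.1]

theorem auxClamp_lip (a b s t : ℝ) : |auxClamp a b s - auxClamp a b t| ≤ |s - t| := by
  unfold auxClamp
  refine (abs_max_sub_max_le_max _ _ _ _).trans ?_
  refine max_le (by simp) ((abs_min_sub_min_le_max _ _ _ _).trans (max_le (by simp) le_rfl))

theorem aux_barrier_f (a b : ℝ) (hab : a < b) (f : ℝ → EReal)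
    (hf : (∀ t ∈ Set.Icc a b, f t = ⊤) ∨
      ∃ F : ℝ → ℝ, ContinuousOn F (Set.Icc a b) ∧ ∀ t ∈ Set.Icc a b, f t = (F t : EReal))
    (d : ℕ → ℝ) (hd : ∀ n, 0 < d n) (fn : ℕ → ℝ → EReal)
    (hfnbot : ∀ n, ∀ t ∈ Set.Icc ((⌊a * d n⌋ : ℝ) / d n) ((⌈b * d n⌉ : ℝ) / d n),
      fn n t ≠ ⊥)
    (hfconvTop : (∀ t ∈ Set.Icc a b, f t = ⊤) → ∀ᶠ n in atTop,
      ∀ t ∈ Set.Icc ((⌊a * d n⌋ : ℝ) / d n) ((⌈b * d n⌉ : ℝ) / d n), fn n t = ⊤)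
    (hfconvReal : (¬ ∀ t ∈ Set.Icc a b, f t = ⊤) →
      (∀ᶠ n in atTop,
        ∀ t ∈ Set.Icc ((⌊a * d n⌋ : ℝ) / d n) ((⌈b * d n⌉ : ℝ) / d n), fn n t ≠ ⊤) ∧
      ∀ ε : ℝ, 0 < ε → ∀ᶠ n in atTop, ∀ t ∈ Set.Icc a b,
        |(fn n t).toReal - (f t).toReal| < ε)
    (hedgef : (¬ ∀ t ∈ Set.Icc a b, f t = ⊤) →
      Tendsto (fun n => |(fn n ((⌊a * d n⌋ : ℝ) / d n)).toReal - (fn n a).toReal|)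
        atTop (𝓝 0))
    (δ : ℝ) (hδ : 0 < δ) (H : ℝ → ℝ)
    (hH : ∀ t ∈ Set.Icc a b, ((H t + δ : ℝ) : EReal) ≤ f t) :
    ∀ᶠ n in atTop, ∀ t : ℤ, ⌊a * d n⌋ ≤ t → t < ⌈b * d n⌉ →
      ((H (auxClamp a b ((t : ℝ) / d n)) + δ / 2 : ℝ) : EReal) ≤ fn n ((t : ℝ) / d n) := by
  have hmem : ∀ n, ∀ t : ℤ, ⌊a * d n⌋ ≤ t → t < ⌈b * d n⌉ → ((t : ℝ) / d n) ∈
      Set.Icc ((⌊a * d n⌋ : ℝ) / d n) ((⌈b * d n⌉ : ℝ) / d n) := by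
    intro n t h1 h2
    exact ⟨div_le_div_of_nonneg_right (by exact_mod_cast h1) (hd n).le,
      div_le_div_of_nonneg_right (by exact_mod_cast h2.le) (hd n).le⟩
  by_cases htop : ∀ t ∈ Set.Icc a b, f t = ⊤
  · filter_upwards [hfconvTop htop] with n hn t h1 h2
    rw [hn _ (hmem n t h1 h2)]
    exact le_top
  · obtain ⟨F, -, hF⟩ := hf.resolve_left htop
    obtain ⟨hn1, hn2⟩ := hfconvReal htop
    have hn3 := (hedgef htop).eventually_lt_const (show (0:ℝ) < δ / 4 by positivity)
    filter_upwards [hn1, hn2 (δ / 4) (by positivity), hn3] with n hn1 hn2 hn3 t h1 h2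
    have hm := hmem n t h1 h2
    rw [← EReal.coe_toReal (hn1 _ hm) (hfnbot n _ hm), EReal.coe_le_coe_iff]
    have hda : a ∈ Set.Icc a b := ⟨le_rfl, hab.le⟩
    have key : ∀ s ∈ Set.Icc a b, H s + δ - δ / 4 ≤ (fn n s).toReal := by
      intro s hs
      have u1 := hH s hs
      have u2 := hn2 s hs
      rw [hF s hs, EReal.coe_le_coe_iff] at u1
      rw [hF s hs, EReal.toReal_coe] at u2
      linarith [(abs_lt.1 u2).1]
    rcases h1.eq_or_lt with h | h
    · subst h
      rw [auxClamp_of_le ((div_le_iff₀ (hd n)).2 (Int.floor_le _))]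
      linarith [key a hda, (abs_lt.1 hn3).1]
    · have hs : ((t : ℝ) / d n) ∈ Set.Icc a b :=
        ⟨(le_div_iff₀ (hd n)).2 (Int.floor_lt.1 h).le,
          (div_le_iff₀ (hd n)).2 (Int.lt_ceil.1 h2).le⟩
      rw [auxClamp_of_mem hs]
      linarith [key _ hs]

theorem aux_barrier_g (a b : ℝ) (hab : a < b) (g : ℝ → EReal)
    (hg : (∀ t ∈ Set.Icc a b, g t = ⊥) ∨
      ∃ G : ℝ → ℝ, ContinuousOn G (Set.Icc a b) ∧ ∀ t ∈ Set.Icc a b, g t = (G t : EReal))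
    (d : ℕ → ℝ) (hd : ∀ n, 0 < d n) (gn : ℕ → ℝ → EReal)
    (hgntop : ∀ n, ∀ t ∈ Set.Icc ((⌊a * d n⌋ : ℝ) / d n) ((⌈b * d n⌉ : ℝ) / d n),
      gn n t ≠ ⊤)
    (hgconvBot : (∀ t ∈ Set.Icc a b, g t = ⊥) → ∀ᶠ n in atTop,
      ∀ t ∈ Set.Icc ((⌊a * d n⌋ : ℝ) / d n) ((⌈b * d n⌉ : ℝ) / d n), gn n t = ⊥)
    (hgconvReal : (¬ ∀ t ∈ Set.Icc a b, g t = ⊥) →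
      (∀ᶠ n in atTop,
        ∀ t ∈ Set.Icc ((⌊a * d n⌋ : ℝ) / d n) ((⌈b * d n⌉ : ℝ) / d n), gn n t ≠ ⊥) ∧
      ∀ ε : ℝ, 0 < ε → ∀ᶠ n in atTop, ∀ t ∈ Set.Icc a b,
        |(gn n t).toReal - (g t).toReal| < ε)
    (hedgeg : (¬ ∀ t ∈ Set.Icc a b, g t = ⊥) →
      Tendsto (fun n => |(gn n ((⌈b * d n⌉ : ℝ) / d n)).toReal - (gn n b).toReal|)
        atTop (𝓝 0))
    (δ : ℝ) (hδ : 0 < δ) (H : ℝ → ℝ)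
    (hH : ∀ t ∈ Set.Icc a b, g t ≤ ((H t - δ : ℝ) : EReal)) :
    ∀ᶠ n in atTop, ∀ t : ℤ, ⌊a * d n⌋ < t → t ≤ ⌈b * d n⌉ →
      gn n ((t : ℝ) / d n) ≤ ((H (auxClamp a b ((t : ℝ) / d n)) - δ / 2 : ℝ) : EReal) := by
  have hmem : ∀ n, ∀ t : ℤ, ⌊a * d n⌋ < t → t ≤ ⌈b * d n⌉ → ((t : ℝ) / d n) ∈
      Set.Icc ((⌊a * d n⌋ : ℝ) / d n) ((⌈b * d n⌉ : ℝ) / d n) := by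
    intro n t h1 h2
    exact ⟨div_le_div_of_nonneg_right (by exact_mod_cast h1.le) (hd n).le,
      div_le_div_of_nonneg_right (by exact_mod_cast h2) (hd n).le⟩
  by_cases hbot : ∀ t ∈ Set.Icc a b, g t = ⊥
  · filter_upwards [hgconvBot hbot] with n hn t h1 h2
    rw [hn _ (hmem n t h1 h2)]
    exact bot_le
  · obtain ⟨G, -, hG⟩ := hg.resolve_left hbot
    obtain ⟨hn1, hn2⟩ := hgconvReal hbot
    have hn3 := (hedgeg hbot).eventually_lt_const (show (0:ℝ) < δ / 4 by positivity)
    filter_upwards [hn1, hn2 (δ / 4) (by positivity), hn3] with n hn1 hn2 hn3 t h1 h2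
    have hm := hmem n t h1 h2
    rw [← EReal.coe_toReal (hgntop n _ hm) (hn1 _ hm), EReal.coe_le_coe_iff]
    have hdb : b ∈ Set.Icc a b := ⟨hab.le, le_rfl⟩
    have key : ∀ s ∈ Set.Icc a b, (gn n s).toReal ≤ H s - δ + δ / 4 := by
      intro s hs
      have u1 := hH s hs
      have u2 := hn2 s hs
      rw [hG s hs, EReal.coe_le_coe_iff] at u1
      rw [hG s hs, EReal.toReal_coe] at u2
      linarith [(abs_lt.1 u2).2]
    rcases h2.eq_or_lt with h | h
    · subst h
      rw [auxClamp_of_ge hab.le ((le_div_iff₀ (hd n)).2 (Int.le_ceil _))]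
      linarith [key b hdb, (abs_lt.1 hn3).2]
    · have hs : ((t : ℝ) / d n) ∈ Set.Icc a b :=
        ⟨(le_div_iff₀ (hd n)).2 (Int.floor_lt.1 h1).le,
          (div_le_iff₀ (hd n)).2 (Int.lt_ceil.1 h).le⟩
      rw [auxClamp_of_mem hs]
      linarith [key _ hs]

/-- The deterministic construction at a fixed scale. -/
theorem aux_fixed (k : ℕ) (a b : ℝ) (hab : a < b) (x y : Fin k → ℝ)
    (H : Fin k → ℝ → ℝ) (δ K : ℝ) (hK0 : 0 ≤ K)
    (Ha : ∀ i, H i a = x i) (Hb : ∀ i, H i b = y i)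
    (Hord : ∀ i j, i < j → ∀ t ∈ Set.Icc a b, H j t + δ ≤ H i t)
    (HK : ∀ i, ∀ s ∈ Set.Icc a b, ∀ t ∈ Set.Icc a b, |H i s - H i t| ≤ K * |s - t|)
    (d p S : ℝ) (hd : 0 < d) (hS : 0 < S) (A B : ℤ) (hA : (A : ℝ) ≤ a * d)
    (hB : b * d ≤ (B : ℝ)) (X Y : Fin k → ℤ) (α β : Fin k → ℝ)
    (hX : ∀ i, S * (x i + α i) + p * A = X i) (hY : ∀ i, S * (y i + β i) + p * B = Y i)
    (hα : ∀ i, |α i| ≤ δ / 8) (hβ : ∀ i, |β i| ≤ δ / 8)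
    (hKd : K / d ≤ δ / 8) (hSδ : p + 1 ≤ S * (δ / 8))
    (hSp : S * ((K + δ / (b - a)) / d) ≤ p) (f g : ℤ → EReal)
    (hf : ∀ i : Fin k, (i : ℕ) = 0 → ∀ r, A ≤ r → r < B →
      ((H i (auxClamp a b ((r : ℝ) / d)) + δ / 2 : ℝ) : EReal) ≤ f r)
    (hg : ∀ i : Fin k, (i : ℕ) = k - 1 → ∀ r, A < r → r ≤ B →
      g r ≤ ((H i (auxClamp a b ((r : ℝ) / d)) - δ / 2 : ℝ) : EReal)) :
    (OmegaInter A B X Y (fun t => (S : EReal) * f t + ((p * (t : ℝ) : ℝ) : EReal))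
      (fun t => (S : EReal) * g t + ((p * (t : ℝ) : ℝ) : EReal))).Nonempty := by
  have hba : 0 < b - a := by linarith
  have hBA : (b - a) * d ≤ (B : ℝ) - A := by linarith
  have hBA0 : 0 < (B : ℝ) - A := lt_of_lt_of_le (by positivity) hBA
  have hAB : A ≤ B := by
    have : (A : ℝ) < B := by linarith
    exact_mod_cast this.le
  let e : Fin k → ℤ → ℝ := fun i r =>
    α i * (((B : ℝ) - r) / (B - A)) + β i * (((r : ℝ) - A) / (B - A))
  have he : ∀ i r, A ≤ r → r ≤ B → |e i r| ≤ δ / 8 := by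
    intro i r h1 h2
    have h1' : (A : ℝ) ≤ r := by exact_mod_cast h1
    have h2' : (r : ℝ) ≤ B := by exact_mod_cast h2
    have u1 : 0 ≤ ((B : ℝ) - r) / (B - A) := div_nonneg (by linarith) hBA0.le
    have u2 : 0 ≤ ((r : ℝ) - A) / (B - A) := div_nonneg (by linarith) hBA0.le
    have u3 : ((B : ℝ) - r) / (B - A) + ((r : ℝ) - A) / (B - A) = 1 := by
      field_simp; ring
    have v1 := abs_le.1 (hα i)
    have v2 := abs_le.1 (hβ i)
    simp only [e]
    rw [abs_le]
    constructor <;> nlinarith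
  have hestep : ∀ i r, |e i (r + 1) - e i r| ≤ δ / (b - a) / d := by
    intro i r
    have : e i (r + 1) - e i r = (β i - α i) / (B - A) := by
      simp only [e]; push_cast; field_simp; ring
    rw [this, abs_div, abs_of_pos hBA0, div_div]
    have v1 := abs_le.1 (hα i)
    have v2 := abs_le.1 (hβ i)
    have v3 : |β i - α i| ≤ δ := by
      rw [abs_le]; constructor <;> linarith
    have : 0 ≤ δ := (abs_nonneg _).trans v3
    gcongr
  let h : Fin k → ℤ → ℝ := fun i r => H i (auxClamp a b ((r : ℝ) / d))
  have hstep : ∀ i r, |h i (r + 1) - h i r| ≤ K / d := by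
    intro i r
    refine (HK i _ (auxClamp_mem hab.le _) _ (auxClamp_mem hab.le _)).trans ?_
    rw [div_eq_mul_one_div K d]
    refine mul_le_mul_of_nonneg_left ((auxClamp_lip _ _ _ _).trans ?_) hK0
    rw [← sub_div]
    push_cast
    rw [add_sub_cancel_left, abs_of_pos (by positivity : (0:ℝ) < 1 / d)]
  have hord : ∀ i j, i < j → ∀ r, h j r + δ ≤ h i r := fun i j hij r =>
    Hord i j hij _ (auxClamp_mem hab.le _)
  refine aux_discrete A B hAB X Y _ _ (fun i r => S * (h i r + e i r) + p * r)
    ?_ ?_ ?_ ?_ ?_ ?_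
  · intro i
    have h1 : h i A = x i := by
      simp only [h]; rw [auxClamp_of_le ((div_le_iff₀ hd).2 hA), Ha]
    have h2 : e i A = α i := by simp [e, hBA0.ne']
    simp only [h1, h2, hX]
  · intro i
    have h1 : h i B = y i := by
      simp only [h]; rw [auxClamp_of_ge hab.le ((le_div_iff₀ hd).2 hB), Hb]
    have h2 : e i B = β i := by simp [e, hBA0.ne']
    simp only [h1, h2, hY]
  · intro i r h1 h2
    have u1 := (abs_le.1 (hstep i r)).1
    have u2 := (abs_le.1 (hestep i r)).1
    rw [add_div] at hSp
    have := mul_le_mul_of_nonneg_left (add_le_add u1 u2) hS.le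
    push_cast
    linarith
  · intro i j hij r h1 h2
    have u1 := (abs_le.1 (hstep j r)).2
    have u2 := (abs_le.1 (he j (r + 1) (by omega) (by omega))).2
    have u3 := (abs_le.1 (he i r (by omega) (by omega))).1
    have u4 := hord i j (Fin.lt_def.2 (by omega)) r
    have : S * (δ / 8) ≤ S * ((h i r + e i r) - (h j (r + 1) + e j (r + 1))) := by
      refine mul_le_mul_of_nonneg_left ?_ hS.le
      have := (abs_nonneg _).trans (hα i)
      linarith
    push_cast
    linarith
  · intro i hi r h1 h2
    have u1 := (abs_le.1 (hstep i r)).2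
    have u2 := (abs_le.1 (he i (r + 1) (by omega) (by omega))).2
    have u0 := (abs_nonneg _).trans (hα i)
    have w : S * (δ / 8) ≤ S * (h i r + δ / 2 - (h i (r + 1) + e i (r + 1))) :=
      mul_le_mul_of_nonneg_left (by linarith) hS.le
    have hle : ((S * (h i r + δ / 2) + p * r : ℝ) : EReal) ≤
        (S : EReal) * f r + ((p * (r : ℝ) : ℝ) : EReal) := by
      rw [EReal.coe_add, EReal.coe_mul]
      exact add_le_add (mul_le_mul_of_nonneg_left (hf i hi r h1 h2)
        (EReal.coe_nonneg.2 hS.le)) le_rfl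
    refine le_trans (EReal.coe_le_coe_iff.2 ?_) hle
    push_cast
    linarith
  · intro i hi r h1 h2
    have u1 := (abs_le.1 (hstep i r)).2
    have u2 := (abs_le.1 (he i r (by omega) (by omega))).1
    have u0 := (abs_nonneg _).trans (hα i)
    have w : S * (δ / 8) ≤ S * ((h i r + e i r) - (h i (r + 1) - δ / 2)) :=
      mul_le_mul_of_nonneg_left (by linarith) hS.le
    have hle : (S : EReal) * g (r + 1) + ((p * ((r + 1 : ℤ) : ℝ) : ℝ) : EReal) ≤
        ((S * (h i (r + 1) - δ / 2) + p * ((r + 1 : ℤ) : ℝ) : ℝ) : EReal) := by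
      rw [EReal.coe_add, EReal.coe_mul]
      exact add_le_add (mul_le_mul_of_nonneg_left (hg i hi (r + 1) (by omega) (by omega))
        (EReal.coe_nonneg.2 hS.le)) le_rfl
    refine le_trans hle (EReal.coe_le_coe_iff.2 ?_)
    push_cast
    linarith

/-- (Lemma 2.9, part 1.) Under the diffusive scaling setup, the interlacing sets
`Ω_Inter(A_n, B_n, X⃗ⁿ, Y⃗ⁿ, F_n, G_n)` are nonempty for all large `n`. -/
theorem omegaInter_nonempty_of_scaling
    (k : ℕ) (hk : 0 < k) (a b : ℝ) (hab : a < b)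
    (x y : Fin k → ℝ)
    (hx : ∀ i j : Fin k, i < j → x j < x i) (hy : ∀ i j : Fin k, i < j → y j < y i)
    (f g : ℝ → EReal)
    (hf : (∀ t ∈ Set.Icc a b, f t = ⊤) ∨
      ∃ F : ℝ → ℝ, ContinuousOn F (Set.Icc a b) ∧ ∀ t ∈ Set.Icc a b, f t = (F t : EReal))
    (hg : (∀ t ∈ Set.Icc a b, g t = ⊥) ∨
      ∃ G : ℝ → ℝ, ContinuousOn G (Set.Icc a b) ∧ ∀ t ∈ Set.Icc a b, g t = (G t : EReal))
    (hfg : ∀ t ∈ Set.Icc a b, g t < f t)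
    (hfa : ((x ⟨0, hk⟩ : ℝ) : EReal) < f a) (hfb : ((y ⟨0, hk⟩ : ℝ) : EReal) < f b)
    (hga : g a < ((x ⟨k - 1, Nat.sub_lt hk Nat.one_pos⟩ : ℝ) : EReal))
    (hgb : g b < ((y ⟨k - 1, Nat.sub_lt hk Nat.one_pos⟩ : ℝ) : EReal))
    (d : ℕ → ℝ) (hd : ∀ n, 0 < d n) (hdtop : Tendsto d atTop atTop)
    (fn gn : ℕ → ℝ → EReal)
    (hfncont : ∀ n, ContinuousOn (fn n)
      (Set.Icc ((⌊a * d n⌋ : ℝ) / d n) ((⌈b * d n⌉ : ℝ) / d n)))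
    (hfnbot : ∀ n, ∀ t ∈ Set.Icc ((⌊a * d n⌋ : ℝ) / d n) ((⌈b * d n⌉ : ℝ) / d n),
      fn n t ≠ ⊥)
    (hgncont : ∀ n, ContinuousOn (gn n)
      (Set.Icc ((⌊a * d n⌋ : ℝ) / d n) ((⌈b * d n⌉ : ℝ) / d n)))
    (hgntop : ∀ n, ∀ t ∈ Set.Icc ((⌊a * d n⌋ : ℝ) / d n) ((⌈b * d n⌉ : ℝ) / d n),
      gn n t ≠ ⊤)
    (hfconvTop : (∀ t ∈ Set.Icc a b, f t = ⊤) → ∀ᶠ n in atTop,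
      ∀ t ∈ Set.Icc ((⌊a * d n⌋ : ℝ) / d n) ((⌈b * d n⌉ : ℝ) / d n), fn n t = ⊤)
    (hfconvReal : (¬ ∀ t ∈ Set.Icc a b, f t = ⊤) →
      (∀ᶠ n in atTop,
        ∀ t ∈ Set.Icc ((⌊a * d n⌋ : ℝ) / d n) ((⌈b * d n⌉ : ℝ) / d n), fn n t ≠ ⊤) ∧
      ∀ ε : ℝ, 0 < ε → ∀ᶠ n in atTop, ∀ t ∈ Set.Icc a b,
        |(fn n t).toReal - (f t).toReal| < ε)
    (hgconvBot : (∀ t ∈ Set.Icc a b, g t = ⊥) → ∀ᶠ n in atTop,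
      ∀ t ∈ Set.Icc ((⌊a * d n⌋ : ℝ) / d n) ((⌈b * d n⌉ : ℝ) / d n), gn n t = ⊥)
    (hgconvReal : (¬ ∀ t ∈ Set.Icc a b, g t = ⊥) →
      (∀ᶠ n in atTop,
        ∀ t ∈ Set.Icc ((⌊a * d n⌋ : ℝ) / d n) ((⌈b * d n⌉ : ℝ) / d n), gn n t ≠ ⊥) ∧
      ∀ ε : ℝ, 0 < ε → ∀ᶠ n in atTop, ∀ t ∈ Set.Icc a b,
        |(gn n t).toReal - (g t).toReal| < ε)
    (hedgef : (¬ ∀ t ∈ Set.Icc a b, f t = ⊤) →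
      Tendsto (fun n => |(fn n ((⌊a * d n⌋ : ℝ) / d n)).toReal - (fn n a).toReal|)
        atTop (𝓝 0))
    (hedgeg : (¬ ∀ t ∈ Set.Icc a b, g t = ⊥) →
      Tendsto (fun n => |(gn n ((⌈b * d n⌉ : ℝ) / d n)).toReal - (gn n b).toReal|)
        atTop (𝓝 0))
    (p : ℝ) (hp : 0 < p)
    (X Y : ℕ → Fin k → ℤ)
    (hXW : ∀ n, ∀ i j : Fin k, i ≤ j → X n j ≤ X n i)
    (hYW : ∀ n, ∀ i j : Fin k, i ≤ j → Y n j ≤ Y n i)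
    (hXlim : ∀ i, Tendsto (fun n => (Real.sqrt (p * (1 + p)))⁻¹ * (Real.sqrt (d n))⁻¹ *
      ((X n i : ℝ) - p * ⌊a * d n⌋)) atTop (𝓝 (x i)))
    (hYlim : ∀ i, Tendsto (fun n => (Real.sqrt (p * (1 + p)))⁻¹ * (Real.sqrt (d n))⁻¹ *
      ((Y n i : ℝ) - p * ⌈b * d n⌉)) atTop (𝓝 (y i)))
    :
    ∃ N0 : ℕ, ∀ n : ℕ, N0 ≤ n →
      (OmegaInter ⌊a * d n⌋ ⌈b * d n⌉ (X n) (Y n)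
        (fun t : ℤ => ((Real.sqrt (p * (1 + p)) * Real.sqrt (d n) : ℝ) : EReal) *
            fn n ((t : ℝ) / d n) + ((p * (t : ℝ) : ℝ) : EReal))
        (fun t : ℤ => ((Real.sqrt (p * (1 + p)) * Real.sqrt (d n) : ℝ) : EReal) *
            gn n ((t : ℝ) / d n) + ((p * (t : ℝ) : ℝ) : EReal))).Nonempty := by
  have x0 : ∀ i, x i ≤ x ⟨0, hk⟩ := by
    intro i
    rcases Nat.eq_zero_or_pos (i : ℕ) with h | h
    · exact le_of_eq (congrArg x (Fin.ext h))
    · exact (hx _ _ (Fin.lt_def.2 h)).le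
  have y0 : ∀ i, y i ≤ y ⟨0, hk⟩ := by
    intro i
    rcases Nat.eq_zero_or_pos (i : ℕ) with h | h
    · exact le_of_eq (congrArg y (Fin.ext h))
    · exact (hy _ _ (Fin.lt_def.2 h)).le
  have x1 : ∀ i, x ⟨k - 1, Nat.sub_lt hk Nat.one_pos⟩ ≤ x i := by
    intro i
    rcases (show (i : ℕ) = k - 1 ∨ (i : ℕ) < k - 1 by omega) with h | h
    · exact le_of_eq (congrArg x (Fin.ext h.symm))
    · exact (hx _ _ (Fin.lt_def.2 h)).le
  have y1 : ∀ i, y ⟨k - 1, Nat.sub_lt hk Nat.one_pos⟩ ≤ y i := by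
    intro i
    rcases (show (i : ℕ) = k - 1 ∨ (i : ℕ) < k - 1 by omega) with h | h
    · exact le_of_eq (congrArg y (Fin.ext h.symm))
    · exact (hy _ _ (Fin.lt_def.2 h)).le
  obtain ⟨F, G, hF, hG, hFf, hGg, hFG, hFa, hFb, hGa, hGb⟩ :=
    aux_sandwich a b _ _ _ _ hab.le (x1 ⟨0, hk⟩) (y1 ⟨0, hk⟩) f g hf hg hfg hfa hfb hga hgb
  obtain ⟨H, δ, K, hδ, hK0, Ha, Hb, Hord, HF, HG, HK⟩ :=
    aux_lipcurves k a b hab x y hx hy F G hF hG hFG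
      (fun i => (x0 i).trans_lt hFa) (fun i => (y0 i).trans_lt hFb)
      (fun i => hGa.trans_le (x1 i)) (fun i => hGb.trans_le (y1 i))
  have hσ : 0 < Real.sqrt (p * (1 + p)) := Real.sqrt_pos.2 (by positivity)
  have ef := eventually_all.2 fun i => aux_barrier_f a b hab f hf d hd fn hfnbot hfconvTop
    hfconvReal hedgef δ hδ (H i)
    (fun t ht => (EReal.coe_le_coe_iff.2 (HF i t ht)).trans (hFf t ht))
  have eg := eventually_all.2 fun i => aux_barrier_g a b hab g hg d hd gn hgntop hgconvBot
    hgconvReal hedgeg δ hδ (H i)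
    (fun t ht => (hGg t ht).trans (EReal.coe_le_coe_iff.2 (HG i t ht)))
  have eX := eventually_all.2 fun i => (Metric.tendsto_nhds.1 (hXlim i)) (δ / 8) (by positivity)
  have eY := eventually_all.2 fun i => (Metric.tendsto_nhds.1 (hYlim i)) (δ / 8) (by positivity)
  have hsq : Tendsto (fun n => Real.sqrt (d n)) atTop atTop :=
    Real.tendsto_sqrt_atTop.comp hdtop
  have e1 : ∀ᶠ n in atTop, K / d n < δ / 8 :=
    (hdtop.const_div_atTop K).eventually_lt_const (by positivity)
  have e2 : ∀ᶠ n in atTop, (p + 1) / (Real.sqrt (p * (1 + p)) * (δ / 8)) ≤ Real.sqrt (d n) :=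
    hsq.eventually_ge_atTop _
  have e3 : ∀ᶠ n in atTop,
      (Real.sqrt (p * (1 + p)) * (K + δ / (b - a))) / Real.sqrt (d n) < p :=
    (hsq.const_div_atTop _).eventually_lt_const hp
  obtain ⟨N, hN⟩ := eventually_atTop.1
    (ef.and (eg.and (eX.and (eY.and (e1.and (e2.and e3))))))
  refine ⟨N, fun n hn => ?_⟩
  obtain ⟨ef, eg, eX, eY, e1, e2, e3⟩ := hN n hn
  have hdn := hd n
  have hs : 0 < Real.sqrt (d n) := Real.sqrt_pos.2 hdn
  refine aux_fixed k a b hab x y H δ K hK0 Ha Hb Hord HK (d n) p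
    (Real.sqrt (p * (1 + p)) * Real.sqrt (d n)) hdn (by positivity) ⌊a * d n⌋ ⌈b * d n⌉
    (Int.floor_le _) (Int.le_ceil _) (X n) (Y n)
    (fun i => (Real.sqrt (p * (1 + p)))⁻¹ * (Real.sqrt (d n))⁻¹ *
      ((X n i : ℝ) - p * ⌊a * d n⌋) - x i)
    (fun i => (Real.sqrt (p * (1 + p)))⁻¹ * (Real.sqrt (d n))⁻¹ *
      ((Y n i : ℝ) - p * ⌈b * d n⌉) - y i) ?_ ?_ ?_ ?_ e1.le ?_ ?_
    (fun t => fn n ((t : ℝ) / d n)) (fun t => gn n ((t : ℝ) / d n))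
    (fun i _ => ef i) (fun i _ => eg i)
  · intro i; field_simp; ring
  · intro i; field_simp; ring
  · intro i; exact (eX i).le
  · intro i; exact (eY i).le
  · rw [div_le_iff₀ (by positivity)] at e2
    linarith
  · refine le_trans (le_of_eq ?_) e3.le
    have : d n = Real.sqrt (d n) * Real.sqrt (d n) := (Real.mul_self_sqrt hdn.le).symm
    generalize Real.sqrt (d n) = s at *
    rw [this]
    field_simp
end

section
/- (Lemma 3.1, no concentration in the bulk.) Fix p, η, M ∈ (0,∞) and δ1 ∈ (0,1/2). There exist N1 ∈ ℕ and δ > 0, depending on p, η, M, δ1, such that the following holds: for every integer n ≥ N1, all x, y ∈ ℤ with x ≤ y, |x| ≤ M·n^{1/2} and |y − p·n| ≤ M·n^{1/2}, every t ∈ [δ1, 1−δ1], and every a ∈ ℝ, if Q is a random increasing path with law P_Geom^{0,n,x,y} (extended to [0,n] by linear interpolation), then P(n^{-1/2}·(Q(t·n) − p·t·n) ∈ [a−δ, a+δ]) < η. -/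
open MeasureTheory Filter Topology ProbabilityTheory
open scoped ENNReal NNReal

/-- Linear interpolation of a real-valued function defined on `ℤ`. -/
noncomputable def interp (f : ℤ → ℝ) (t : ℝ) : ℝ :=
  f ⌊t⌋ + (t - ⌊t⌋) * (f (⌊t⌋ + 1) - f ⌊t⌋)

/-- Linear interpolation of an integer-valued function on `ℤ`. -/
noncomputable def interpZ (L : ℤ → ℤ) : ℝ → ℝ :=
  interp fun s => (L s : ℝ)

lemma interp_eq_on (f : ℤ → ℝ) (n : ℤ) :
    ∀ t ∈ Set.Icc (n : ℝ) ((n : ℝ) + 1),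
      interp f t = f n + (t - n) * (f (n + 1) - f n) := by
  intro t ht
  rcases lt_or_eq_of_le ht.2 with h | h
  · have hfl : ⌊t⌋ = n := by
      rw [Int.floor_eq_iff]
      · exact ⟨ht.1, by exact_mod_cast h⟩
    simp [interp, hfl]
  · have hfl : ⌊t⌋ = n + 1 := by
      rw [h, show ((n : ℝ) + 1) = ((n + 1 : ℤ) : ℝ) by push_cast; ring, Int.floor_intCast]
    rw [interp, hfl, h]
    push_cast
    ring

lemma continuous_interp (f : ℤ → ℝ) : Continuous (interp f) := by
  have hcov : (⋃ n : ℤ, Set.Icc (n : ℝ) ((n : ℝ) + 1)) = Set.univ := by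
    ext t
    simp only [Set.mem_iUnion, Set.mem_univ, iff_true, Set.mem_Icc]
    exact ⟨⌊t⌋, Int.floor_le t, (Int.lt_floor_add_one t).le⟩
  have hlf : LocallyFinite fun n : ℤ => Set.Icc (n : ℝ) ((n : ℝ) + 1) := by
    intro x
    refine ⟨Set.Ioo (x - 1) (x + 1), Ioo_mem_nhds (by linarith) (by linarith), ?_⟩
    apply Set.Finite.subset (Set.finite_Icc (⌊x⌋ - 2) (⌊x⌋ + 2))
    rintro n ⟨t, ht1, ht2⟩
    simp only [Set.mem_Icc] at ht1 ⊢
    simp only [Set.mem_Ioo] at ht2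
    constructor
    · have h1 : ((⌊x⌋ - 2 : ℤ) : ℝ) < n := by
        push_cast
        have := Int.floor_le x
        linarith [ht1.2, ht2.1]
      exact_mod_cast h1.le
    · have h2 : (n : ℝ) < ((⌊x⌋ + 2 : ℤ) : ℝ) := by
        push_cast
        have := Int.lt_floor_add_one x
        linarith [ht1.1, ht2.2]
      exact_mod_cast h2.le
  refine hlf.continuous hcov (fun n => isClosed_Icc) (fun n => ?_)
  have hc : ContinuousOn (fun t : ℝ => f n + (t - n) * (f (n + 1) - f n))
      (Set.Icc (n : ℝ) ((n : ℝ) + 1)) := (by continuity : Continuous _).continuousOn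
  exact hc.congr (interp_eq_on f n)

/-- The random variable `X` is uniformly distributed on the (finite) set `S` under `P`. -/
def UniformOn {Ω E : Type*} [MeasurableSpace Ω] (P : Measure Ω) (X : Ω → E)
    (S : Set E) : Prop :=
  (∀ ω, X ω ∈ S) ∧ ∀ Q ∈ S, P {ω | X ω = Q} = ((Nat.card S : ℝ≥0∞))⁻¹

lemma mc_rec (k i : ℕ) (hk : 1 ≤ k) :
    (i + 1) * Nat.multichoose k (i + 1) = (k + i) * Nat.multichoose k i := by
  rw [Nat.multichoose_eq, Nat.multichoose_eq]
  obtain ⟨k, rfl⟩ := Nat.exists_eq_add_of_le' hk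
  have h := Nat.add_one_mul_choose_eq (k + i) i
  have e1 : k + 1 + (i + 1) - 1 = k + i + 1 := by omega
  have e2 : k + 1 + i - 1 = k + i := by omega
  rw [e1, e2]
  linarith

lemma mc_step (n m : ℕ) (hn : 1 ≤ n) :
    n * Nat.multichoose (n + 1) m = (n + m) * Nat.multichoose n m := by
  rw [Nat.multichoose_eq, Nat.multichoose_eq]
  obtain ⟨k, rfl⟩ := Nat.exists_eq_add_of_le' hn
  have h := Nat.choose_mul_succ_eq (k + m) m
  have e1 : k + 1 + 1 + m - 1 = k + m + 1 := by omega
  have e2 : k + 1 + m - 1 = k + m := by omega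
  have e3 : k + m + 1 - m = k + 1 := by omega
  rw [e3] at h
  rw [e1, e2]
  linarith

lemma mc_hockey (n m : ℕ) :
    Nat.multichoose (n + 1) m = ∑ j ∈ Finset.range (m + 1), Nat.multichoose n j := by
  induction m with
  | zero => simp
  | succ m ih => rw [Finset.sum_range_succ, ← ih, Nat.multichoose_succ_succ, add_comm]

lemma mc_mono (n a b : ℕ) (hn : 1 ≤ n) (h : a ≤ b) :
    Nat.multichoose n a ≤ Nat.multichoose n b := by
  obtain ⟨k, rfl⟩ := Nat.exists_eq_add_of_le' hn
  rw [mc_hockey, mc_hockey]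
  exact Finset.sum_le_sum_of_subset (Finset.range_mono (by omega))

lemma mc_pos (n a : ℕ) (hn : 1 ≤ n) : 0 < Nat.multichoose n a := by
  have := mc_mono n 0 a hn (Nat.zero_le _)
  simp at this
  omega

lemma mc_coeff (n m : ℕ) :
    PowerSeries.coeff m ((PowerSeries.mk (fun _ => (1 : ℕ))) ^ n) = Nat.multichoose n m := by
  induction n generalizing m with
  | zero => cases m <;> simp [PowerSeries.coeff_one]
  | succ n ih =>
    rw [pow_succ, PowerSeries.coeff_mul, mc_hockey]
    simp only [ih, PowerSeries.coeff_mk, mul_one]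
    rw [Finset.Nat.sum_antidiagonal_eq_sum_range_succ_mk]

lemma mc_vandermonde (k l m : ℕ) :
    ∑ i ∈ Finset.range (m + 1), Nat.multichoose k i * Nat.multichoose l (m - i)
      = Nat.multichoose (k + l) m := by
  rw [← mc_coeff (k + l), pow_add, PowerSeries.coeff_mul]
  simp only [mc_coeff]
  rw [Finset.Nat.sum_antidiagonal_eq_sum_range_succ_mk]

/-- tail bound -/
lemma mc_tail (n m j : ℕ) (hn : 1 ≤ n) (hm : 1 ≤ m) (hj : 2 * j ≤ m) :
    (Nat.multichoose n j : ℝ) ≤ 2 * (1 / m + 1 / n) * Nat.multichoose n m := by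
  have h1 : (m - j) * Nat.multichoose n j ≤ Nat.multichoose (n + 1) m := by
    rw [mc_hockey]
    calc (m - j) * Nat.multichoose n j ≤ ∑ i ∈ Finset.Ico (j + 1) (m + 1), Nat.multichoose n i := by
          have := Finset.card_nsmul_le_sum (Finset.Ico (j + 1) (m + 1))
            (fun i => Nat.multichoose n i) (Nat.multichoose n j)
            (fun i hi => mc_mono n j i hn (by simp at hi; omega))
          simpa using this
      _ ≤ _ := Finset.sum_le_sum_of_subset (by
          intro i hi
          simp at hi ⊢
          omega)
  have h2 := mc_step n m hn
  have h1' : (m : ℝ) / 2 * Nat.multichoose n j ≤ Nat.multichoose (n + 1) m := by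
    have : ((m - j : ℕ) : ℝ) * Nat.multichoose n j ≤ Nat.multichoose (n + 1) m := by
      exact_mod_cast h1
    refine le_trans ?_ this
    gcongr
    rw [Nat.cast_sub (by omega)]
    have : (2 * j : ℝ) ≤ m := by exact_mod_cast hj
    linarith
  have h2' : (n : ℝ) * Nat.multichoose (n + 1) m = (n + m) * Nat.multichoose n m := by
    exact_mod_cast h2
  have hn' : (0 : ℝ) < n := by exact_mod_cast hn
  have hm' : (0 : ℝ) < m := by exact_mod_cast hm
  have h3 : (n : ℝ) * m * Nat.multichoose n j ≤ 2 * (n + m) * Nat.multichoose n m := by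
    nlinarith
  have e : 2 * (1 / (m : ℝ) + 1 / n) * Nat.multichoose n m
      = (2 * (n + m) * Nat.multichoose n m) / (n * m) := by
    field_simp
  rw [e, le_div_iff₀ (by positivity)]
  linarith

set_option maxHeartbeats 2000000 in
/-- local bound -/
lemma mc_local (c : ℝ) (hc : 0 < c) (hc1 : c ≤ 1) (n k l m i : ℕ)
    (hn : 2 ≤ c ^ 2 * Real.sqrt n) (hk : c * n + 1 ≤ k) (hl : c * n + 1 ≤ l)
    (hkl : k + l ≤ n) (hm : c * n ≤ m) (hi : i ≤ m) :
    (Nat.multichoose k i * Nat.multichoose l (m - i) : ℝ)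
      ≤ 4 / (c ^ 2 * Real.sqrt n) * Nat.multichoose (k + l) m := by
  set f : ℕ → ℝ := fun i => (Nat.multichoose k i * Nat.multichoose l (m - i) : ℝ) with hf
  set q := Real.sqrt n with hq
  have hqq : q * q = n := Real.mul_self_sqrt (Nat.cast_nonneg n)
  have hq2 : 2 ≤ q := by
    have : c ^ 2 ≤ 1 := pow_le_one₀ hc.le hc1
    have : 0 ≤ q := Real.sqrt_nonneg _
    nlinarith
  have hnpos : (0 : ℝ) < n := by nlinarith
  have hcn : 0 < c * n := by positivity
  have hk1 : 1 ≤ k := by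
    have : (1 : ℝ) ≤ k := by linarith
    exact_mod_cast this
  have hl1 : 1 ≤ l := by
    have : (1 : ℝ) ≤ l := by linarith
    exact_mod_cast this
  have hm1 : 0 < m := by
    have : (0 : ℝ) < m := by linarith
    exact_mod_cast this
  have hfpos : ∀ j, 0 < f j := fun j => by
    have := mc_pos k j hk1
    have := mc_pos l (m - j) hl1
    simp only [hf]
    positivity
  have hkl' : (k : ℝ) + l ≤ n := by exact_mod_cast hkl
  -- the ratio identity
  have hrat : ∀ j : ℕ, j + 1 ≤ m →
      f (j + 1) * ((j + 1) * (l + m - j - 1)) = f j * ((k + j) * (m - j)) := by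
    intro j hj
    have h1 : ((j : ℝ) + 1) * Nat.multichoose k (j + 1) = (k + j) * Nat.multichoose k j := by
      exact_mod_cast mc_rec k j hk1
    obtain ⟨s, rfl⟩ := Nat.exists_eq_add_of_le hj
    have h2 : ((s : ℝ) + 1) * Nat.multichoose l (s + 1) = (l + s) * Nat.multichoose l s := by
      exact_mod_cast mc_rec l s hl1
    have e1 : j + 1 + s - (j + 1) = s := by omega
    have e2 : j + 1 + s - j = s + 1 := by omega
    simp only [hf, e1, e2]
    push_cast
    have e3 : (l : ℝ) + (j + 1 + s) - j - 1 = l + s := by ring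
    have e4 : (j : ℝ) + 1 + s - j = s + 1 := by ring
    rw [e3, e4]
    calc _ = (((j : ℝ) + 1) * Nat.multichoose k (j + 1)) * ((l + s) * Nat.multichoose l s) := by ring
      _ = _ := by rw [h1, ← h2]; ring
  have hdiff : ∀ j : ℕ, j + 1 ≤ m →
      (f (j + 1) - f j) * ((j + 1) * (l + m - j - 1))
        = f j * (((k - 1) * m - (l - 1)) - j * (k + l - 2)) := by
    intro j hj
    have := hrat j hj
    rw [sub_mul, this]
    ring
  set A : ℝ := (k - 1) * m - (l - 1) with hA
  set B : ℝ := k + l - 2 with hB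
  have hBn : B ≤ n := by rw [hB]; linarith
  have hBpos : 0 < B := by rw [hB]; linarith
  have hden : ∀ j : ℕ, j + 1 ≤ m → 0 < ((j : ℝ) + 1) * (l + m - j - 1) := by
    intro j hj
    have : (j : ℝ) + 1 ≤ m := by exact_mod_cast hj
    have : (1 : ℝ) ≤ l := by exact_mod_cast hl1
    apply mul_pos <;> [positivity; linarith]
  obtain ⟨i0, hi0, hmax⟩ := Finset.exists_max_image (Finset.range (m + 1)) f ⟨0, by simp⟩
  have hi0m : i0 ≤ m := by simp at hi0; omega
  have hmR : 0 < (m : ℝ) := by exact_mod_cast hm1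
  -- A bounds
  have hAlow : c ^ 2 * n * B - B ≤ A := by
    have h1 : c * n * m ≤ ((k : ℝ) - 1) * m := by
      apply mul_le_mul_of_nonneg_right _ hmR.le; linarith
    have h2 : c * n * (c * n) ≤ c * n * m := by gcongr
    have h3 : c ^ 2 * n * B ≤ c ^ 2 * n * n := by gcongr
    have h4 : (l : ℝ) - 1 ≤ B := by rw [hB]; linarith
    rw [hA]; nlinarith
  have hAup : A ≤ B * m - c ^ 2 * n * B := by
    have h1 : c * n * m ≤ ((l : ℝ) - 1) * m := by
      apply mul_le_mul_of_nonneg_right _ hmR.le; linarith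
    have h2 : c * n * (c * n) ≤ c * n * m := by gcongr
    have h3 : c ^ 2 * n * B ≤ c ^ 2 * n * n := by gcongr
    have h4 : (1 : ℝ) ≤ l := by exact_mod_cast hl1
    have h5 : A = B * m - (l - 1) * m - (l - 1) := by rw [hA, hB]; ring
    rw [h5]; nlinarith
  have hc2n : 2 * q ≤ c ^ 2 * n := by rw [← hqq]; nlinarith
  -- location of the mode
  have hloc1 : (i0 : ℝ) * B ≤ A + B := by
    rcases Nat.eq_zero_or_pos i0 with h0 | h0
    · rw [h0]; push_cast; nlinarith
    · obtain ⟨j, rfl⟩ := Nat.exists_eq_add_of_le' h0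
      have h1 := hmax j (by simp; omega)
      have h2 := hdiff j hi0m
      have h3 : 0 ≤ f j * (A - j * B) := by
        rw [← h2]; exact mul_nonneg (by linarith) (hden j hi0m).le
      have h4 := nonneg_of_mul_nonneg_right h3 (hfpos j)
      push_cast
      linarith
  have hi0up : (i0 : ℝ) ≤ m - c ^ 2 * n + 1 := by
    have : (i0 : ℝ) * B ≤ (m - c ^ 2 * n + 1) * B := by linarith
    exact le_of_mul_le_mul_right this hBpos
  have hi0lt : i0 + 1 ≤ m := by
    have : (i0 : ℝ) < m := by linarith
    have : i0 < m := by exact_mod_cast this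
    omega
  have hloc2 : A ≤ i0 * B := by
    have h1 := hmax (i0 + 1) (by simp; omega)
    have h2 := hdiff i0 hi0lt
    have h3 : f i0 * (A - i0 * B) ≤ 0 := by
      rw [← h2]; exact mul_nonpos_of_nonpos_of_nonneg (by linarith) (hden i0 hi0lt).le
    have h4 := nonpos_of_mul_nonpos_right h3 (hfpos i0)
    linarith
  have hi0low : c ^ 2 * n ≤ i0 + 1 := by
    have : c ^ 2 * n * B ≤ (i0 + 1) * B := by linarith
    exact le_of_mul_le_mul_right this hBpos
  -- number of steps
  set r : ℕ := ⌊c ^ 2 / 2 * q⌋₊ with hr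
  have hr1 : (r : ℝ) ≤ c ^ 2 / 2 * q := Nat.floor_le (by positivity)
  have hr2 : c ^ 2 / 2 * q < r + 1 := Nat.lt_floor_add_one _
  have hr3 : (1 : ℝ) ≤ r := by
    have : 1 ≤ r := Nat.le_floor (by push_cast; linarith)
    exact_mod_cast this
  have hirm : i0 + r ≤ m := by
    have hc21 : c ^ 2 ≤ 1 := pow_le_one₀ hc.le hc1
    have : (i0 : ℝ) + r ≤ m := by nlinarith
    exact_mod_cast this
  set θ : ℝ := (r + 1) / (c ^ 3 * n) with hθ
  have hrθ : r * θ ≤ 1 / 2 := by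
    have h1 : (r : ℝ) * (r + 1) ≤ 2 * (c ^ 2 / 2 * q) ^ 2 := by
      have h0 : (r : ℝ) ^ 2 ≤ (c ^ 2 / 2 * q) ^ 2 := pow_le_pow_left₀ (by positivity) hr1 2
      have h00 : (r : ℝ) * (r + 1) ≤ r * (2 * r) := by gcongr; linarith
      linarith
    have h2 : 2 * (c ^ 2 / 2 * q) ^ 2 = c ^ 4 * n / 2 := by rw [← hqq]; ring
    have h3 : c ^ 4 * n ≤ c ^ 3 * n := by
      have : c ^ 4 ≤ c ^ 3 := pow_le_pow_of_le_one hc.le hc1 (by norm_num)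
      gcongr
    rw [hθ, ← mul_div_assoc, div_le_iff₀ (by positivity)]
    linarith
  have hθ0 : 0 ≤ θ := by positivity
  have hstep : ∀ s : ℕ, s ≤ r → (1 - s * θ) * f i0 ≤ f (i0 + s) := by
    intro s
    induction s with
    | zero => intro _; simp
    | succ s ih =>
      intro hs
      have ih' := ih (by omega)
      have hjm : i0 + s + 1 ≤ m := by omega
      have h1 := hdiff (i0 + s) hjm
      have hsr : (s : ℝ) + 1 ≤ r := by exact_mod_cast hs
      have h2 : ((i0 + s : ℕ) : ℝ) * B - A ≤ (r + 1) * n := by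
        push_cast
        have : ((s : ℝ) + 1) * B ≤ (r + 1) * n := by
          apply mul_le_mul _ hBn hBpos.le (by positivity); linarith
        nlinarith
      have hjm' : ((i0 + s : ℕ) : ℝ) + 1 ≤ m := by exact_mod_cast hjm
      have h3 : c ^ 3 * n * n ≤ (((i0 + s : ℕ) : ℝ) + 1) * (l + m - ((i0 + s : ℕ) : ℝ) - 1) := by
        have e : c ^ 3 * n * n = (c ^ 2 * n) * (c * n) := by ring
        rw [e]
        apply mul_le_mul _ _ hcn.le (by positivity)
        · push_cast; linarith [(Nat.cast_nonneg s : (0 : ℝ) ≤ s)]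
        · linarith
      have h4 : f (i0 + s) - f (i0 + s + 1) ≤ θ * f (i0 + s) := by
        by_contra hcon
        push Not at hcon
        have hD := hden (i0 + s) hjm
        set D : ℝ := (((i0 + s : ℕ) : ℝ) + 1) * (l + m - ((i0 + s : ℕ) : ℝ) - 1)
        have h5 : θ * f (i0 + s) * D < (f (i0 + s) - f (i0 + s + 1)) * D := by
          apply mul_lt_mul_of_pos_right hcon hD
        have h6 : (f (i0 + s) - f (i0 + s + 1)) * D
            = f (i0 + s) * (((i0 + s : ℕ) : ℝ) * B - A) := by linarith
        have h7 : f (i0 + s) * (((i0 + s : ℕ) : ℝ) * B - A) ≤ f (i0 + s) * ((r + 1) * n) :=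
          mul_le_mul_of_nonneg_left h2 (hfpos _).le
        have h8 : θ * f (i0 + s) * (c ^ 3 * n * n) ≤ θ * f (i0 + s) * D :=
          mul_le_mul_of_nonneg_left h3 (mul_nonneg hθ0 (hfpos _).le)
        have h9 : θ * f (i0 + s) * (c ^ 3 * n * n) = f (i0 + s) * ((r + 1) * n) := by
          rw [hθ]; field_simp
        linarith
      have h5 : f (i0 + s) ≤ f i0 := hmax _ (by simp; omega)
      have h6 : θ * f (i0 + s) ≤ θ * f i0 := by gcongr
      rw [← add_assoc]
      push_cast
      linarith
  have hhalf : ∀ s : ℕ, s ≤ r → f i0 / 2 ≤ f (i0 + s) := by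
    intro s hs
    refine le_trans ?_ (hstep s hs)
    have : (s : ℝ) * θ ≤ r * θ := by gcongr
    have := hfpos i0
    nlinarith
  have hsum : (r + 1) * (f i0 / 2) ≤ (Nat.multichoose (k + l) m : ℝ) := by
    rw [← mc_vandermonde]
    push_cast
    calc ((r : ℝ) + 1) * (f i0 / 2) = ∑ s ∈ Finset.range (r + 1), f i0 / 2 := by simp
      _ ≤ ∑ s ∈ Finset.range (r + 1), f (i0 + s) :=
          Finset.sum_le_sum (fun s hs => hhalf s (by simp at hs; omega))
      _ = ∑ j ∈ Finset.Ico i0 (i0 + (r + 1)), f j := by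
          rw [Finset.sum_Ico_eq_sum_range]; simp
      _ ≤ ∑ j ∈ Finset.range (m + 1), f j :=
          Finset.sum_le_sum_of_subset_of_nonneg (by
            intro j hj
            simp at hj ⊢
            omega) (fun j _ _ => (hfpos j).le)
  have hfi : f i ≤ f i0 := hmax i (by simp; omega)
  change f i ≤ _
  rw [div_mul_eq_mul_div, le_div_iff₀ (by positivity)]
  have := hfpos i0
  have : f i * (c ^ 2 * q) ≤ f i0 * (c ^ 2 * q) := by gcongr
  nlinarith

lemma omega_card (n : ℕ) : ∀ (x : ℤ) (m : ℕ), ∃ F : Finset (ℤ → ℤ),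
    (F : Set (ℤ → ℤ)) = OmegaPath 0 n x (x + m) ∧ F.card = Nat.multichoose n m := by
  classical
  induction n with
  | zero =>
    intro x m
    rcases m with _ | m
    · refine ⟨{fun _ => x}, ?_, by simp⟩
      ext L
      simp only [Finset.coe_singleton, Set.mem_singleton_iff, OmegaPath, IncrPath, Set.mem_ofPred_eq]
      constructor
      · rintro rfl
        simp
      · rintro ⟨⟨_, h1, h2⟩, h3, _⟩
        funext s
        rcases le_total s 0 with h | h
        · rw [h1 s h, h3]
        · rw [h2 s (by simpa using h)]; simpa using h3
    · refine ⟨∅, ?_, by simp⟩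
      ext L
      simp only [Finset.coe_empty, Set.mem_empty_iff_false, OmegaPath, Set.mem_ofPred_eq, false_iff]
      rintro ⟨_, h3, h4⟩
      push_cast at h4
      omega
  | succ n ih =>
    intro x m
    choose F hF hcard using ih
    let ex : (ℤ → ℤ) → (ℤ → ℤ) := fun L s => if s ≤ n then L s else x + m
    have hmem : ∀ j L, L ∈ F x j ↔ L ∈ OmegaPath 0 n x (x + j) := by
      intro j L
      rw [← hF]; simp
    refine ⟨(Finset.range (m + 1)).biUnion (fun j => (F x j).image ex), ?_, ?_⟩
    · ext L
      simp only [Finset.coe_biUnion, Set.mem_iUnion, Finset.mem_coe, Finset.mem_image,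
        Finset.mem_range, exists_prop, hmem]
      constructor
      · rintro ⟨j, hj, L', ⟨⟨h1, h2, h3⟩, h4, h5⟩, rfl⟩
        refine ⟨⟨?_, ?_, ?_⟩, ?_, ?_⟩
        · intro i hi0 hi1
          push_cast at hi1
          simp only [ex]
          rcases lt_or_ge i (n : ℤ) with h | h
          · rw [if_pos (by omega), if_pos (by omega)]
            exact h1 i hi0 h
          · have : i = n := by omega
            subst this
            rw [if_pos le_rfl, if_neg (by omega), h5]
            omega
        · intro s hs
          simp only [ex]
          rw [if_pos (by omega), if_pos (by omega)]
          exact h2 s hs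
        · intro s hs
          push_cast at hs ⊢
          simp only [ex]
          rw [if_neg (by omega), if_neg (by omega)]
        · simp only [ex]
          rw [if_pos (by omega), h4]
        · push_cast
          simp only [ex]
          rw [if_neg (by omega)]
      · rintro ⟨⟨h1, h2, h3⟩, h4, h5⟩
        push_cast at h1 h3 h5
        have hmono : ∀ j : ℕ, (j : ℤ) ≤ n → x ≤ L j := by
          intro j
          induction j with
          | zero => intro _; rw [← h4]; simp
          | succ j ihj =>
            intro hj
            push_cast at hj ⊢
            exact (ihj (by omega)).trans (h1 j (by omega) (by omega))
        have hx := hmono n le_rfl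
        have hy := h1 n (by omega) (by omega)
        rw [h5] at hy
        refine ⟨(L n - x).toNat, by omega, fun s => L (min s n), ⟨⟨?_, ?_, ?_⟩, ?_, ?_⟩, ?_⟩
        · intro i hi0 hi1
          simp only
          rw [min_eq_left (by omega), min_eq_left (by omega)]
          exact h1 i hi0 (by omega)
        · intro s hs
          simp only
          rw [min_eq_left (by omega), min_eq_left (by omega)]
          exact h2 s hs
        · intro s hs
          simp only
          rw [min_eq_right (by omega), min_eq_right (by omega)]
        · simp only
          rw [min_eq_left (by omega), h4]
        · simp only
          rw [min_eq_left (by omega)]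
          omega
        · funext s
          simp only [ex]
          split_ifs with h
          · rw [min_eq_left h]
          · rw [h3 s (by omega), h5]
    · rw [Finset.card_biUnion, mc_hockey]
      · refine Finset.sum_congr rfl (fun j _ => ?_)
        rw [Finset.card_image_of_injOn, hcard]
        intro L hL L' hL' he
        rw [Finset.mem_coe, hmem] at hL hL'
        obtain ⟨⟨_, _, h3⟩, _, h5⟩ := hL
        obtain ⟨⟨_, _, h3'⟩, _, h5'⟩ := hL'
        funext s
        rcases le_or_gt s (n : ℤ) with h | h
        · have := congrFun he s
          simpa [ex, h] using this
        · rw [h3 s h.le, h3' s h.le, h5, h5']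
      · intro j _ j' _ hne
        rw [Function.onFun, Finset.disjoint_left]
        intro L hL hL'
        simp only [Finset.mem_image, hmem] at hL hL'
        obtain ⟨L1, h1, rfl⟩ := hL
        obtain ⟨L2, h2, he⟩ := hL'
        have := congrFun he n
        simp only [ex, le_refl, if_true] at this
        rw [h1.2.2, h2.2.2] at this
        apply hne
        omega

lemma omega_monotone {n : ℕ} {x y : ℤ} {L : ℤ → ℤ} (hL : L ∈ OmegaPath 0 n x y) :
    Monotone L := by
  obtain ⟨⟨h1, h2, h3⟩, -, -⟩ := hL
  refine monotone_int_of_le_succ (fun s => ?_)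
  rcases lt_or_ge s 0 with h | h
  · rw [h2 s h.le, h2 (s + 1) (by omega)]
  · rcases lt_or_ge s n with h' | h'
    · exact h1 s h h'
    · rw [h3 s h', h3 (s + 1) (by omega)]

lemma omega_split (n k l : ℕ) (hn : k + 1 + l = n) (x : ℤ) (m i d : ℕ) (hid : i + d ≤ m)
    (S : Finset (ℤ → ℤ))
    (hS : ∀ L ∈ S, L ∈ OmegaPath 0 n x (x + m) ∧ L k = x + i ∧ L (k + 1) = x + i + d) :
    S.card ≤ Nat.multichoose k i * Nat.multichoose l (m - d - i) := by
  classical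
  obtain ⟨F1, hF1, hc1⟩ := omega_card k x i
  obtain ⟨F2, hF2, hc2⟩ := omega_card l (x + i + d) (m - d - i)
  rw [← hc1, ← hc2, ← Finset.card_product]
  have hy : x + i + d + ((m - d - i : ℕ) : ℤ) = x + m := by omega
  rw [hy] at hF2
  refine Finset.card_le_card_of_injOn
    (fun L => (fun s => L (min s k), fun s => L (max s 0 + k + 1))) ?_ ?_
  · intro L hL
    obtain ⟨⟨⟨h1, h2, h3⟩, h4, h5⟩, hu, hv⟩ := hS L hL
    rw [Finset.coe_product, hF1, hF2]
    refine ⟨⟨⟨?_, ?_, ?_⟩, ?_, ?_⟩, ⟨⟨?_, ?_, ?_⟩, ?_, ?_⟩⟩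
    · intro j hj0 hj1
      simp only
      rw [min_eq_left (by omega), min_eq_left (by omega)]
      exact h1 j hj0 (by omega)
    · intro s hs
      simp only
      rw [min_eq_left (by omega), min_eq_left (by omega)]
      exact h2 s hs
    · intro s hs
      simp only
      rw [min_eq_right (by omega), min_eq_right (by omega)]
    · simp only
      rw [min_eq_left (by omega), h4]
    · simp only
      rw [min_self, hu]
    · intro j hj0 hj1
      simp only
      rw [max_eq_left (by omega), max_eq_left (by omega)]
      have := h1 (j + k + 1) (by omega) (by omega)
      rwa [show j + 1 + (k : ℤ) + 1 = j + k + 1 + 1 by ring]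
    · intro s hs
      simp only
      rw [max_eq_right hs, max_self]
    · intro s hs
      simp only
      rw [max_eq_left (by omega), max_eq_left (by omega), h3 (s + k + 1) (by omega),
        h3 (l + k + 1) (by omega)]
    · simp only
      rw [max_self, zero_add, hv]
    · simp only
      rw [max_eq_left (by omega), show (l : ℤ) + k + 1 = n by omega, h5]
  · intro L hL L' hL' he
    simp only [Prod.mk.injEq] at he
    funext s
    rcases le_or_gt s (k : ℤ) with h | h
    · have := congrFun he.1 s
      simpa [min_eq_left h] using this
    · have := congrFun he.2 (s - k - 1)
      rw [max_eq_left (by omega), show s - k - 1 + k + 1 = s by ring] at this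
      exact this

lemma card_window (T : Finset ℕ) (α w : ℝ) (hw : 0 ≤ w)
    (hT : ∀ i ∈ T, α ≤ i ∧ (i : ℝ) ≤ α + w) : (T.card : ℝ) ≤ w + 1 := by
  have h1 : T.card ≤ (Finset.Icc ⌈α⌉ ⌊α + w⌋).card := by
    refine Finset.card_le_card_of_injOn (fun i => (i : ℤ)) ?_ (fun a _ b _ h => by simpa using h)
    intro i hi
    obtain ⟨ha, hb⟩ := hT i hi
    simp only [Finset.coe_Icc, Set.mem_Icc]
    exact ⟨Int.ceil_le.2 (by exact_mod_cast ha), Int.le_floor.2 (by exact_mod_cast hb)⟩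
  rw [Int.card_Icc] at h1
  have h2 : (T.card : ℝ) ≤ ((⌊α + w⌋ + 1 - ⌈α⌉).toNat : ℝ) := by exact_mod_cast h1
  refine h2.trans ?_
  rcases le_or_gt 0 (⌊α + w⌋ + 1 - ⌈α⌉) with h | h
  · have e : ((⌊α + w⌋ + 1 - ⌈α⌉).toNat : ℝ) = ((⌊α + w⌋ + 1 - ⌈α⌉ : ℤ) : ℝ) := by
      rw [← Int.cast_natCast, Int.toNat_of_nonneg h]
    rw [e]
    push_cast
    linarith [Int.floor_le (α + w), Int.le_ceil α]
  · rw [Int.toNat_of_nonpos h.le]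
    push_cast
    linarith

set_option maxHeartbeats 1000000 in
lemma count_bound (p η M : ℝ) (hp : 0 < p) (hη : 0 < η) (hM : 0 < M)
    (δ1 : ℝ) (hδ1 : δ1 ∈ Set.Ioo (0 : ℝ) (1 / 2)) :
    ∃ (N1 : ℕ) (δ : ℝ), 0 < δ ∧ 1 ≤ N1 ∧
      ∀ n : ℕ, N1 ≤ n → ∀ m k l : ℕ, k + 1 + l = n →
        p * n - 2 * M * Real.sqrt n ≤ m → δ1 * n - 1 ≤ k → (k : ℝ) ≤ (1 - δ1) * n →
        ∀ T : ℕ → Finset ℕ, (∀ d, d ≤ m → ∀ i ∈ T d, i + d ≤ m) →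
        (∀ d, ∃ α : ℝ, ∀ i ∈ T d, α ≤ i ∧ (i : ℝ) ≤ α + 2 * δ * Real.sqrt n) →
        ((∑ d ∈ Finset.range (m + 1), ∑ i ∈ T d,
          Nat.multichoose k i * Nat.multichoose l (m - d - i) : ℕ) : ℝ)
          < η * Nat.multichoose n m := by
  obtain ⟨hδ0, hδh⟩ := hδ1
  set c : ℝ := min (p / 4) (δ1 / 2) with hcdef
  have hc : 0 < c := lt_min (by positivity) (by positivity)
  have hcp : c ≤ p / 4 := min_le_left _ _
  have hcδ : c ≤ δ1 / 2 := min_le_right _ _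
  have hc1 : c ≤ 1 := by linarith
  set K : ℝ := 2 / c ^ 2 + 4 * M / p + 4 / δ1 + 16 / (c ^ 2 * η) + 8 * (2 / p + 1) / η + 1 with hK
  have k1 : 0 < 2 / c ^ 2 := by positivity
  have k2 : 0 < 4 * M / p := by positivity
  have k3 : 0 < 4 / δ1 := by positivity
  have k4 : 0 < 16 / (c ^ 2 * η) := by positivity
  have k5 : 0 < 8 * (2 / p + 1) / η := by positivity
  refine ⟨⌈K ^ 2⌉₊ + 1, c ^ 2 * η / 32, by positivity, by omega, ?_⟩
  intro n hn m k l hkl hm hk1 hk2 T hT1 hT2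
  set q := Real.sqrt n with hq
  have hqq : q * q = n := Real.mul_self_sqrt (Nat.cast_nonneg n)
  have hqK : K ≤ q := by
    apply Real.le_sqrt_of_sq_le
    have : ((⌈K ^ 2⌉₊ + 1 : ℕ) : ℝ) ≤ n := by exact_mod_cast hn
    push_cast at this
    linarith [Nat.le_ceil (K ^ 2)]
  have hq1 : 1 ≤ q := by linarith
  have hqn : q ≤ n := by nlinarith
  have hn0 : (0 : ℝ) < n := by linarith
  have q1 : 2 ≤ c ^ 2 * q := by
    have : 2 / c ^ 2 ≤ q := by linarith
    rw [div_le_iff₀ (by positivity)] at this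
    linarith
  have q2 : 4 * M ≤ p * q := by
    have : 4 * M / p ≤ q := by linarith
    rw [div_le_iff₀ (by positivity)] at this
    linarith
  have q3 : 4 ≤ δ1 * n := by
    have : 4 / δ1 ≤ n := by linarith
    rw [div_le_iff₀ (by positivity)] at this
    linarith
  have q4 : 16 ≤ c ^ 2 * η * q := by
    have : 16 / (c ^ 2 * η) ≤ q := by linarith
    rw [div_le_iff₀ (by positivity)] at this
    linarith
  have q5 : 8 * (2 / p + 1) ≤ η * n := by
    have : 8 * (2 / p + 1) / η ≤ n := by linarith
    rw [div_le_iff₀ (by positivity)] at this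
    linarith
  have hmp : p * n / 2 ≤ m := by nlinarith
  have hcnk : c * n + 1 ≤ k := by nlinarith
  have hklR : (k : ℝ) + 1 + l = n := by exact_mod_cast hkl
  have hcnl : c * n + 1 ≤ l := by nlinarith
  have hm0 : (0 : ℝ) < m := lt_of_lt_of_le (by positivity) hmp
  have hm1 : 1 ≤ m := by
    have : 0 < m := by exact_mod_cast hm0
    omega
  have hn1 : 1 ≤ n := by omega
  set ε : ℝ := η / 2 with hε
  have key : ∀ d ∈ Finset.range (m + 1),
      ((∑ i ∈ T d, Nat.multichoose k i * Nat.multichoose l (m - d - i) : ℕ) : ℝ)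
        ≤ ε * Nat.multichoose (k + l) (m - d)
          + (if m < 2 * d then (Nat.multichoose (k + l) (m - d) : ℝ) else 0) := by
    intro d hd
    have hdm : d ≤ m := by simp at hd; omega
    split_ifs with h
    · have h1 : ∑ i ∈ T d, Nat.multichoose k i * Nat.multichoose l (m - d - i)
          ≤ Nat.multichoose (k + l) (m - d) := by
        rw [← mc_vandermonde]
        apply Finset.sum_le_sum_of_subset
        intro i hi
        have := hT1 d hdm i hi
        simp
        omega
      have h2 : ((∑ i ∈ T d, Nat.multichoose k i * Nat.multichoose l (m - d - i) : ℕ) : ℝ)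
          ≤ Nat.multichoose (k + l) (m - d) := by exact_mod_cast h1
      have h3 : 0 ≤ ε * Nat.multichoose (k + l) (m - d) := by positivity
      linarith
    · obtain ⟨α, hα⟩ := hT2 d
      have hcard := card_window (T d) α (2 * (c ^ 2 * η / 32) * q) (by positivity) hα
      have hmd : c * n ≤ ((m - d : ℕ) : ℝ) := by
        rw [Nat.cast_sub hdm]
        have : (2 * d : ℝ) ≤ m := by exact_mod_cast (not_lt.1 h)
        nlinarith
      have hpt : ∀ i ∈ T d, (Nat.multichoose k i * Nat.multichoose l (m - d - i) : ℝ)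
          ≤ 4 / (c ^ 2 * q) * Nat.multichoose (k + l) (m - d) := by
        intro i hi
        exact mc_local c hc hc1 n k l (m - d) i q1 hcnk hcnl (by omega) hmd
          (by have := hT1 d hdm i hi; omega)
      have hsum := Finset.sum_le_card_nsmul (T d) _ _ hpt
      push_cast
      refine hsum.trans ?_
      rw [nsmul_eq_mul, add_zero, ← mul_assoc]
      refine mul_le_mul_of_nonneg_right ?_ (by positivity)
      calc (T d).card * (4 / (c ^ 2 * q))
          ≤ (2 * (c ^ 2 * η / 32) * q + 1) * (4 / (c ^ 2 * q)) := by gcongr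
        _ = η / 4 + 4 / (c ^ 2 * q) := by field_simp; ring
        _ ≤ η / 4 + η / 4 := by
            have h4 : 4 / (c ^ 2 * q) ≤ η / 4 := by
              rw [div_le_iff₀ (by positivity)]
              linarith
            linarith
        _ = ε := by rw [hε]; ring
  have hnn : k + l + 1 = n := by omega
  have hmain : ∑ d ∈ Finset.range (m + 1), Nat.multichoose (k + l) (m - d)
      = Nat.multichoose n m := by
    rw [Finset.sum_flip (fun j => Nat.multichoose (k + l) j), ← mc_hockey, hnn]
  have htail : ∑ d ∈ (Finset.range (m + 1)).filter (fun d => m < 2 * d),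
      Nat.multichoose (k + l) (m - d) ≤ Nat.multichoose n (m / 2) := by
    rw [← hnn, mc_hockey]
    rw [← Finset.sum_image (s := (Finset.range (m + 1)).filter (fun d => m < 2 * d))
      (g := fun d => m - d) (f := fun j => Nat.multichoose (k + l) j)]
    · apply Finset.sum_le_sum_of_subset
      intro j hj
      simp only [Finset.mem_image, Finset.mem_filter, Finset.mem_range] at hj ⊢
      obtain ⟨d, hd, rfl⟩ := hj
      omega
    · intro a ha b hb hab
      simp at ha hb hab
      omega
  have htl := mc_tail n m (m / 2) hn1 hm1 (by omega)
  have hNpos : (0 : ℝ) < Nat.multichoose n m := by exact_mod_cast mc_pos n m hn1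
  have hcoef : 2 * (1 / (m : ℝ) + 1 / n) ≤ η / 4 := by
    have h1 : 1 / (m : ℝ) ≤ 1 / (p * n / 2) := one_div_le_one_div_of_le (by positivity) hmp
    have h2 : 2 * (1 / (p * n / 2) + 1 / (n : ℝ)) = 2 * (2 / p + 1) / n := by field_simp
    have h3 : 2 * (2 / p + 1) / n ≤ η / 4 := by
      rw [div_le_iff₀ hn0]; linarith
    linarith
  have htail' : (∑ d ∈ (Finset.range (m + 1)).filter (fun d => m < 2 * d),
      (Nat.multichoose (k + l) (m - d) : ℝ)) ≤ Nat.multichoose n (m / 2) := by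
    exact_mod_cast htail
  have hmain' : ∑ d ∈ Finset.range (m + 1), (Nat.multichoose (k + l) (m - d) : ℝ)
      = Nat.multichoose n m := by
    exact_mod_cast hmain
  rw [Nat.cast_sum]
  refine lt_of_le_of_lt (Finset.sum_le_sum key) ?_
  rw [Finset.sum_add_distrib, ← Finset.mul_sum, hmain', ← Finset.sum_filter]
  have : 2 * (1 / (m : ℝ) + 1 / n) * Nat.multichoose n m ≤ η / 4 * Nat.multichoose n m := by
    gcongr
  rw [hε]
  nlinarith

/-- (Lemma 3.1, no concentration in the bulk.) The one-point distribution of a uniform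
geometric random walk bridge does not concentrate on small intervals. -/
theorem no_concentration_in_bulk
    (p η M : ℝ) (hp : 0 < p) (hη : 0 < η) (hM : 0 < M)
    (δ1 : ℝ) (hδ1 : δ1 ∈ Set.Ioo (0 : ℝ) (1 / 2)) :
    ∃ (N1 : ℕ) (δ : ℝ), 0 < δ ∧
      ∀ n : ℕ, N1 ≤ n → ∀ x y : ℤ, x ≤ y →
        |(x : ℝ)| ≤ M * Real.sqrt n → |(y : ℝ) - p * n| ≤ M * Real.sqrt n →
        ∀ t ∈ Set.Icc δ1 (1 - δ1), ∀ a : ℝ,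
        ∀ (Ω : Type) (_ : MeasurableSpace Ω) (P : Measure Ω), IsProbabilityMeasure P →
        ∀ Q : Ω → ℤ → ℤ, UniformOn P Q (OmegaPath 0 n x y) →
          P {ω | (Real.sqrt n)⁻¹ * (interpZ (Q ω) (t * n) - p * t * n) ∈
              Set.Icc (a - δ) (a + δ)} < ENNReal.ofReal η := by
  classical
  obtain ⟨N1, δ, hδ, hN1, hcount⟩ := count_bound p η M hp hη hM δ1 hδ1
  obtain ⟨hδ0, hδh⟩ := hδ1
  refine ⟨N1, δ, hδ, ?_⟩
  intro n hn x y hxy hx hy t ht a Ω _ P hP Q hQ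
  obtain ⟨hQ1, hQ2⟩ := hQ
  have hn0 : (0 : ℝ) < n := by
    have : 0 < n := by omega
    exact_mod_cast this
  have hq0 : 0 < Real.sqrt n := Real.sqrt_pos.2 hn0
  obtain ⟨m, hm⟩ := Int.eq_ofNat_of_zero_le (sub_nonneg.2 hxy)
  have hy' : y = x + m := by omega
  subst hy'
  have htn0 : 0 ≤ t * n := mul_nonneg (by linarith [ht.1]) hn0.le
  have htn1 : t * n ≤ (1 - δ1) * n := by gcongr; exact ht.2
  have htn2 : δ1 * n ≤ t * n := by gcongr; exact ht.1
  obtain ⟨k, hk⟩ := Int.eq_ofNat_of_zero_le (Int.floor_nonneg.2 htn0)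
  have hk1 : (k : ℝ) ≤ t * n := by
    have := Int.floor_le (t * n)
    rw [hk] at this
    exact_mod_cast this
  have hk2 : t * n < k + 1 := by
    have := Int.lt_floor_add_one (t * n)
    rw [hk] at this
    exact_mod_cast this
  have hkn : k < n := by
    have : (k : ℝ) < n := by nlinarith
    exact_mod_cast this
  obtain ⟨l, hl⟩ := Nat.exists_eq_add_of_le (show k + 1 ≤ n by omega)
  set q := Real.sqrt n with hq
  set s : ℝ := t * n - k with hs
  obtain ⟨F, hF, hFc⟩ := omega_card n x m
  have hmem : ∀ L, L ∈ F ↔ L ∈ OmegaPath 0 n x (x + m) := by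
    intro L
    rw [← hF]; simp
  let bad : (ℤ → ℤ) → Prop := fun L =>
    q⁻¹ * (interpZ L (t * n) - p * t * n) ∈ Set.Icc (a - δ) (a + δ)
  let T : ℕ → Finset ℕ := fun d => (Finset.range (m - d + 1)).filter
    (fun i => q⁻¹ * ((x + i + s * d : ℝ) - p * t * n) ∈ Set.Icc (a - δ) (a + δ))
  have hcb := hcount n hn m k l hl.symm ?_ (by linarith) (by linarith) T ?_ ?_
  · have hcard : (F.filter bad).card ≤ ∑ d ∈ Finset.range (m + 1), ∑ i ∈ T d,
        Nat.multichoose k i * Nat.multichoose l (m - d - i) := by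
      let S : ℕ → ℕ → Finset (ℤ → ℤ) := fun d i =>
        F.filter (fun L => L k = x + i ∧ L (k + 1) = x + i + d)
      have hsub : F.filter bad ⊆ (Finset.range (m + 1)).biUnion
          (fun d => (T d).biUnion (fun i => S d i)) := by
        intro L hL
        rw [Finset.mem_filter] at hL
        obtain ⟨hLF, hLb⟩ := hL
        have hLO := (hmem L).1 hLF
        have hmono := omega_monotone hLO
        have m1 : L 0 ≤ L k := hmono (by omega)
        have m2 : L k ≤ L (k + 1) := hmono (by omega)
        have m3 : L (k + 1) ≤ L n := hmono (by omega)
        rw [hLO.2.1] at m1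
        rw [hLO.2.2] at m3
        obtain ⟨i, hi⟩ := Int.eq_ofNat_of_zero_le (sub_nonneg.2 m1)
        obtain ⟨d, hd⟩ := Int.eq_ofNat_of_zero_le (sub_nonneg.2 m2)
        have e1 : L k = x + i := by omega
        have e2 : L (k + 1) = x + i + d := by omega
        simp only [Finset.mem_biUnion, Finset.mem_range, T, S, Finset.mem_filter]
        refine ⟨d, by omega, i, ⟨by omega, ?_⟩, hLF, e1, e2⟩
        have e3 : interpZ L (t * n) = x + i + s * d := by
          simp only [interpZ, interp, hk]
          change ((L k : ℤ) : ℝ) + (t * n - ((k : ℤ) : ℝ)) *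
            (((L (k + 1) : ℤ) : ℝ) - ((L k : ℤ) : ℝ)) = _
          rw [e1, e2, hs]
          push_cast
          ring
        simp only [bad, e3] at hLb
        exact hLb
      refine (Finset.card_le_card hsub).trans (Finset.card_biUnion_le.trans ?_)
      refine Finset.sum_le_sum (fun d hd => Finset.card_biUnion_le.trans ?_)
      refine Finset.sum_le_sum (fun i hi => ?_)
      simp only [T, Finset.mem_filter, Finset.mem_range] at hi hd
      refine omega_split n k l hl.symm x m i d (by omega) _ (fun L hL => ?_)
      simp only [S, Finset.mem_filter] at hL
      exact ⟨(hmem L).1 hL.1, hL.2⟩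
    have hNat : Nat.card (OmegaPath 0 n x (x + m)) = Nat.multichoose n m := by
      rw [← hFc, ← hF]
      simp
    have hNpos : 0 < Nat.multichoose n m := mc_pos n m (by omega)
    have hlt : ((F.filter bad).card : ℝ) < η * Nat.multichoose n m :=
      lt_of_le_of_lt (by exact_mod_cast hcard) hcb
    calc P {ω | q⁻¹ * (interpZ (Q ω) (t * n) - p * t * n) ∈ Set.Icc (a - δ) (a + δ)}
        ≤ P (⋃ L ∈ F.filter bad, {ω | Q ω = L}) := by
          apply measure_mono
          intro ω hω
          simp only [Set.mem_iUnion, Finset.mem_filter, exists_prop]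
          exact ⟨Q ω, ⟨(hmem _).2 (hQ1 ω), hω⟩, rfl⟩
      _ ≤ ∑ L ∈ F.filter bad, P {ω | Q ω = L} := measure_biUnion_finset_le _ _
      _ = ∑ L ∈ F.filter bad, ((Nat.multichoose n m : ℝ≥0∞))⁻¹ := by
          refine Finset.sum_congr rfl (fun L hL => ?_)
          rw [hQ2 L ((hmem L).1 (Finset.mem_filter.1 hL).1), hNat]
      _ = ((F.filter bad).card : ℝ≥0∞) / (Nat.multichoose n m : ℝ≥0∞) := by
          rw [Finset.sum_const, nsmul_eq_mul, div_eq_mul_inv]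
      _ < ENNReal.ofReal η := by
          rw [ENNReal.div_lt_iff (Or.inl (by exact_mod_cast hNpos.ne'))
            (Or.inl (ENNReal.natCast_ne_top _))]
          rw [← ENNReal.ofReal_natCast, ← ENNReal.ofReal_natCast, ← ENNReal.ofReal_mul hη.le]
          exact (ENNReal.ofReal_lt_ofReal_iff (by positivity)).2 hlt
  · push_cast at hy
    have h1 := (abs_le.1 hx).2
    have h2 := (abs_le.1 hy).1
    linarith
  · intro d hd i hi
    simp only [T, Finset.mem_filter, Finset.mem_range] at hi
    omega
  · intro d
    refine ⟨q * (a - δ) + p * t * n - x - s * d, fun i hi => ?_⟩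
    simp only [T, Finset.mem_filter, Finset.mem_range, Set.mem_Icc] at hi
    obtain ⟨_, h1, h2⟩ := hi
    rw [inv_mul_eq_div, le_div_iff₀ hq0] at h1
    rw [inv_mul_eq_div, div_le_iff₀ hq0] at h2
    constructor <;> linarith
end

section
/- (Lemma 3.2, being high sometimes.) Fix p, M ∈ (0,∞). There exists N2 ∈ ℕ, depending on p and M, such that the following holds: for all M1, M2 ∈ ℝ with |M1 − M2| ≤ M, every integer n ≥ N2, all x, y ∈ ℤ with x ≤ y, x ≥ M1·n^{1/2} and y ≥ p·n + M2·n^{1/2}, every function g : ⟦0,n⟧ → [−∞,∞) such that Ω_Inter(0,n,x,y,∞,g) ≠ ∅, and every s ∈ [0,n]: if Q is distributed according to the uniform probability measure on Ω_Inter(0,n,x,y,∞,g) (k = 1, path extended to [0,n] by linear interpolation), then P( Q(s) ≥ ((n−s)/n)·M1·n^{1/2} + (s/n)·(p·n + M2·n^{1/2}) − 3·n^{1/4} ) ≥ 1/3. -/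
open MeasureTheory Filter Topology ProbabilityTheory
open scoped ENNReal NNReal

/-- The set `Ω_Inter(T0,T1,x,y,∞,g)` for a single curve: increasing paths from `(T0,x)`
to `(T1,y)` staying above the lower boundary `g`, in the interlacing sense. -/
def OmegaInterOne (T0 T1 : ℤ) (x y : ℤ) (g : ℤ → EReal) : Set (ℤ → ℤ) :=
  {L | IncrPath T0 T1 L ∧ L T0 = x ∧ L T1 = y ∧
    ∀ r : ℤ, T0 < r → r ≤ T1 → g r ≤ ((L (r - 1) : ℝ) : EReal)}

/-- Weighted-free Grünbaum type inequality for a log-concave tail. -/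
lemma bhs_entropy {α : Type*} (S : Finset α) (X : α → ℤ) (hi : ℤ) (hX : ∀ a ∈ S, X a < hi)
    (N : ℝ) (i : ℕ) :
    ∑ a ∈ S.filter (fun a => hi - i ≤ X a),
      (Real.log N - Real.log ((S.filter (fun b => X a ≤ X b)).card : ℝ)) ≤
    ((S.filter (fun a => hi - i ≤ X a)).card : ℝ) *
      (1 + Real.log N - Real.log ((S.filter (fun a => hi - i ≤ X a)).card : ℝ)) := by
  classical
  induction i with
  | zero =>
    have : S.filter (fun a => hi - ((0 : ℕ) : ℤ) ≤ X a) = ∅ := by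
      apply Finset.filter_eq_empty_iff.2
      intro a ha
      have := hX a ha
      push_cast
      omega
    rw [this]; simp
  | succ i ih =>
    set A := S.filter (fun a => hi - (i : ℤ) ≤ X a) with hA
    set A' := S.filter (fun a => hi - ((i + 1 : ℕ) : ℤ) ≤ X a) with hA'
    set B := S.filter (fun a => X a = hi - ((i + 1 : ℕ) : ℤ)) with hB
    have hun : A' = A ∪ B := by
      ext a
      simp only [hA, hA', hB, Finset.mem_filter, Finset.mem_union]
      constructor
      · rintro ⟨h1, h2⟩
        by_cases h : hi - (i : ℤ) ≤ X a
        · exact Or.inl ⟨h1, h⟩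
        · refine Or.inr ⟨h1, ?_⟩
          push_cast at *
          omega
      · rintro (⟨h1, h2⟩ | ⟨h1, h2⟩)
        · refine ⟨h1, ?_⟩
          push_cast at *
          omega
        · exact ⟨h1, h2.ge⟩
    have hdis : Disjoint A B := by
      rw [Finset.disjoint_left]
      intro a ha hb
      simp only [hA, hB, Finset.mem_filter] at ha hb
      have h1 := ha.2
      have h2 := hb.2
      push_cast at h2
      omega
    have hsumB : ∑ a ∈ B, (Real.log N - Real.log ((S.filter (fun b => X a ≤ X b)).card : ℝ))
        = (B.card : ℝ) * (Real.log N - Real.log (A'.card : ℝ)) := by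
      rw [← nsmul_eq_mul, ← Finset.sum_const]
      apply Finset.sum_congr rfl
      intro a ha
      simp only [hB, Finset.mem_filter] at ha
      rw [ha.2]
    have hcard : (A'.card : ℝ) = A.card + B.card := by
      rw [hun, Finset.card_union_of_disjoint hdis]; push_cast; rfl
    have hsum : ∑ a ∈ A', (Real.log N - Real.log ((S.filter (fun b => X a ≤ X b)).card : ℝ))
        = ∑ a ∈ A, (Real.log N - Real.log ((S.filter (fun b => X a ≤ X b)).card : ℝ))
        + ∑ a ∈ B, (Real.log N - Real.log ((S.filter (fun b => X a ≤ X b)).card : ℝ)) := by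
      rw [hun, Finset.sum_union hdis]
    rw [hsum, hsumB]
    have key : (A.card : ℝ) * (Real.log A'.card - Real.log A.card) ≤ A'.card - A.card := by
      rcases Nat.eq_zero_or_pos A.card with h0 | h0
      · rw [h0]; simp
      · have hc : (0 : ℝ) < A.card := by exact_mod_cast h0
        have hc' : (0 : ℝ) < A'.card := by rw [hcard]; positivity
        rw [← Real.log_div hc'.ne' hc.ne']
        have := Real.log_le_sub_one_of_pos (div_pos hc' hc)
        calc (A.card : ℝ) * Real.log (A'.card / A.card)
            ≤ A.card * (A'.card / A.card - 1) := by gcongr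
          _ = A'.card - A.card := by field_simp
    have hBc : (B.card : ℝ) = A'.card - A.card := by linarith
    rw [hBc]
    nlinarith [ih, key]

lemma bhs_tangent (c : ℤ → ℝ) (hpos : ∀ k, 0 ≤ c k) (hanti : Antitone c)
    (hlc : ∀ k, c (k + 1) * c (k - 1) ≤ c k * c k) (m : ℤ) (hm : 0 < c m) :
    ∃ d : ℝ, 0 ≤ d ∧ ∀ k, 0 < c k → d * (k - m) ≤ Real.log (c m) - Real.log (c k) := by
  have hm1 : 0 < c (m - 1) := lt_of_lt_of_le hm (hanti (by omega))
  set d := Real.log (c (m - 1)) - Real.log (c m) with hd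
  have hpd : ∀ k l : ℤ, l ≤ k → 0 < c k → 0 < c l := fun k l h hk => lt_of_lt_of_le hk (hanti h)
  have hlog : ∀ k, 0 < c (k + 1) →
      Real.log (c (k + 1)) + Real.log (c (k - 1)) ≤ 2 * Real.log (c k) := by
    intro k hk
    have h1 := hpd _ k (by omega) hk
    have h2 := hpd _ (k - 1) (by omega) hk
    have := Real.log_le_log (mul_pos hk h2) (hlc k)
    rw [Real.log_mul hk.ne' h2.ne', Real.log_mul h1.ne' h1.ne'] at this
    linarith
  refine ⟨d, ?_, ?_⟩
  · have := Real.log_le_log hm (hanti (by omega : m - 1 ≤ m))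
    linarith
  have up : ∀ i : ℕ, 0 < c (m + i) →
      d ≤ Real.log (c (m + i - 1)) - Real.log (c (m + i)) ∧
      d * i ≤ Real.log (c m) - Real.log (c (m + i)) := by
    intro i
    induction i with
    | zero => intro _; simp [hd]
    | succ i ih =>
      intro h
      have h0 : 0 < c (m + i) := hpd _ _ (by push_cast; omega) h
      obtain ⟨a1, a2⟩ := ih h0
      have e : m + ((i + 1 : ℕ) : ℤ) = m + i + 1 := by push_cast; ring
      rw [e] at h ⊢
      have := hlog _ h
      have e2 : m + (i : ℤ) + 1 - 1 = m + i := by ring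
      rw [e2]
      push_cast
      constructor <;> linarith
  have down : ∀ i : ℕ,
      Real.log (c (m - i - 1)) - Real.log (c (m - i)) ≤ d ∧
      Real.log (c (m - i)) - Real.log (c m) ≤ d * i := by
    intro i
    induction i with
    | zero => simp [hd]
    | succ i ih =>
      obtain ⟨a1, a2⟩ := ih
      have e : m - ((i + 1 : ℕ) : ℤ) = m - i - 1 := by push_cast; ring
      rw [e]
      have := hlog (m - i - 1) (hpd m _ (by omega) hm)
      have e2 : m - (i : ℤ) - 1 + 1 = m - i := by ring
      rw [e2] at this
      push_cast
      constructor <;> linarith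
  intro k hk
  rcases le_total m k with h | h
  · obtain ⟨i, rfl⟩ := Int.le.dest h
    have := (up i hk).2
    push_cast
    linarith
  · obtain ⟨i, hi⟩ := Int.le.dest h
    have e : k = m - i := by omega
    rw [e]
    have := (down i).2
    push_cast
    linarith

lemma bhs_grunbaum {α : Type*} (S : Finset α) (hS : S.Nonempty) (X : α → ℤ)
    (hlc : ∀ k : ℤ, (S.filter (fun a => k + 1 ≤ X a)).card * (S.filter (fun a => k - 1 ≤ X a)).card
      ≤ (S.filter (fun a => k ≤ X a)).card * (S.filter (fun a => k ≤ X a)).card)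
    (m : ℤ) (hm : (m : ℝ) * S.card ≤ ∑ a ∈ S, (X a : ℝ)) :
    S.card ≤ 3 * (S.filter (fun a => m ≤ X a)).card := by
  classical
  set c : ℤ → ℝ := fun k => ((S.filter (fun a => k ≤ X a)).card : ℝ) with hc
  have hN : (0 : ℝ) < S.card := by exact_mod_cast hS.card_pos
  have hcm : 0 < c m := by
    simp only [hc]
    norm_cast
    rw [Finset.card_pos]
    by_contra hne
    rw [Finset.not_nonempty_iff_eq_empty, Finset.filter_eq_empty_iff] at hne
    have : ∑ a ∈ S, (X a : ℝ) < ∑ a ∈ S, (m : ℝ) := by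
      apply Finset.sum_lt_sum_of_nonempty hS
      intro a ha
      have := hne ha
      push Not at this
      exact_mod_cast this
    rw [Finset.sum_const, nsmul_eq_mul] at this
    linarith
  obtain ⟨d, hd, ht⟩ := bhs_tangent c (fun k => Nat.cast_nonneg _)
    (by
      intro k l hkl
      simp only [hc]
      norm_cast
      apply Finset.card_le_card
      intro a
      simp only [Finset.mem_filter]
      exact fun h => ⟨h.1, hkl.trans h.2⟩)
    (by intro k; simp only [hc]; exact_mod_cast hlc k) m hcm
  obtain ⟨hi, hhi⟩ : ∃ hi : ℤ, ∀ a ∈ S, X a < hi := by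
    obtain ⟨b, hb⟩ := (S.image X).bddAbove
    exact ⟨b + 1, fun a ha => Int.lt_add_one_of_le (hb (by simpa using ⟨a, ha, rfl⟩))⟩
  obtain ⟨lo, hlo⟩ : ∃ lo : ℤ, ∀ a ∈ S, lo ≤ X a := by
    obtain ⟨b, hb⟩ := (S.image X).bddBelow
    exact ⟨b, fun a ha => (hb (by simpa using ⟨a, ha, rfl⟩))⟩
  have hent := bhs_entropy S X hi hhi S.card (hi - lo).toNat
  have hfull : S.filter (fun a => hi - ((hi - lo).toNat : ℤ) ≤ X a) = S := by
    apply Finset.filter_true_of_mem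
    intro a ha
    have := hlo a ha
    have := Int.self_le_toNat (hi - lo)
    omega
  rw [hfull] at hent
  have h2 : ∑ a ∈ S, (d * ((X a : ℝ) - m) - Real.log (c m) + Real.log S.card)
      ≤ ∑ a ∈ S, (Real.log S.card - Real.log ((S.filter (fun b => X a ≤ X b)).card : ℝ)) := by
    apply Finset.sum_le_sum
    intro a ha
    have hp : 0 < c (X a) := by
      simp only [hc]
      norm_cast
      rw [Finset.card_pos]
      exact ⟨a, by simp [ha]⟩
    have := ht (X a) hp
    simp only [hc] at this ⊢
    linarith
  rw [Finset.sum_add_distrib, Finset.sum_sub_distrib, ← Finset.mul_sum, Finset.sum_sub_distrib,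
    Finset.sum_const, Finset.sum_const, Finset.sum_const] at h2
  simp only [nsmul_eq_mul] at h2
  have h3 : 0 ≤ d * (∑ a ∈ S, (X a : ℝ) - S.card * m) := mul_nonneg hd (by linarith)
  have h4 : (S.card : ℝ) * (Real.log S.card - Real.log (c m)) ≤ S.card * 1 := by linarith
  have h5 := le_of_mul_le_mul_left h4 hN
  rw [← Real.log_div hN.ne' hcm.ne', Real.log_le_iff_le_exp (div_pos hN hcm)] at h5
  have h6 : (S.card : ℝ) / c m ≤ 3 := h5.trans (by linarith [Real.exp_one_lt_d9])
  rw [div_le_iff₀ hcm] at h6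
  simp only [hc] at h6
  exact_mod_cast h6

lemma bhs_mono {T0 T1 : ℤ} {L : ℤ → ℤ} (h : IncrPath T0 T1 L) : Monotone L := by
  apply monotone_int_of_le_succ
  intro j
  rcases lt_or_ge j T0 with h1 | h1
  · rw [h.2.1 j h1.le, h.2.1 (j + 1) (by omega)]
  rcases lt_or_ge j T1 with h2 | h2
  · exact h.1 j h1 h2
  · rw [h.2.2 j h2, h.2.2 (j + 1) (by omega)]

lemma bhs_finite (n : ℕ) (x y : ℤ) : (OmegaPath 0 n x y).Finite := by
  have hb : ∀ L ∈ OmegaPath 0 n x y, ∀ i : ℤ, L i ∈ Set.Icc x y := by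
    rintro L ⟨h, h0, h1⟩ i
    have hm := bhs_mono h
    constructor
    · rcases le_total i 0 with hi | hi
      · rw [h.2.1 i hi, h0]
      · rw [← h0]; exact hm hi
    · rcases le_total i n with hi | hi
      · rw [← h1]; exact hm hi
      · rw [h.2.2 i hi, h1]
  let f : OmegaPath 0 n x y → (Fin (n + 1) → Set.Icc x y) :=
    fun L i => ⟨L.1 (i : ℕ), hb L.1 L.2 _⟩
  have : Function.Injective f := by
    rintro ⟨L, hL⟩ ⟨L', hL'⟩ hf
    apply Subtype.ext
    funext i
    show L i = L' i
    have hL0 := hL.2.1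
    have hL0' := hL'.2.1
    have hL1 := hL.2.2
    have hL1' := hL'.2.2
    rcases le_total i 0 with hi | hi
    · rw [hL.1.2.1 i hi, hL'.1.2.1 i hi, hL0, hL0']
    rcases le_total (n : ℤ) i with hi' | hi'
    · rw [hL.1.2.2 i hi', hL'.1.2.2 i hi', hL1, hL1']
    · lift i to ℕ using hi
      have := congrFun hf ⟨i, by omega⟩
      simpa [f] using this
  exact Set.finite_coe_iff.1 (Finite.of_injective f this)

lemma bhs_incr_sup {T0 T1 : ℤ} {L K : ℤ → ℤ} (h : IncrPath T0 T1 L) (h' : IncrPath T0 T1 K) :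
    IncrPath T0 T1 (L ⊔ K) := by
  refine ⟨fun j h1 h2 => sup_le_sup (h.1 j h1 h2) (h'.1 j h1 h2), fun s hs => ?_, fun s hs => ?_⟩
  · simp only [Pi.sup_apply]; rw [h.2.1 s hs, h'.2.1 s hs]
  · simp only [Pi.sup_apply]; rw [h.2.2 s hs, h'.2.2 s hs]

lemma bhs_incr_inf {T0 T1 : ℤ} {L K : ℤ → ℤ} (h : IncrPath T0 T1 L) (h' : IncrPath T0 T1 K) :
    IncrPath T0 T1 (L ⊓ K) := by
  refine ⟨fun j h1 h2 => inf_le_inf (h.1 j h1 h2) (h'.1 j h1 h2), fun s hs => ?_, fun s hs => ?_⟩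
  · simp only [Pi.inf_apply]; rw [h.2.1 s hs, h'.2.1 s hs]
  · simp only [Pi.inf_apply]; rw [h.2.2 s hs, h'.2.2 s hs]

lemma bhs_incr_add {T0 T1 : ℤ} {L : ℤ → ℤ} (h : IncrPath T0 T1 L) (a : ℤ) :
    IncrPath T0 T1 (fun i => L i + a) := by
  refine ⟨fun j h1 h2 => ?_, fun s hs => ?_, fun s hs => ?_⟩
  · have := h.1 j h1 h2
    show L j + a ≤ L (j + 1) + a
    omega
  · show L s + a = L T0 + a
    rw [h.2.1 s hs]
  · show L s + a = L T1 + a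
    rw [h.2.2 s hs]

open scoped FinsetFamily in
/-- Stochastic domination. -/
lemma bhs_dom (n : ℕ) (x y x' y' : ℤ) (hx : x' ≤ x) (hy : y' ≤ y) (g : ℤ → EReal)
    (S S' : Finset (ℤ → ℤ)) (hS : ∀ L, L ∈ S ↔ L ∈ OmegaInterOne 0 n x y g)
    (hS' : ∀ L, L ∈ S' ↔ L ∈ OmegaPath 0 n x' y') (j k : ℤ) :
    (S'.filter (fun L => k ≤ L j)).card * S.card
      ≤ S'.card * (S.filter (fun L => k ≤ L j)).card := by
  classical
  refine (Finset.le_card_infs_mul_card_sups _ _).trans ?_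
  apply Nat.mul_le_mul <;> apply Finset.card_le_card
  · intro K hK
    obtain ⟨R, hR, P, hP, rfl⟩ := Finset.mem_infs.1 hK
    rw [Finset.mem_filter, hS'] at hR
    rw [hS] at hP
    rw [hS']
    obtain ⟨⟨r1, r2, r3⟩, r4⟩ := hR
    obtain ⟨p1, p2, p3, p4⟩ := hP
    refine ⟨bhs_incr_inf r1 p1, ?_, ?_⟩
    · rw [Pi.inf_apply, r2, p2]; exact inf_of_le_left hx
    · rw [Pi.inf_apply, r3, p3]; exact inf_of_le_left hy
  · intro K hK
    obtain ⟨R, hR, P, hP, rfl⟩ := Finset.mem_sups.1 hK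
    rw [Finset.mem_filter, hS'] at hR
    rw [hS] at hP
    rw [Finset.mem_filter, hS]
    obtain ⟨⟨r1, r2, r3⟩, r4⟩ := hR
    obtain ⟨p1, p2, p3, p4⟩ := hP
    refine ⟨⟨bhs_incr_sup r1 p1, ?_, ?_, ?_⟩, ?_⟩
    · rw [Pi.sup_apply, r2, p2]; exact sup_of_le_right hx
    · rw [Pi.sup_apply, r3, p3]; exact sup_of_le_right hy
    · intro r h0 h1
      refine (p4 r h0 h1).trans ?_
      rw [EReal.coe_le_coe_iff]
      rw [Pi.sup_apply]
      exact_mod_cast le_sup_right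
    · exact r4.trans le_sup_left

open scoped FinsetFamily in
/-- Log-concavity of the tails of the free bridge. -/
lemma bhs_lc (n : ℕ) (x y : ℤ)
    (S : Finset (ℤ → ℤ)) (hS : ∀ L, L ∈ S ↔ L ∈ OmegaPath 0 n x y) (j k : ℤ) :
    (S.filter (fun L => k + 1 ≤ L j)).card * (S.filter (fun L => k - 1 ≤ L j)).card
      ≤ (S.filter (fun L => k ≤ L j)).card * (S.filter (fun L => k ≤ L j)).card := by
  classical
  let e : (ℤ → ℤ) → (ℤ → ℤ) := fun L i => L i + 1
  have he : Function.Injective e := by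
    intro L K h
    funext i
    have := congrFun h i
    simpa [e] using this
  rw [← Finset.card_image_of_injective (S.filter (fun L => k - 1 ≤ L j)) he]
  refine (Finset.le_card_infs_mul_card_sups _ _).trans ?_
  conv_rhs => rw [← Finset.card_image_of_injective (S.filter (fun L => k ≤ L j)) he]
  rw [Finset.card_image_of_injective (S.filter (fun L => k ≤ L j)) he]
  conv_rhs => arg 2; rw [← Finset.card_image_of_injective (S.filter (fun L => k ≤ L j)) he]
  apply Nat.mul_le_mul <;> apply Finset.card_le_card
  · intro K hK
    obtain ⟨R, hR, P', hPi, rfl⟩ := Finset.mem_infs.1 hK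
    obtain ⟨P, hP, rfl⟩ := Finset.mem_image.1 hPi
    rw [Finset.mem_filter, hS] at hR hP ⊢
    obtain ⟨⟨r1, r2, r3⟩, r4⟩ := hR
    obtain ⟨⟨p1, p2, p3⟩, p4⟩ := hP
    refine ⟨⟨bhs_incr_inf r1 (bhs_incr_add p1 1), ?_, ?_⟩, ?_⟩
    · show min (R 0) (P 0 + 1) = x
      omega
    · show min (R n) (P n + 1) = y
      omega
    · show k ≤ min (R j) (P j + 1)
      omega
  · intro K hK
    obtain ⟨R, hR, P', hPi, rfl⟩ := Finset.mem_sups.1 hK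
    obtain ⟨P, hP, rfl⟩ := Finset.mem_image.1 hPi
    rw [Finset.mem_filter, hS] at hR hP
    obtain ⟨⟨r1, r2, r3⟩, r4⟩ := hR
    obtain ⟨⟨p1, p2, p3⟩, p4⟩ := hP
    rw [Finset.mem_image]
    refine ⟨fun i => (R ⊔ e P) i + (-1), ?_, ?_⟩
    · rw [Finset.mem_filter, hS]
      refine ⟨⟨bhs_incr_add (bhs_incr_sup r1 (bhs_incr_add p1 1)) (-1), ?_, ?_⟩, ?_⟩
      · show max (R 0) (P 0 + 1) + (-1) = x
        omega
      · show max (R n) (P n + 1) + (-1) = y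
        omega
      · show k ≤ max (R j) (P j + 1) + (-1)
        omega
    · funext i
      simp [e]

/-- Mean of the free bridge. -/
lemma bhs_mean (n : ℕ) (hn : 0 < n) (x y : ℤ)
    (S : Finset (ℤ → ℤ)) (hS : ∀ L, L ∈ S ↔ L ∈ OmegaPath 0 n x y) (j : ℕ) (hj : j ≤ n) :
    (n : ℤ) * ∑ L ∈ S, L j = S.card * (n * x + j * (y - x)) := by
  classical
  set m : ℕ → ℤ := fun j => ∑ L ∈ S, L j with hm
  have h2 : ∀ i : ℕ, i + 2 ≤ n → m (i + 1) = m i + m (i + 2) - m (i + 1) := by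
    intro i hi
    simp only [hm]
    rw [← Finset.sum_add_distrib, ← Finset.sum_sub_distrib]
    let e : (ℤ → ℤ) → (ℤ → ℤ) := fun L =>
      Function.update L ((i + 1 : ℕ) : ℤ)
        (L (i : ℕ) + L ((i + 2 : ℕ) : ℤ) - L ((i + 1 : ℕ) : ℤ))
    have e1 : ∀ L, e L ((i + 1 : ℕ) : ℤ) =
        L (i : ℕ) + L ((i + 2 : ℕ) : ℤ) - L ((i + 1 : ℕ) : ℤ) := fun L => by simp [e]
    have e0 : ∀ L (k : ℤ), k ≠ ((i + 1 : ℕ) : ℤ) → e L k = L k := fun L k hk => by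
      simp only [e]; rw [Function.update_of_ne hk]
    have hee : ∀ L, e (e L) = L := by
      intro L
      funext k
      by_cases hk : k = ((i + 1 : ℕ) : ℤ)
      · subst hk
        rw [e1, e1, e0 L _ (by push_cast; omega), e0 L _ (by push_cast; omega)]
        ring
      · rw [e0 _ _ hk, e0 _ _ hk]
    have hmem : ∀ L ∈ S, e L ∈ S := by
      intro L hL
      rw [hS] at hL ⊢
      obtain ⟨p1, p2, p3⟩ := hL
      have hmon := bhs_mono p1
      have z0 : e L 0 = L 0 := e0 L _ (by push_cast; omega)
      have zn : e L n = L n := e0 L _ (by push_cast; omega)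
      refine ⟨⟨?_, ?_, ?_⟩, ?_, ?_⟩
      · intro k h0 h1
        by_cases hk : k = ((i + 1 : ℕ) : ℤ)
        · have hk2 : k + 1 = ((i + 2 : ℕ) : ℤ) := by push_cast at *; omega
          rw [hk2, hk, e1, e0 L _ (by push_cast; omega)]
          have := hmon (show ((i : ℕ) : ℤ) ≤ ((i + 1 : ℕ) : ℤ) by push_cast; omega)
          omega
        · by_cases hk' : k + 1 = ((i + 1 : ℕ) : ℤ)
          · have hk2 : k = ((i : ℕ) : ℤ) := by push_cast at *; omega
            rw [hk', hk2, e1, e0 L _ (by push_cast; omega)]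
            have := hmon (show ((i + 1 : ℕ) : ℤ) ≤ ((i + 2 : ℕ) : ℤ) by push_cast; omega)
            omega
          · rw [e0 L _ hk, e0 L _ hk']
            exact hmon (by omega)
      · intro s hs
        rw [z0, e0 L s (by push_cast; omega), p1.2.1 s hs]
      · intro s hs
        rw [zn, e0 L s (by push_cast; omega), p1.2.2 s hs]
      · rw [z0, p2]
      · rw [zn, p3]
    apply Finset.sum_nbij' e e hmem hmem (fun L _ => hee L) (fun L _ => hee L)
    intro L hL
    rw [e1, e0 L _ (by push_cast; omega), e0 L _ (by push_cast; omega)]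
    ring
  have m0 : m 0 = S.card * x := by
    simp only [hm]
    rw [Finset.sum_congr rfl (g := fun _ => x)]
    · simp
    · intro L hL
      exact ((hS L).1 hL).2.1
  have mn : m n = S.card * y := by
    simp only [hm]
    rw [Finset.sum_congr rfl (g := fun _ => y)]
    · simp
    · intro L hL
      exact ((hS L).1 hL).2.2
  have lin : ∀ i : ℕ, i + 1 ≤ n → m (i + 1) - m i = m 1 - m 0 ∧
      m (i + 1) = m 0 + (i + 1) * (m 1 - m 0) := by
    intro i
    induction i with
    | zero => intro _; simp
    | succ i ih =>
      intro h
      obtain ⟨a1, a2⟩ := ih (by omega)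
      have := h2 i (by omega)
      have a3 : m (i + 1 + 1) - m (i + 1) = m 1 - m 0 := by
        have : m (i + 1 + 1) = m (i + 2) := rfl
        omega
      refine ⟨a3, ?_⟩
      push_cast
      linarith
  have lin' : ∀ i : ℕ, i ≤ n → m i = m 0 + i * (m 1 - m 0) := by
    intro i hi
    cases i with
    | zero => simp
    | succ i => rw [(lin i hi).2]; push_cast; ring
  have ln := lin' n le_rfl
  have lj := lin' j hj
  show (n : ℤ) * m j = _
  rw [lj]
  rw [mn, m0] at ln
  rw [m0]
  linear_combination (-(j : ℤ)) * ln

/-- The combinatorial core: at integer times. -/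
lemma bhs_core (n : ℕ) (hn : 0 < n) (x y x' y' : ℤ) (hx : x' ≤ x) (hy : y' ≤ y) (hxy : x' ≤ y')
    (g : ℤ → EReal) (S : Finset (ℤ → ℤ)) (hS : ∀ L, L ∈ S ↔ L ∈ OmegaInterOne 0 n x y g)
    (j : ℕ) (hj : j ≤ n) (m : ℤ) (hm : (m : ℝ) ≤ x' + j / n * (y' - x')) :
    S.card ≤ 3 * (S.filter (fun L => m ≤ L j)).card := by
  classical
  have hS' : ∀ L, L ∈ (bhs_finite n x' y').toFinset ↔ L ∈ OmegaPath 0 n x' y' := fun L => by simp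
  set S' := (bhs_finite n x' y').toFinset
  have hne : S'.Nonempty := by
    refine ⟨fun i => if i < n then x' else y', (hS' _).2 ⟨⟨?_, ?_, ?_⟩, ?_, ?_⟩⟩
    · intro i h0 h1
      dsimp only
      split_ifs <;> omega
    · intro i h0
      dsimp only
      split_ifs <;> omega
    · intro i h0
      dsimp only
      split_ifs <;> omega
    · dsimp only
      split_ifs <;> omega
    · dsimp only
      split_ifs <;> omega
  have hmean := bhs_mean n hn x' y' S' hS' j hj
  have hmean' : (n : ℝ) * ∑ L ∈ S', (L j : ℝ) = S'.card * (n * x' + j * (y' - x')) := by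
    exact_mod_cast hmean
  have hn' : (0 : ℝ) < n := by exact_mod_cast hn
  have h1 : (m : ℝ) * S'.card ≤ ∑ L ∈ S', (L j : ℝ) := by
    have : ∑ L ∈ S', (L j : ℝ) = (x' + j / n * (y' - x')) * S'.card := by
      apply mul_left_cancel₀ hn'.ne'
      rw [hmean']
      field_simp
    rw [this]
    gcongr
  have h2 := bhs_grunbaum S' hne (fun L => L j) (bhs_lc n x' y' S' hS' j) m h1
  have h3 := bhs_dom n x y x' y' hx hy g S S' hS hS' j m
  have hpos := hne.card_pos
  have : S'.card * S.card ≤ S'.card * (3 * (S.filter (fun L => m ≤ L j)).card) := by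
    nlinarith
  exact Nat.le_of_mul_le_mul_left this hpos

lemma bhs_prob {Ω E : Type*} [MeasurableSpace Ω] (P : Measure Ω) [IsProbabilityMeasure P]
    (X : Ω → E) (S : Finset E) (h : UniformOn P X (S : Set E)) (A : E → Prop) [DecidablePred A]
    (hc : S.card ≤ 3 * (S.filter A).card) : (3 : ℝ≥0∞)⁻¹ ≤ P {ω | A (X ω)} := by
  classical
  obtain ⟨h1, h2⟩ := h
  have hcard : Nat.card (S : Set E) = S.card := by simp
  rw [hcard] at h2
  have hne : S.Nonempty := by
    obtain ⟨ω⟩ : Nonempty Ω := nonempty_of_isProbabilityMeasure P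
    exact ⟨X ω, h1 ω⟩
  have hbad : P {ω | ¬ A (X ω)} ≤ (S.filter (fun e => ¬ A e)).card * (S.card : ℝ≥0∞)⁻¹ := by
    have : {ω | ¬ A (X ω)} ⊆ ⋃ e ∈ S.filter (fun e => ¬ A e), {ω | X ω = e} := by
      intro ω hω
      simp only [Set.mem_iUnion]
      exact ⟨X ω, Finset.mem_filter.2 ⟨h1 ω, hω⟩, rfl⟩
    refine (measure_mono this).trans ((measure_biUnion_finset_le _ _).trans ?_)
    rw [Finset.sum_congr rfl (fun e he => h2 e (Finset.mem_filter.1 he).1), Finset.sum_const,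
      nsmul_eq_mul]
  have huniv : (1 : ℝ≥0∞) ≤ P {ω | A (X ω)} + P {ω | ¬ A (X ω)} := by
    rw [← measure_univ (μ := P)]
    refine (measure_mono ?_).trans (measure_union_le _ _)
    intro ω _
    exact em _
  have hcb : (S.filter A).card + (S.filter (fun e => ¬ A e)).card = S.card :=
    Finset.card_filter_add_card_filter_not _
  have hb : 3 * (S.filter (fun e => ¬ A e)).card ≤ 2 * S.card := by omega
  have hN : (0 : ℝ) < S.card := by exact_mod_cast hne.card_pos
  have hbad2 : P {ω | ¬ A (X ω)} ≤ ENNReal.ofReal (2 / 3) := by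
    refine hbad.trans ?_
    rw [← ENNReal.ofReal_natCast, ← ENNReal.ofReal_natCast, ← ENNReal.ofReal_inv_of_pos hN,
      ← ENNReal.ofReal_mul (by positivity)]
    apply ENNReal.ofReal_le_ofReal
    rw [← div_eq_mul_inv, div_le_div_iff₀ hN (by norm_num)]
    have : (3 : ℝ) * (S.filter (fun e => ¬ A e)).card ≤ 2 * S.card := by exact_mod_cast hb
    linarith
  have h3 : (3 : ℝ≥0∞)⁻¹ = ENNReal.ofReal (1 / 3) := by
    rw [one_div, ENNReal.ofReal_inv_of_pos (by norm_num)]; simp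
  have h4 : (1 : ℝ≥0∞) = ENNReal.ofReal (1 / 3) + ENNReal.ofReal (2 / 3) := by
    rw [← ENNReal.ofReal_add (by norm_num) (by norm_num)]; norm_num
  rw [h3]
  have h5 := huniv.trans (add_le_add_right hbad2 _)
  rw [h4] at h5
  exact (ENNReal.add_le_add_iff_right ENNReal.ofReal_ne_top).1 h5

/-- (Lemma 3.2, being high sometimes.) A geometric bridge conditioned to stay above a lower
boundary, started and ended not too low, is above the corresponding line at any given time
with probability at least `1/3`. -/
theorem being_high_sometimes (p M : ℝ) (hp : 0 < p) (hM : 0 < M) :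
    ∃ N2 : ℕ, ∀ M1 M2 : ℝ, |M1 - M2| ≤ M → ∀ n : ℕ, N2 ≤ n →
      ∀ x y : ℤ, x ≤ y → M1 * Real.sqrt n ≤ (x : ℝ) →
        p * n + M2 * Real.sqrt n ≤ (y : ℝ) →
      ∀ g : ℤ → EReal, (∀ r : ℤ, 0 ≤ r → r ≤ n → g r ≠ ⊤) →
        (OmegaInterOne 0 n x y g).Nonempty →
      ∀ s ∈ Set.Icc (0 : ℝ) n,
      ∀ (Ω : Type) (_ : MeasurableSpace Ω) (P : Measure Ω), IsProbabilityMeasure P →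
      ∀ Q : Ω → ℤ → ℤ, UniformOn P Q (OmegaInterOne 0 n x y g) →
        (3 : ℝ≥0∞)⁻¹ ≤ P {ω | ((n - s) / n) * (M1 * Real.sqrt n)
            + (s / n) * (p * n + M2 * Real.sqrt n) - 3 * (n : ℝ) ^ ((1 : ℝ) / 4)
            ≤ interpZ (Q ω) s} := by
  classical
  have hev : ∀ᶠ n : ℕ in atTop, M ≤ p * Real.sqrt n ∧ 2 * p + 2 ≤ 3 * (n : ℝ) ^ ((1 : ℝ) / 4)
      ∧ 0 < n := by
    have t1 : Tendsto (fun n : ℕ => p * Real.sqrt n) atTop atTop :=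
      (Real.tendsto_sqrt_atTop.comp tendsto_natCast_atTop_atTop).const_mul_atTop hp
    have t2 : Tendsto (fun n : ℕ => 3 * (n : ℝ) ^ ((1 : ℝ) / 4)) atTop atTop :=
      ((tendsto_rpow_atTop (by norm_num)).comp
        tendsto_natCast_atTop_atTop).const_mul_atTop (by norm_num)
    filter_upwards [t1.eventually_ge_atTop M, t2.eventually_ge_atTop (2 * p + 2),
      eventually_gt_atTop 0] with n a b c
    exact ⟨a, b, c⟩
  obtain ⟨N2, hN2⟩ := eventually_atTop.1 hev
  refine ⟨N2, ?_⟩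
  intro M1 M2 hM12 n hn x y hxy hx hy g _ _ s hs Ω _ P _ Q hQ
  obtain ⟨hn1, hn2, hn0⟩ := hN2 n hn
  have hn' : (0 : ℝ) < n := by exact_mod_cast hn0
  have hn1' : (1 : ℝ) ≤ n := by exact_mod_cast hn0
  have hsq : Real.sqrt n * Real.sqrt n = n := Real.mul_self_sqrt hn'.le
  have hsq0 : 0 ≤ Real.sqrt n := Real.sqrt_nonneg _
  have hab := abs_le.1 hM12
  set a : ℝ := M1 * Real.sqrt n with ha
  set b : ℝ := p * n + M2 * Real.sqrt n with hb
  have hMn : M * Real.sqrt n ≤ p * n := by nlinarith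
  have hba : a ≤ b := by
    have : (M1 - M2) * Real.sqrt n ≤ M * Real.sqrt n := by gcongr; exact hab.2
    rw [ha, hb]; linarith
  have hba2 : b - a ≤ 2 * p * n := by
    have : (M2 - M1) * Real.sqrt n ≤ M * Real.sqrt n := by gcongr; linarith [hab.1]
    rw [ha, hb]; linarith
  have hx' : ⌈a⌉ ≤ x := Int.ceil_le.2 hx
  have hy' : ⌈b⌉ ≤ y := Int.ceil_le.2 hy
  have hxy' : ⌈a⌉ ≤ ⌈b⌉ := Int.ceil_mono hba
  set x' := ⌈a⌉ with hx'd
  set y' := ⌈b⌉ with hy'd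
  have ax : a ≤ x' := Int.le_ceil a
  have bx : b ≤ y' := Int.le_ceil b
  have by1 : (y' : ℝ) < b + 1 := Int.ceil_lt_add_one b
  have hxyR : (x' : ℝ) ≤ y' := by exact_mod_cast hxy'
  have hfin : (OmegaInterOne 0 n x y g).Finite :=
    (bhs_finite n x y).subset (fun L hL => ⟨hL.1, hL.2.1, hL.2.2.1⟩)
  have hS : ∀ L, L ∈ hfin.toFinset ↔ L ∈ OmegaInterOne 0 n x y g := fun L => by simp
  have hQ' : UniformOn P Q (hfin.toFinset : Set (ℤ → ℤ)) := by
    rw [Set.Finite.coe_toFinset]; exact hQ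
  set S := hfin.toFinset
  set j : ℕ := ⌊s⌋₊ with hjd
  have hjs : (j : ℝ) ≤ s := Nat.floor_le hs.1
  have hsj : s < j + 1 := Nat.lt_floor_add_one s
  have hj : j ≤ n := by exact_mod_cast hjs.trans hs.2
  have hfl : ⌊s⌋ = (j : ℤ) := (Int.natCast_floor_eq_floor hs.1).symm
  set line : ℝ := x' + j / n * (y' - x') with hline
  have hcore := bhs_core n hn0 x y x' y' hx' hy' hxy' g S hS j hj ⌊line⌋ (Int.floor_le _)
  have hprob := bhs_prob P Q S hQ' (fun L => ⌊line⌋ ≤ L j) hcore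
  refine hprob.trans (measure_mono ?_)
  intro ω hω
  have hω' : (⌊line⌋ : ℝ) ≤ Q ω j := by exact_mod_cast hω
  have hl1 : line < ⌊line⌋ + 1 := Int.lt_floor_add_one _
  show _ ≤ interpZ (Q ω) s
  have hmem := (hQ.1 ω).1
  have hmon : (Q ω j : ℝ) ≤ Q ω (j + 1) := by exact_mod_cast bhs_mono hmem (by omega)
  have hint : (Q ω j : ℝ) ≤ interpZ (Q ω) s := by
    simp only [interpZ, interp]
    rw [hfl]
    have : 0 ≤ (s - ((j : ℤ) : ℝ)) * ((Q ω (j + 1) : ℝ) - Q ω j) :=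
      mul_nonneg (by push_cast; linarith) (by linarith)
    linarith
  have hd : ((y' : ℝ) - x') / n ≤ 2 * p + 1 := by
    rw [div_le_iff₀ hn']
    nlinarith
  have hd0 : 0 ≤ ((y' : ℝ) - x') / n := div_nonneg (by linarith) hn'.le
  have htarget : (n - s) / n * a + s / n * b ≤ line + (2 * p + 1) := by
    have c1 : (n - s) / n * a ≤ (n - s) / n * x' :=
      mul_le_mul_of_nonneg_left ax (div_nonneg (by linarith [hs.2]) hn'.le)
    have c2 : s / n * b ≤ s / n * y' := mul_le_mul_of_nonneg_left bx (div_nonneg hs.1 hn'.le)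
    have c3 : (n - s) / n * (x' : ℝ) + s / n * y' = line + (s - j) * (((y' : ℝ) - x') / n) := by
      rw [hline]; field_simp; ring
    have c4 : (s - j) * (((y' : ℝ) - x') / n) ≤ 1 * (((y' : ℝ) - x') / n) :=
      mul_le_mul_of_nonneg_right (by linarith) hd0
    linarith
  linarith
end

section
/- (Lemma 3.3, modulus of continuity for a single bridge.) Fix p, M, ε, η ∈ (0,∞) and set σ = √(p(1+p)). There exist N3 ∈ ℕ and δ > 0, depending on p, M, ε, η, such that the following holds: for every integer n ≥ N3 and all x, y ∈ ℤ with x ≤ y, |x| ≤ M·n^{1/2} and |y − p·n| ≤ M·n^{1/2}, if Q has law P_Geom^{0,n,x,y} and 𝒬 ∈ C([0,1]) is defined by 𝒬(t) = σ^{-1}·n^{-1/2}·(Q(t·n) − p·t·n), then P( w(𝒬, δ) > ε ) < η. -/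
open MeasureTheory Filter Topology ProbabilityTheory
open scoped ENNReal NNReal

/-- The modulus of continuity `w(h, δ)` of `h` on `[a,b]`. -/
noncomputable def modCont (h : ℝ → ℝ) (a b δ : ℝ) : ℝ :=
  sSup {v : ℝ | ∃ s ∈ Set.Icc a b, ∃ t ∈ Set.Icc a b, |s - t| ≤ δ ∧ v = |h s - h t|}

section ModBridge
open Finset
/-- bracket bound -/
lemma four_ineq (u v : ℝ) : (u+v)^4 ≤ 1000*u^4 + (3/2)*v^4 := by
  have h1 : (u+v)^2 ≤ 11*u^2+(11/10)*v^2 := by nlinarith [sq_nonneg (10*u - v)]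
  have h2 : ((u+v)^2)^2 ≤ (11*u^2+(11/10)*v^2)^2 := by
    apply pow_le_pow_left₀ (sq_nonneg _) h1
  nlinarith [sq_nonneg (11*u^2*5 - (11/10)*v^2), sq_nonneg (u^2), sq_nonneg (v^2)]

lemma mom4_algebra (j n k : ℝ) (hj : 1 ≤ j) (hjn : j ≤ n) :
    let F1 := j*k/n
    let F2 := j*(j+1)*(k*(k-1))/(n*(n+1))
    let F3 := j*(j+1)*(j+2)*(k*(k-1)*(k-2))/(n*(n+1)*(n+2))
    let F4 := j*(j+1)*(j+2)*(j+3)*(k*(k-1)*(k-2)*(k-3))/(n*(n+1)*(n+2)*(n+3))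
    let c := j*k/n
    (F4+6*F3+7*F2+F1) - 4*c*(F3+3*F2+F1) + 6*c^2*(F2+F1) - 4*c^3*F1 + c^4 =
     k*j*(n-j)*(n+k)/(n^2*(n+1)*(n+2)*(n+3)) * (n*(n-1+6*k) + 3*j*(n-j)*(k-2)+6*k^2
       - 3*j*(n-j)*k*(6-k)/n - 18*j*(n-j)*k^2/n^2) := by
  intro F1 F2 F3 F4 c
  have : 0 < n := by linarith
  simp only [F1,F2,F3,F4,c]
  field_simp
  ring
lemma mom4_bound (j n k K : ℝ) (hj : 1 ≤ j) (hjn : j ≤ n) (hk : 0 ≤ k) (hK : k ≤ K * n) (hK0 : 0 ≤ K) :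
     k*j*(n-j)*(n+k)/(n^2*(n+1)*(n+2)*(n+3)) * (n*(n-1+6*k) + 3*j*(n-j)*(k-2)+6*k^2
       - 3*j*(n-j)*k*(6-k)/n - 18*j*(n-j)*k^2/n^2) ≤ K*(1+K)*(1+9*K+9*K^2) * j^2 := by
  have hn : 0 < n := by linarith
  have hnj : 0 ≤ n - j := by linarith
  have h1 : k*j*(n-j)*(n+k)/(n^2*(n+1)*(n+2)*(n+3)) ≤ K*(1+K)*j/n^2 := by
    rw [div_le_div_iff₀ (by positivity) (by positivity)]
    have e1 : k*j*(n-j)*(n+k) ≤ (K*n)*j*n*(n+K*n) := by gcongr; linarith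
    have e2 : n^3 ≤ (n+1)*(n+2)*(n+3) := by nlinarith [sq_nonneg n]
    calc k*j*(n-j)*(n+k) * n^2 ≤ (K*n)*j*n*(n+K*n) * n^2 := by gcongr
      _ = K*(1+K)*j*(n^2* n^3) := by ring
      _ ≤ K*(1+K)*j*(n^2*((n+1)*(n+2)*(n+3))) := by gcongr
      _ = _ := by ring
  have h0 : 0 ≤ k*j*(n-j)*(n+k)/(n^2*(n+1)*(n+2)*(n+3)) := by positivity
  have h2 : (n*(n-1+6*k) + 3*j*(n-j)*(k-2)+6*k^2
       - 3*j*(n-j)*k*(6-k)/n - 18*j*(n-j)*k^2/n^2) ≤ (1+9*K+9*K^2)*j*n^2 := by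
    have e1 : n*(n-1+6*k) ≤ (1+6*K)*j*n^2 := by
      calc n*(n-1+6*k) ≤ n*(n+6*(K*n)) := by gcongr; linarith
        _ = (1+6*K)*1*n^2 := by ring
        _ ≤ _ := by gcongr
    have e2 : 3*j*(n-j)*(k-2) ≤ 3*j*n*(K*n) := by
      calc 3*j*(n-j)*(k-2) ≤ 3*j*(n-j)*(K*n) := by gcongr; linarith
        _ ≤ _ := by gcongr; linarith
    have e3 : 6*k^2 ≤ 6*K^2*j*n^2 := by
      calc 6*k^2 ≤ 6*(K*n)^2 := by gcongr
        _ = 6*K^2*1*n^2 := by ring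
        _ ≤ _ := by gcongr
    have e4 : - (3*j*(n-j)*k*(6-k)/n) ≤ 3*K^2*j*n^2 := by
      rw [← neg_div, div_le_iff₀ hn]
      calc -(3*j*(n-j)*k*(6-k)) = 3*j*(n-j)*k*(k-6) := by ring
        _ ≤ 3*j*n*(K*n)*(K*n) := by
          calc 3*j*(n-j)*k*(k-6) ≤ 3*j*(n-j)*k*(K*n) := by gcongr; linarith
            _ ≤ _ := by gcongr; linarith
        _ = _ := by ring
    have e5 : 0 ≤ 18*j*(n-j)*k^2/n^2 := by positivity
    linarith
  calc _ ≤ k*j*(n-j)*(n+k)/(n^2*(n+1)*(n+2)*(n+3)) * ((1+9*K+9*K^2)*j*n^2) := by gcongr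
    _ ≤ K*(1+K)*j/n^2 * ((1+9*K+9*K^2)*j*n^2) := by gcongr
    _ = _ := by field_simp

lemma card_piA (s : Finset ℕ) (k : ℕ) : (piAntidiag s k).card = Nat.multichoose s.card k := by
  have := Finset.card_finsuppAntidiag_nat_eq_multichoose (s := s) k
  rw [← this, finsuppAntidiag]
  simp

lemma sum_split (I J : Finset ℕ) (hIJ : Disjoint I J) (k : ℕ) (φ : ℕ → ℝ) :
    ∑ f ∈ piAntidiag (I ∪ J) k, φ (∑ i ∈ I, f i) =
    ∑ st ∈ antidiagonal k, (Nat.multichoose I.card st.1 : ℝ) * Nat.multichoose J.card st.2 * φ st.1 := by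
  have hmaps : ∀ f ∈ piAntidiag (I ∪ J) k, (∑ i ∈ I, f i, ∑ i ∈ J, f i) ∈ antidiagonal k := by
    intro f hf
    rw [mem_piAntidiag] at hf
    rw [HasAntidiagonal.mem_antidiagonal, ← hf.1, sum_union hIJ]
  rw [← sum_fiberwise_of_maps_to hmaps]
  refine sum_congr rfl ?_
  rintro ⟨s, t⟩ hst
  have hc : #{f ∈ piAntidiag (I ∪ J) k | (∑ i ∈ I, f i, ∑ i ∈ J, f i) = (s,t)} = 
      #(piAntidiag I s ×ˢ piAntidiag J t) := by
    refine card_nbij' (fun f => (fun i => if i ∈ I then f i else 0, fun i => if i ∈ J then f i else 0))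
      (fun g => g.1 + g.2) ?_ ?_ ?_ ?_
    · intro f hf
      simp only [coe_filter, Set.mem_ofPred_eq, Prod.mk.injEq, mem_piAntidiag, coe_product, Set.mem_prod, mem_coe] at hf ⊢
      obtain ⟨⟨h1, h2⟩, h3, h4⟩ := hf
      refine ⟨⟨?_, ?_⟩, ?_, ?_⟩
      · rw [← h3]; exact sum_congr rfl (fun i hi => by simp [hi])
      · intro i; by_cases hi : i ∈ I <;> simp [hi]
      · rw [← h4]; exact sum_congr rfl (fun i hi => by simp [hi])
      · intro i; by_cases hi : i ∈ J <;> simp [hi]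
    · intro g hg
      simp only [coe_filter, Set.mem_ofPred_eq, Prod.mk.injEq, mem_piAntidiag, coe_product, Set.mem_prod, mem_coe] at hg ⊢
      obtain ⟨⟨h1, h2⟩, h3, h4⟩ := hg
      rw [HasAntidiagonal.mem_antidiagonal] at hst
      have a1 : ∑ i ∈ I, (g.1 + g.2) i = s := by
        rw [← h1]; refine sum_congr rfl (fun i hi => ?_)
        have : g.2 i = 0 := by
          by_contra hne; exact (disjoint_left.1 hIJ hi) (h4 i hne)
        simp [this]
      have a2 : ∑ i ∈ J, (g.1 + g.2) i = t := by
        rw [← h3]; refine sum_congr rfl (fun i hi => ?_)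
        have : g.1 i = 0 := by
          by_contra hne; exact (disjoint_right.1 hIJ hi) (h2 i hne)
        simp [this]
      refine ⟨⟨?_, ?_⟩, a1, a2⟩
      · rw [sum_union hIJ, a1, a2]; exact hst
      · intro i hi
        rw [mem_union]
        by_cases h : g.1 i = 0
        · right; apply h4; intro h'; simp [h, h'] at hi
        · left; exact h2 i h
    · intro f hf
      simp only [coe_filter, Set.mem_ofPred_eq, Prod.mk.injEq, mem_piAntidiag, mem_union] at hf
      funext i
      obtain ⟨⟨h1, h2⟩, h3, h4⟩ := hf
      have := h2 i
      have hd : i ∈ I → i ∉ J := fun h => disjoint_left.1 hIJ h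
      by_cases hi : i ∈ I <;> by_cases hj : i ∈ J <;> simp_all
    · intro g hg
      simp only [mem_piAntidiag, coe_product, Set.mem_prod, mem_coe] at hg 
      obtain ⟨⟨h1, h2⟩, h3, h4⟩ := hg
      ext i
      · have hd : i ∈ I → i ∉ J := fun h => disjoint_left.1 hIJ h
        have := h2 i; have := h4 i
        by_cases hi : i ∈ I <;> by_cases hj : i ∈ J <;> simp_all
      · have hd : i ∈ I → i ∉ J := fun h => disjoint_left.1 hIJ h
        have := h2 i; have := h4 i
        by_cases hi : i ∈ I <;> by_cases hj : i ∈ J <;> simp_all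
  rw [sum_congr rfl (g := fun _ => φ s)]
  · rw [sum_const, hc, card_product, card_piA, card_piA]; simp
  · intro f hf
    simp only [mem_filter, Prod.mk.injEq] at hf
    rw [hf.2.1]

lemma vander (a b k : ℕ) : ∑ st ∈ antidiagonal k, (Nat.multichoose a st.1 : ℝ) * Nat.multichoose b st.2
    = Nat.multichoose (a+b) k := by
  have h := sum_split (range a) (Ico a (a+b)) (by
    rw [disjoint_left]; intro i; simp; omega) k (fun _ => 1)
  have hc : (range a ∪ Ico a (a+b)).card = a + b := by
    rw [card_union_of_disjoint (by rw [disjoint_left]; intro i; simp; omega)]; simp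
  simp only [sum_const, card_piA, hc] at h
  simp at h
  exact h.symm

lemma mc_step_s10 (j s : ℕ) : ((s:ℝ)+1) * Nat.multichoose j (s+1) = j * Nat.multichoose (j+1) s := by
  rcases j with _ | j
  · simp
  · rw [Nat.multichoose_eq, Nat.multichoose_eq]
    have := Nat.add_one_mul_choose_eq (j+1+s) s
    have e1 : j + 1 + (s+1) - 1 = j+1+s := by omega
    have e2 : j + 1 + 1 + s - 1 = j+1+s := by omega
    rw [e1, e2]
    have := Nat.choose_succ_right_eq (j+1+s) s
    have e3 : j+1+s-s = j+1 := by omega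
    rw [e3] at this
    have h : ((j+1+s).choose (s+1) : ℝ) * (s+1) = (j+1+s).choose s * (j+1) := by exact_mod_cast this
    push_cast
    linarith

/-- sum against weights -/
noncomputable def WS (j l k : ℕ) (φ : ℕ → ℝ) : ℝ := 
  ∑ st ∈ antidiagonal k, (Nat.multichoose j st.1 : ℝ) * Nat.multichoose l st.2 * φ st.1

lemma WS_step (j l k : ℕ) (φ : ℕ → ℝ) : 
    WS j l (k+1) (fun s => s * φ (s - 1)) = j * WS (j+1) l k φ := by
  unfold WS
  rw [Nat.antidiagonal_succ, sum_cons, sum_map, mul_sum]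
  simp
  refine sum_congr rfl (fun st _ => ?_)
  have := mc_step_s10 j st.1
  linear_combination (Nat.multichoose l st.2 * φ st.1 : ℝ) * this

lemma WS_step0 (j l : ℕ) (φ : ℕ → ℝ) : 
    WS j l 0 (fun s => s * φ (s - 1)) = 0 := by
  unfold WS
  simp

/-- factorial moments -/
lemma WS_desc (r : ℕ) : ∀ (j l k : ℕ), 0 < j + l → WS j l k (fun s => (s.descFactorial r : ℝ)) * (j+l).ascFactorial r
    = j.ascFactorial r * k.descFactorial r * Nat.multichoose (j+l) k := by
  induction r with
  | zero => intro j l k _; simp [WS, vander]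
  | succ r ih =>
    intro j l k hjl
    have hφ : (fun s : ℕ => (s.descFactorial (r+1) : ℝ)) = fun s : ℕ => (s:ℝ) * (fun u : ℕ => (u.descFactorial r : ℝ)) (s-1) := by
      funext s
      rcases s with _ | s
      · simp
      · rw [Nat.succ_descFactorial_succ]; push_cast; simp
    rw [hφ]
    rcases k with _ | k
    · rw [WS_step0 j l (fun u : ℕ => (u.descFactorial r : ℝ))]; simp
    · rw [WS_step j l k (fun u : ℕ => (u.descFactorial r : ℝ))]
      have h := ih (j+1) l k (by omega)
      have e : j + 1 + l = j + l + 1 := by omega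
      rw [e] at h
      have h2 := mc_step_s10 (j+l) k
      have a1 : (((j+l).ascFactorial (r+1) : ℕ) : ℝ) = (j+l) * (j+l+1).ascFactorial r := by
        have := Nat.succ_ascFactorial (j+l) r
        rw [Nat.ascFactorial_succ]; rw [← this]; push_cast; ring
      have a2 : ((j.ascFactorial (r+1) : ℕ) : ℝ) = j * (j+1).ascFactorial r := by
        have := Nat.succ_ascFactorial j r
        rw [Nat.ascFactorial_succ]; rw [← this]; push_cast; ring
      rw [a1, a2, Nat.succ_descFactorial_succ]
      push_cast at h2 ⊢
      linear_combination (j:ℝ) * (j+l) * h - (j:ℝ) * (j+1).ascFactorial r * k.descFactorial r * h2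

lemma WS_mom4 (j l k : ℕ) (hj : 0 < j) (K : ℝ) (hK0 : 0 ≤ K) (hK : (k:ℝ) ≤ K * (j+l:ℕ)) :
    WS j l k (fun s => ((s:ℝ) - j * k / (j+l:ℕ))^4) ≤
      K*(1+K)*(1+9*K+9*K^2) * (j:ℝ)^2 * Nat.multichoose (j+l) k := by
  set n := j + l with hn
  set c : ℝ := j * k / (n:ℕ) with hc
  have hn0 : 0 < n := by omega
  have hnR : (0:ℝ) < n := by exact_mod_cast hn0
  set m : ℝ := (Nat.multichoose n k : ℝ) with hm
  have d : ∀ r, WS j l k (fun s => (s.descFactorial r : ℝ)) 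
      = j.ascFactorial r * k.descFactorial r / n.ascFactorial r * m := by
    intro r
    have h := WS_desc r j l k hn0
    have : (0:ℝ) < n.ascFactorial r := by
      have : 0 < n.ascFactorial r := by
        obtain ⟨n', hn'⟩ : ∃ n', n = n' + 1 := ⟨n-1, by omega⟩
        rw [hn']
        exact Nat.ascFactorial_pos _ _
      exact_mod_cast this
    field_simp
    rw [← hn] at h
    linarith
  have hdesc : ∀ s : ℕ, ((s.descFactorial 1 : ℕ):ℝ) = s ∧ ((s.descFactorial 2 : ℕ) : ℝ) = s*(s-1) ∧
      ((s.descFactorial 3 : ℕ) : ℝ) = s*(s-1)*(s-2) ∧ ((s.descFactorial 4 : ℕ) : ℝ) = s*(s-1)*(s-2)*(s-3) := by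
    intro s
    rcases s with _ | _ | _ | s
    · simp [Nat.descFactorial]
    · simp [Nat.descFactorial]
    · simp [Nat.descFactorial]; norm_num
    · simp [Nat.descFactorial]
      refine ⟨?_, ?_, ?_⟩ <;> ring
  have hasc : ∀ s : ℕ, ((s.ascFactorial 1 : ℕ):ℝ) = s ∧ ((s.ascFactorial 2 : ℕ) : ℝ) = s*(s+1) ∧
      ((s.ascFactorial 3 : ℕ) : ℝ) = s*(s+1)*(s+2) ∧ ((s.ascFactorial 4 : ℕ) : ℝ) = s*(s+1)*(s+2)*(s+3) := by
    intro s
    simp [Nat.ascFactorial]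
    refine ⟨?_, ?_, ?_⟩ <;> ring
  have key : WS j l k (fun s => ((s:ℝ) - c)^4) = 
      (WS j l k (fun s => (s.descFactorial 4 : ℝ)) + 6 * WS j l k (fun s => (s.descFactorial 3 : ℝ))
       + 7 * WS j l k (fun s => (s.descFactorial 2 : ℝ)) + WS j l k (fun s => (s.descFactorial 1 : ℝ)))
      - 4*c*(WS j l k (fun s => (s.descFactorial 3 : ℝ)) + 3 * WS j l k (fun s => (s.descFactorial 2 : ℝ))
        + WS j l k (fun s => (s.descFactorial 1 : ℝ)))
      + 6*c^2*(WS j l k (fun s => (s.descFactorial 2 : ℝ))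
        + WS j l k (fun s => (s.descFactorial 1 : ℝ)))
      - 4*c^3*(WS j l k (fun s => (s.descFactorial 1 : ℝ))) + c^4 * WS j l k (fun s => (s.descFactorial 0 : ℝ)) := by
    unfold WS
    simp only [mul_sum, ← sum_add_distrib, ← sum_sub_distrib]
    refine sum_congr rfl (fun st _ => ?_)
    obtain ⟨h1, h2, h3, h4⟩ := hdesc st.1
    rw [h1, h2, h3, h4]
    simp
    ring
  rw [key, d, d, d, d, d]
  obtain ⟨h1, h2, h3, h4⟩ := hdesc k
  rw [h1, h2, h3, h4]
  obtain ⟨h1, h2, h3, h4⟩ := hasc j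
  rw [h1, h2, h3, h4]
  obtain ⟨h1, h2, h3, h4⟩ := hasc n
  rw [h1, h2, h3, h4]
  simp only [Nat.ascFactorial_zero, Nat.descFactorial_zero]
  have hj1 : (1:ℝ) ≤ j := by exact_mod_cast hj
  have hjn : (j:ℝ) ≤ n := by exact_mod_cast (by omega : j ≤ n)
  have A := mom4_algebra j n k hj1 hjn
  have B := mom4_bound j n k K hj1 hjn (by positivity) hK hK0
  simp only at A
  rw [← A, ← hc] at B
  have hm0 : 0 ≤ m := by positivity
  have := mul_le_mul_of_nonneg_right B hm0
  refine le_trans (le_of_eq ?_) this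
  push_cast
  ring

/-- centred partial sums -/
noncomputable def Xf (n k : ℕ) (f : ℕ → ℕ) (i : ℕ) : ℝ :=
  (∑ l ∈ range i, (f l : ℝ)) - (min i n : ℕ) * k / n

lemma Xf_mom4 (n k : ℕ) (hn : 0 < n) (K : ℝ) (hK0 : 0 ≤ K) (hK : (k:ℝ) ≤ K * n) (a b : ℕ) (hab : a ≤ b) :
    ∑ f ∈ piAntidiag (range n) k, (Xf n k f b - Xf n k f a)^4 ≤ 
      K*(1+K)*(1+9*K+9*K^2) * ((b:ℝ)-a)^2 * (piAntidiag (range n) k).card := by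
  set I := Ico (min a n) (min b n) with hI
  set J := range n \ I with hJ
  have hsub : I ⊆ range n := by intro i; simp [hI]
  have hun : I ∪ J = range n := by rw [hJ]; exact union_sdiff_of_subset hsub
  have hIJ : Disjoint I J := disjoint_sdiff
  have hcI : I.card = min b n - min a n := by simp [hI]
  have hcn : I.card + J.card = n := by rw [← card_union_of_disjoint hIJ, hun, card_range]
  have hX : ∀ f ∈ piAntidiag (range n) k, (Xf n k f b - Xf n k f a)^4 = 
      (fun s : ℕ => ((s:ℝ) - I.card * k / n)^4) (∑ i ∈ I, f i) := by
    intro f hf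
    rw [mem_piAntidiag] at hf
    have hm : ∀ c, ∑ l ∈ range c, (f l : ℝ) = ∑ l ∈ range (min c n), (f l:ℝ) := by
      intro c
      symm
      apply sum_subset
      · intro i; simp; omega
      · intro i h1 h2
        have : f i = 0 := by
          by_contra h; have := hf.2 i h; simp at *; omega
        simp [this]
    have hs : ∑ i ∈ I, (f i : ℝ) = ∑ l ∈ range b, (f l:ℝ) - ∑ l ∈ range a, (f l:ℝ) := by
      rw [hm a, hm b, hI, sum_Ico_eq_sub _ (by omega)]
    simp only [Xf]
    push_cast
    rw [hs, hcI, Nat.cast_sub (by omega)]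
    push_cast
    ring
  rw [sum_congr rfl hX]
  conv_lhs => rw [← hun]
  rw [sum_split I J hIJ k (fun s : ℕ => ((s:ℝ) - I.card * k / n)^4)]
  rcases Nat.eq_zero_or_pos I.card with h0 | hpos
  · have : ∀ st ∈ HasAntidiagonal.antidiagonal k, ((Nat.multichoose I.card st.1 : ℝ) * Nat.multichoose J.card st.2 * 
      (fun s : ℕ => ((s:ℝ) - I.card * k / n)^4) st.1) = 0 := by
      rintro ⟨s, t⟩ _
      rw [h0]
      rcases s with _ | s <;> simp
    rw [sum_eq_zero this]
    positivity
  · have h := WS_mom4 I.card J.card k hpos K hK0 (by rw [hcn]; exact hK)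
    rw [hcn] at h
    unfold WS at h
    rw [card_piA, card_range]
    refine h.trans ?_
    gcongr
    have : I.card + a ≤ b := by omega
    have : (I.card:ℝ) + a ≤ b := by exact_mod_cast this
    linarith

/-- chaining functional -/
noncomputable def M4 (X : ℕ → ℝ) : ℕ → ℕ → ℝ
  | 0, a => (X (a+1) - X a)^4
  | q+1, a => 1000*(X (a+2^q) - X a)^4 + 3/2*(M4 X q a + M4 X q (a+2^q))

lemma M4_nonneg (X : ℕ → ℝ) : ∀ q a, 0 ≤ M4 X q a := by
  intro q
  induction q with
  | zero => intro a; simp only [M4]; positivity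
  | succ q ih =>
    intro a
    have := ih a
    have := ih (a+2^q)
    simp only [M4]
    positivity

lemma M4_dom (X : ℕ → ℝ) : ∀ q a i, i ≤ 2^q → (X (a+i) - X a)^4 ≤ M4 X q a := by
  intro q
  induction q with
  | zero =>
    intro a i hi
    simp only [M4]
    simp at hi
    interval_cases i
    · simp; positivity
    · simp
  | succ q ih =>
    intro a i hi
    simp only [M4]
    have n1 := M4_nonneg X q a
    have n2 := M4_nonneg X q (a+2^q)
    rcases le_total i (2^q) with h | h
    · have := ih a i h
      have : 0 ≤ (X (a+2^q) - X a)^4 := by positivity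
      linarith
    · obtain ⟨i', rfl⟩ := Nat.exists_eq_add_of_le h
      have h1 := ih (a+2^q) i' (by rw [pow_succ] at hi; omega)
      have h2 := four_ineq (X (a+2^q) - X a) (X (a+2^q+i') - X (a+2^q))
      have e : X (a+2^q) - X a + (X (a+2^q+i') - X (a+2^q)) = X (a + (2^q+i')) - X a := by
        rw [← add_assoc]; ring
      rw [e] at h2
      linarith

lemma M4_sum {α : Type*} (A : Finset α) (X : α → ℕ → ℝ) (C : ℝ) (hC : 0 ≤ C)
    (h : ∀ a b, a ≤ b → ∑ f ∈ A, (X f b - X f a)^4 ≤ C * ((b:ℝ)-a)^2 * A.card) :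
    ∀ q a, ∑ f ∈ A, M4 (X f) q a ≤ 1000*C*4^q * A.card := by
  intro q
  induction q with
  | zero =>
    intro a
    simp only [M4]
    have := h a (a+1) (by omega)
    push_cast at this
    have h2 : 0 ≤ C * A.card := by positivity
    refine this.trans ?_
    ring_nf
    nlinarith
  | succ q ih =>
    intro a
    simp only [M4, sum_add_distrib, ← mul_sum]
    have h1 := h a (a+2^q) (Nat.le_add_right _ _)
    have h2 := ih a
    have h3 := ih (a+2^q)
    push_cast at h1
    have e : ((a:ℝ) + 2^q - a)^2 = 4^q := by
      rw [add_sub_cancel_left, ← pow_mul, mul_comm, pow_mul]; norm_num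
    rw [e] at h1
    rw [pow_succ]
    linarith

lemma block_good (X : ℕ → ℝ) (n q : ℕ) (Λ : ℝ) (hΛ : 0 ≤ Λ)
    (hg : ∀ c ∈ range (n / 2^q + 2), M4 X q (c*2^q) ≤ Λ^4) (a b : ℕ) (hab : a ≤ b) (han : a ≤ n)
    (hb : b ≤ a + 2^q) : |X b - X a| ≤ 3*Λ := by
  set m := 2^q with hm
  have hm0 : 0 < m := by positivity
  have key : ∀ c ∈ range (n/m+2), ∀ i, i ≤ m → |X (c*m+i) - X (c*m)| ≤ Λ := by
    intro c hc i hi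
    have h1 := (M4_dom X q (c*m) i hi).trans (hg c hc)
    rw [← abs_of_nonneg hΛ]
    have : (|X (c*m+i) - X (c*m)|)^4 ≤ (|Λ|)^4 := by
      rw [Even.pow_abs (by decide), Even.pow_abs (by decide)]; exact h1
    exact (pow_le_pow_iff_left₀ (abs_nonneg _) (abs_nonneg _) (by norm_num)).1 this
  set c := a / m with hc
  have hdm : c * m + a % m = a := by rw [mul_comm]; exact Nat.div_add_mod a m
  have hlt : a % m < m := Nat.mod_lt _ hm0
  have hcn : c ≤ n / m := Nat.div_le_div_right han
  have k1 := key c (by simp; omega) (a % m) hlt.le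
  rw [hdm] at k1
  by_cases hbc : b ≤ c*m + m
  · obtain ⟨i, hi⟩ : ∃ i, b = c*m + i := ⟨b - c*m, by omega⟩
    have k2 := key c (by simp; omega) i (by omega)
    rw [← hi] at k2
    rw [abs_le] at *
    constructor <;> linarith [k1.1, k1.2, k2.1, k2.2]
  · have k2 := key c (by simp; omega) m le_rfl
    have e : (c+1)*m = c*m + m := by ring
    obtain ⟨i, hi⟩ : ∃ i, b = (c+1)*m + i := ⟨b - (c+1)*m, by omega⟩
    have k3 := key (c+1) (by simp; omega) i (by omega)
    rw [← hi, e] at k3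
    rw [abs_le] at *
    constructor <;> linarith [k1.1, k1.2, k2.1, k2.2, k3.1, k3.2]

/-- path from increments -/
def Lf (x : ℤ) (f : ℕ → ℕ) (j : ℤ) : ℤ := x + ∑ i ∈ range j.toNat, (f i : ℤ)

/-- piecewise linear version -/
noncomputable def Xt (X : ℕ → ℝ) (u : ℝ) : ℝ := X ⌊u⌋₊ + (u - ⌊u⌋₊) * (X (⌊u⌋₊+1) - X ⌊u⌋₊)

lemma interp_Lf (n k : ℕ) (hn : 0 < n) (x : ℤ) (f : ℕ → ℕ) (u : ℝ) (hu0 : 0 ≤ u) (hun : u ≤ n) :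
    interpZ (Lf x f) u = x + Xt (Xf n k f) u + u * k / n := by
  have hnR : (0:ℝ) < n := by exact_mod_cast hn
  have hfl : ⌊u⌋ = (⌊u⌋₊ : ℤ) := (Int.natCast_floor_eq_floor hu0).symm
  have han : ⌊u⌋₊ ≤ n := Nat.floor_le_of_le hun
  have hle := Nat.floor_le hu0
  unfold interpZ interp Xt
  rw [hfl]
  set a := ⌊u⌋₊ with ha
  have e0 : ((Lf x f (a:ℤ) : ℤ) : ℝ) = x + ∑ l ∈ range a, (f l:ℝ) := by simp [Lf]
  have e1 : ((Lf x f ((a:ℤ)+1) : ℤ) : ℝ) = x + ∑ l ∈ range a, (f l:ℝ) + f a := by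
    have : ((a:ℤ)+1).toNat = a+1 := by omega
    simp [Lf, this, sum_range_succ]; ring
  beta_reduce
  rw [e0, e1, Int.cast_natCast]
  simp only [Xf, sum_range_succ]
  rcases Nat.lt_or_ge a n with h | h
  · rw [min_eq_left h.le, min_eq_left (by omega : a+1 ≤ n)]
    push_cast
    field_simp
    ring
  · have : a = n := le_antisymm han h
    have hua : u = n := by rw [this] at hle; linarith
    rw [this, hua]
    simp
    field_simp
    ring

lemma Xt_bound (X : ℕ → ℝ) (n m : ℕ) (hm : 1 ≤ m) (Λ : ℝ)
    (hg : ∀ a b, a ≤ b → a ≤ n → b ≤ a + m → |X b - X a| ≤ 3*Λ) (u v : ℝ) (hu : 0 ≤ u) (huv : u ≤ v)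
    (hv : v ≤ n) (hd : v - u ≤ m) : |Xt X v - Xt X u| ≤ 9*Λ := by
  have one : ∀ w : ℝ, 0 ≤ w → w ≤ n → |Xt X w - X ⌊w⌋₊| ≤ 3*Λ := by
    intro w hw hwn
    have h1 := hg ⌊w⌋₊ (⌊w⌋₊+1) (by omega) (Nat.floor_le_of_le hwn) (by omega)
    have h2 := Nat.floor_le hw
    have h3 := Nat.lt_floor_add_one w
    unfold Xt
    rw [add_sub_cancel_left, abs_mul, abs_of_nonneg (by linarith)]
    nlinarith [abs_nonneg (X (⌊w⌋₊+1) - X ⌊w⌋₊)]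
  have h1 := one u hu (by linarith)
  have h2 := one v (by linarith) hv
  have h3 : ⌊v⌋₊ ≤ ⌊u⌋₊ + m := by
    have a1 := Nat.floor_le (by linarith : 0 ≤ v)
    have a2 := Nat.lt_floor_add_one u
    have : (⌊v⌋₊ : ℝ) < ((⌊u⌋₊ + m + 1 : ℕ) : ℝ) := by push_cast; linarith
    have : ⌊v⌋₊ < ⌊u⌋₊ + m + 1 := by exact_mod_cast this
    omega
  have h4 := hg ⌊u⌋₊ ⌊v⌋₊ (Nat.floor_mono huv) (Nat.floor_le_of_le (by linarith)) h3
  rw [abs_le] at *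
  constructor <;> linarith [h1.1, h1.2, h2.1, h2.2, h4.1, h4.2]

lemma modCont_bound (n k m : ℕ) (hn : 0 < n) (hm : 1 ≤ m) (x : ℤ) (f : ℕ → ℕ) (p δ Λ D r ε : ℝ)
    (hr : 0 ≤ r) (hδm : δ * n ≤ m) (hD : |(k:ℝ) / n - p| ≤ D) (hD0 : 0 ≤ D) (hε : 0 ≤ ε)
    (hg : ∀ a b, a ≤ b → a ≤ n → b ≤ a + m → |Xf n k f b - Xf n k f a| ≤ 3*Λ)
    (hfin : r * (9*Λ + D * (δ * n)) ≤ ε) :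
    modCont (fun t => r * (interpZ (Lf x f) (t * n) - p * t * n)) 0 1 δ ≤ ε := by
  have hnR : (0:ℝ) < n := by exact_mod_cast hn
  have main : ∀ s t : ℝ, 0 ≤ s → s ≤ t → t ≤ 1 → t - s ≤ δ → 
     |r * (interpZ (Lf x f) (t * n) - p * t * n) - r * (interpZ (Lf x f) (s * n) - p * s * n)| ≤ ε := by
    intro s t hs hst ht hd
    have hdn : t * n - s * n ≤ δ * n := by rw [← sub_mul]; gcongr
    have hb := Xt_bound (Xf n k f) n m hm Λ hg (s*n) (t*n) (by positivity) (by gcongr) (by nlinarith)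
      (hdn.trans hδm)
    rw [interp_Lf n k hn x f (t*n) (by nlinarith) (by nlinarith), 
      interp_Lf n k hn x f (s*n) (by positivity) (by nlinarith), ← mul_sub, abs_mul, abs_of_nonneg hr]
    refine le_trans ?_ hfin
    gcongr
    have e : (x + Xt (Xf n k f) (t*n) + t*n*k/n - p*t*n) - (x + Xt (Xf n k f) (s*n) + s*n*k/n - p*s*n) = 
      (Xt (Xf n k f) (t*n) - Xt (Xf n k f) (s*n)) + ((k:ℝ)/n - p) * (t*n - s*n) := by
      field_simp; ring
    rw [e]
    refine (abs_add_le _ _).trans (add_le_add hb ?_)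
    rw [abs_mul]
    have : 0 ≤ t*n - s*n := by rw [← sub_mul]; exact mul_nonneg (by linarith) hnR.le
    rw [abs_of_nonneg this]
    gcongr
  refine Real.sSup_le ?_ hε
  rintro v ⟨s, hs, t, ht, hd, rfl⟩
  rcases le_total s t with h | h
  · rw [abs_sub_comm]
    exact main s t hs.1 h ht.2 (by rw [abs_sub_comm] at hd; exact (le_abs_self _).trans hd)
  · exact main t s ht.1 h hs.2 ((le_abs_self _).trans hd)

lemma Omega_eq (n k : ℕ) (x y : ℤ) (hk : (k:ℤ) = y - x) :
    OmegaPath 0 n x y = (Lf x) '' (piAntidiag (range n) k : Finset (ℕ → ℕ)) := by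
  ext L
  constructor
  · rintro ⟨⟨h1, h2, h3⟩, hx, hy⟩
    set f : ℕ → ℕ := fun i => (L (i+1) - L i).toNat with hf
    have hinc : ∀ i : ℕ, (f i : ℤ) = L (i+1) - L i := by
      intro i
      rw [hf]
      apply Int.toNat_of_nonneg
      rcases lt_or_ge i n with h | h
      · have := h1 i (by omega) (by omega); omega
      · rw [h3 i (by omega), h3 (i+1) (by omega)]; simp
    have hsum : ∀ i : ℕ, ∑ l ∈ range i, (f l : ℤ) = L i - x := by
      intro i
      induction i with
      | zero => simp [hx]
      | succ i ih => rw [sum_range_succ, ih, hinc]; push_cast; ring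
    refine ⟨f, ?_, ?_⟩
    · rw [mem_coe, mem_piAntidiag]
      constructor
      · have := hsum n
        rw [hy, ← hk] at this
        exact_mod_cast this
      · intro i hi
        by_contra hc
        apply hi
        simp at hc
        have := hinc i
        rw [h3 i (by omega), h3 (i+1) (by omega)] at this
        omega
    · funext j
      rcases le_total 0 j with h | h
      · obtain ⟨i, rfl⟩ := Int.eq_ofNat_of_zero_le h
        simp only [Lf, Int.toNat_natCast, hsum]; ring
      · simp only [Lf, Int.toNat_of_nonpos h, h2 j h, hx]; simp
  · rintro ⟨f, hf, rfl⟩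
    rw [mem_coe, mem_piAntidiag] at hf
    have hn : Lf x f n = y := by
      simp only [Lf, Int.toNat_natCast]
      have : ((∑ i ∈ range n, f i : ℕ) : ℤ) = k := by exact_mod_cast hf.1
      push_cast at this
      omega
    refine ⟨⟨?_, ?_, ?_⟩, ?_, hn⟩
    · intro j h0 _
      have : (j+1).toNat = j.toNat + 1 := by omega
      simp [Lf, this, sum_range_succ]
    · intro s hs
      simp [Lf, Int.toNat_of_nonpos hs]
    · intro s hs
      simp only [Lf, Int.toNat_natCast]
      congr 1
      symm
      apply sum_subset
      · intro i; simp; omega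
      · intro i _ h2
        have : f i = 0 := by by_contra h; exact h2 (hf.2 i h)
        simp [this]
    · simp [Lf]

lemma Lf_inj (x : ℤ) : Function.Injective (Lf x) := by
  intro f g h
  funext i
  have h1 := congrFun h i
  have h2 := congrFun h (i+1)
  have : ((i:ℤ)+1).toNat = i + 1 := by omega
  simp [Lf, this, sum_range_succ] at h1 h2
  omega

lemma prob_bound {Ω : Type} [MeasurableSpace Ω] (P : Measure Ω) (n k : ℕ) (x y : ℤ) (hk : (k:ℤ) = y - x)
    (Q : Ω → ℤ → ℤ) (hQ : UniformOn P Q (OmegaPath 0 n x y)) (bad : (ℤ → ℤ) → Prop)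
    (B : Finset (ℕ → ℕ)) (hB : ∀ f ∈ piAntidiag (range n) k, bad (Lf x f) → f ∈ B)
    (hBs : B ⊆ piAntidiag (range n) k) :
    P {ω | bad (Q ω)} ≤ (B.card : ℝ≥0∞) / (piAntidiag (range n) k).card := by
  obtain ⟨h1, h2⟩ := hQ
  have hcard : Nat.card (OmegaPath 0 n x y) = (piAntidiag (range n) k).card := by
    rw [Omega_eq n k x y hk, Nat.card_image_of_injective (Lf_inj x)]
    exact Nat.card_eq_card_toFinset _ |>.trans (by rw [toFinset_coe])
  rw [hcard] at h2
  have hsub : {ω | bad (Q ω)} ⊆ ⋃ f ∈ B, {ω | Q ω = Lf x f} := by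
    intro ω hω
    have := h1 ω
    rw [Omega_eq n k x y hk] at this
    obtain ⟨f, hf, hfQ⟩ := this
    simp only [Set.mem_iUnion]
    refine ⟨f, hB f hf ?_, hfQ.symm⟩
    rw [hfQ]; exact hω
  calc P {ω | bad (Q ω)} ≤ P (⋃ f ∈ B, {ω | Q ω = Lf x f}) := measure_mono hsub
    _ ≤ ∑ f ∈ B, P {ω | Q ω = Lf x f} := measure_biUnion_finset_le _ _
    _ = ∑ f ∈ B, ((piAntidiag (range n) k).card : ℝ≥0∞)⁻¹ := by
      refine sum_congr rfl (fun f hf => h2 _ ?_)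
      rw [Omega_eq n k x y hk]
      exact ⟨f, hBs hf, rfl⟩
    _ = _ := by rw [sum_const, nsmul_eq_mul, div_eq_mul_inv]

lemma bad_count {α : Type*} (A : Finset α) (X : α → ℕ → ℝ) (C : ℝ) (hC : 0 ≤ C)
    (h : ∀ a b, a ≤ b → ∑ f ∈ A, (X f b - X f a)^4 ≤ C * ((b:ℝ)-a)^2 * A.card)
    (n q : ℕ) (Λ : ℝ) [DecidablePred fun f => ∃ c ∈ range (n / 2^q + 2), Λ^4 < M4 (X f) q (c*2^q)] :
    ((A.filter (fun f => ∃ c ∈ range (n / 2^q + 2), Λ^4 < M4 (X f) q (c*2^q))).card : ℝ) * Λ^4 ≤ 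
      ((n / 2^q : ℕ) + 2) * (1000*C*4^q * A.card) := by
  set B := A.filter (fun f => ∃ c ∈ range (n / 2^q + 2), Λ^4 < M4 (X f) q (c*2^q)) with hB
  calc (B.card : ℝ) * Λ^4 = ∑ f ∈ B, Λ^4 := by simp
    _ ≤ ∑ f ∈ B, ∑ c ∈ range (n / 2^q + 2), M4 (X f) q (c*2^q) := by
      refine sum_le_sum (fun f hf => ?_)
      obtain ⟨_, c, hc, hlt⟩ := mem_filter.1 hf
      exact hlt.le.trans (single_le_sum (f := fun c => M4 (X f) q (c*2^q)) (fun i _ => M4_nonneg _ _ _) hc)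
    _ ≤ ∑ f ∈ A, ∑ c ∈ range (n / 2^q + 2), M4 (X f) q (c*2^q) := by
      refine sum_le_sum_of_subset_of_nonneg (filter_subset _ _) (fun f _ _ => sum_nonneg fun i _ => M4_nonneg _ _ _)
    _ = ∑ c ∈ range (n / 2^q + 2), ∑ f ∈ A, M4 (X f) q (c*2^q) := sum_comm
    _ ≤ ∑ c ∈ range (n / 2^q + 2), (1000*C*4^q * A.card) := sum_le_sum (fun c _ => M4_sum A X C hC h q _)
    _ = _ := by simp

end ModBridge

/-- (Lemma 3.3, modulus of continuity for a single bridge.) A diffusively rescaled uniform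
geometric random walk bridge has a well-behaved modulus of continuity. -/
theorem modulus_single_bridge
    (p M ε η : ℝ) (hp : 0 < p) (hM : 0 < M) (hε : 0 < ε) (hη : 0 < η) :
    ∃ (N3 : ℕ) (δ : ℝ), 0 < δ ∧
      ∀ n : ℕ, N3 ≤ n → ∀ x y : ℤ, x ≤ y →
        |(x : ℝ)| ≤ M * Real.sqrt n → |(y : ℝ) - p * n| ≤ M * Real.sqrt n →
        ∀ (Ω : Type) (_ : MeasurableSpace Ω) (P : Measure Ω), IsProbabilityMeasure P →
        ∀ Q : Ω → ℤ → ℤ, UniformOn P Q (OmegaPath 0 n x y) →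
          P {ω | ε < modCont (fun t => (Real.sqrt (p * (1 + p)))⁻¹ * (Real.sqrt n)⁻¹ *
              (interpZ (Q ω) (t * n) - p * t * n)) 0 1 δ} < ENNReal.ofReal η := by
  classical
  set σ := Real.sqrt (p * (1 + p)) with hσdef
  have hσ : 0 < σ := Real.sqrt_pos.2 (by positivity)
  set K : ℝ := p + 2 * M with hK
  have hK0 : 0 < K := by positivity
  set C : ℝ := K*(1+K)*(1+9*K+9*K^2) with hC
  have hC0 : 0 < C := by positivity
  set lam : ℝ := ε * σ / 18 with hlam
  have hlam0 : 0 < lam := by positivity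
  obtain ⟨δ, hδ0, hδ1, hδ2, hδ3⟩ : ∃ δ : ℝ, 0 < δ ∧ δ ≤ 1 ∧ δ ≤ ε * σ / (4 * M) ∧
      δ ≤ η * lam^4 / (20000 * C) :=
    ⟨min 1 (min (ε * σ / (4 * M)) (η * lam^4 / (20000 * C))), by positivity, min_le_left _ _,
      (min_le_right _ _).trans (min_le_left _ _), (min_le_right _ _).trans (min_le_right _ _)⟩
  refine ⟨⌈1/δ⌉₊, δ, hδ0, ?_⟩
  intro n hn x y hxy hx hy Ω _ P _ Q hQ
  have hnδ : 1 / δ ≤ n := (Nat.le_ceil _).trans (by exact_mod_cast hn)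
  have hnR : (0:ℝ) < n := lt_of_lt_of_le (by positivity) hnδ
  have hn0 : 0 < n := by exact_mod_cast hnR
  have hn1 : (1:ℝ) ≤ n := by exact_mod_cast hn0
  have hδn : 1 ≤ δ * n := by rw [div_le_iff₀ hδ0] at hnδ; linarith
  set R := Real.sqrt n with hR
  have hR0 : 0 < R := Real.sqrt_pos.2 hnR
  have hRR : R * R = n := Real.mul_self_sqrt hnR.le
  have hRn : R ≤ n := by
    have : 1 ≤ R := Real.one_le_sqrt.2 hn1
    nlinarith
  obtain ⟨k, hk⟩ : ∃ k : ℕ, (k:ℤ) = y - x := ⟨(y-x).toNat, Int.toNat_of_nonneg (by omega)⟩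
  have hkR : (k:ℝ) = y - x := by exact_mod_cast hk
  have hkd : |(k:ℝ) - p * n| ≤ 2 * M * R := by
    rw [abs_le] at *
    constructor <;> linarith [hx.1, hx.2, hy.1, hy.2]
  have hkK : (k:ℝ) ≤ K * n := by
    have h1 := (abs_le.1 hkd).2
    have : 2 * M * R ≤ 2 * M * n := by gcongr
    rw [hK]; linarith
  obtain ⟨q0, hq1, hq2⟩ := exists_nat_pow_near hδn (one_lt_two)
  set q := q0 + 1 with hq
  set m : ℕ := 2^q with hm
  have hm1 : 1 ≤ m := Nat.one_le_two_pow
  have hmR : (m:ℝ) = 2^q := by simp [hm]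
  have hm2 : (m:ℝ) ≤ 2 * (δ * n) := by rw [hmR, hq, pow_succ]; linarith
  have hm3 : δ * n ≤ m := by rw [hmR]; exact hq2.le
  set A := Finset.piAntidiag (Finset.range n) k with hA
  set B := A.filter (fun f => ∃ c ∈ Finset.range (n / 2^q + 2),
    (lam * R)^4 < M4 (Xf n k f) q (c*2^q)) with hB
  have hcount := bad_count A (fun f => Xf n k f) C hC0.le
    (fun a b hab => Xf_mom4 n k hn0 K hK0.le hkK a b hab) n q (lam * R)
  rw [← hB] at hcount
  have hBA : (B.card : ℝ) ≤ η / 2 * A.card := by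
    have e4 : (4:ℝ)^q = m * m := by rw [hmR, ← mul_pow]; norm_num
    have hdiv : ((n / 2^q : ℕ) : ℝ) * m ≤ n := by
      have : n / 2^q * m ≤ n := Nat.div_mul_le_self n (2^q)
      exact_mod_cast this
    have hmm : (((n / 2^q : ℕ) : ℝ) + 2) * (m * m) ≤ 10 * δ * n^2 := by
      have hm0 : (0:ℝ) ≤ m := by positivity
      calc (((n / 2^q : ℕ) : ℝ) + 2) * (m * m) = (((n / 2^q : ℕ) : ℝ) * m + 2 * m) * m := by ring
        _ ≤ (n + 2 * (2 * (δ * n))) * (2 * (δ * n)) := by gcongr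
        _ = (2 + 8 * δ) * δ * n^2 := by ring
        _ ≤ (2 + 8 * 1) * δ * n^2 := by gcongr
        _ = _ := by ring
    have hR4 : (lam * R)^4 = lam^4 * n^2 := by rw [← hRR]; ring
    rw [hR4, e4] at hcount
    have hAc : (0:ℝ) ≤ A.card := by positivity
    have h1 : (B.card : ℝ) * (lam^4 * n^2) ≤ (10000 * C * δ * A.card) * n^2 := by
      refine hcount.trans ?_
      have := mul_le_mul_of_nonneg_right hmm (by positivity : 0 ≤ 1000 * C * A.card)
      linarith
    have h2 : (B.card : ℝ) * lam^4 ≤ 10000 * C * δ * A.card := by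
      have hn2 : (0:ℝ) < n^2 := by positivity
      rw [← mul_assoc] at h1
      exact le_of_mul_le_mul_right h1 hn2
    have h3 : 10000 * C * δ ≤ η / 2 * lam^4 := by
      rw [le_div_iff₀ (by positivity)] at hδ3
      linarith
    have hl4 : 0 < lam^4 := by positivity
    refine le_of_mul_le_mul_right (h2.trans ?_) hl4
    have := mul_le_mul_of_nonneg_right h3 hAc
    linarith
  have hP := prob_bound P n k x y hk Q hQ
    (fun L => ε < modCont (fun t => σ⁻¹ * R⁻¹ * (interpZ L (t * n) - p * t * n)) 0 1 δ) B ?_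
    (Finset.filter_subset _ _)
  · refine lt_of_le_of_lt hP ?_
    have h2 : ((B.card : ℝ≥0∞)) / A.card ≤ ENNReal.ofReal (η/2) := by
      apply ENNReal.div_le_of_le_mul
      rw [← ENNReal.ofReal_natCast, ← ENNReal.ofReal_natCast, ← ENNReal.ofReal_mul (by positivity)]
      exact ENNReal.ofReal_le_ofReal hBA
    refine lt_of_le_of_lt h2 ?_
    rw [ENNReal.ofReal_lt_ofReal_iff hη]
    linarith
  · intro f hf hbad
    by_contra hfB
    refine absurd hbad (not_lt.2 ?_)
    have hgood : ∀ c ∈ Finset.range (n / 2^q + 2), M4 (Xf n k f) q (c*2^q) ≤ (lam * R)^4 := by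
      intro c hc
      by_contra h
      exact hfB (Finset.mem_filter.2 ⟨hf, c, hc, not_le.1 h⟩)
    refine modCont_bound n k m hn0 hm1 x f p δ (lam * R) (2 * M / R) (σ⁻¹ * R⁻¹) ε (by positivity) hm3 ?_
      (by positivity) hε.le (fun a b hab han hb =>
        block_good (Xf n k f) n q (lam * R) (by positivity) hgood a b hab han hb) ?_
    · have e : (k:ℝ) / n - p = (k - p * n) / n := by field_simp
      rw [e, abs_div, abs_of_pos hnR, div_le_div_iff₀ hnR hR0]
      have h5 := mul_le_mul_of_nonneg_right hkd hR0.le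
      rw [mul_assoc (2 * M) R R, hRR] at h5
      exact h5
    · have e : σ⁻¹ * R⁻¹ * (9 * (lam * R) + 2 * M / R * (δ * n)) = (9 * lam + 2 * M * δ) / σ := by
        rw [← hRR]; field_simp
      rw [e, div_le_iff₀ hσ]
      rw [le_div_iff₀ (by positivity)] at hδ2
      rw [hlam]
      linarith
end
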